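/- arXiv:1410.6697 — 4 statements merged into one kernel-verified Lean document; each statement's English description precedes it below -/
import Mathlib

section
/- Let Ψ : ℕ → (0,∞) satisfy Ψ(x) = o(1/x) as x → ∞ and be non-increasing. Then the set 𝒦₁(Ψ) \ ⋃_{0<c<1} 𝒦₁(cΨ) is non-empty; that is, there exists an irrational real number ζ such that |qζ − p| ≤ Ψ(q) has infinitely many solutions (q,p) ∈ ℕ × ℤ, but for every constant c < 1 the inequality |qζ − p| ≤ c·Ψ(q) has only finitely many solutions. -/
open Filter Set

/-- `K1 Ψ` is the set of irrational `ζ` such that `|q·ζ - p| ≤ Ψ q` holds for infinitely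
many pairs `(q, p) ∈ ℕ × ℤ` with `q ≥ 1`. -/
def K1 (Ψ : ℕ → ℝ) : Set ℝ :=
  {ζ : ℝ | Irrational ζ ∧
    {qp : ℕ × ℤ | 1 ≤ qp.1 ∧ |(qp.1 : ℝ) * ζ - (qp.2 : ℝ)| ≤ Ψ qp.1}.Infinite}


/-- consecutive convergents -/
noncomputable def jarSeq (A : ℕ → ℕ) : ℕ → (ℕ × ℤ) × (ℕ × ℤ)
  | 0 => ((1, 0), (1, 1))
  | n + 1 =>
    let s := jarSeq A n
    (s.2, (A s.2.1 * s.2.1 + s.1.1, (A s.2.1 : ℤ) * s.2.2 + s.1.2))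

lemma jar_exists_seq (A : ℕ → ℕ) : ∃ (q : ℕ → ℕ) (p : ℕ → ℤ), q 0 = 1 ∧ q 1 = 1 ∧ p 0 = 0 ∧
    p 1 = 1 ∧ (∀ n, q (n+2) = A (q (n+1)) * q (n+1) + q n) ∧
    (∀ n, p (n+2) = (A (q (n+1)) : ℤ) * p (n+1) + p n) :=
  ⟨fun n => (jarSeq A n).1.1, fun n => (jarSeq A n).1.2, rfl, rfl, rfl, rfl,
    fun _ => rfl, fun _ => rfl⟩

lemma jar_zeta (q : ℕ → ℕ) (p : ℕ → ℤ) (a : ℕ → ℕ) (hq : ∀ n, 0 < q n)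
    (h2 : ∀ n, q (n+2) = a n * q (n+1) + q n)
    (h3 : ∀ n, p (n+2) = (a n : ℤ) * p (n+1) + p n)
    (det : ∀ n, p (n+1) * q n - p n * q (n+1) = (-1)^n) :
    ∃ ζ : ℝ, ∀ n, 0 ≤ (-1:ℝ)^n * (q n * ζ - p n) := by
  have hq' : ∀ n, (0:ℝ) < q n := fun n => by exact_mod_cast hq n
  have detR : ∀ n, (p (n+1) : ℝ) * q n - p n * q (n+1) = (-1)^n := fun n => by
    exact_mod_cast det n
  have step : ∀ n, (p (n+2) : ℝ) * q n - p n * q (n+2) = a n * (-1)^n := fun n => by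
    rw [← detR, h2, h3]; push_cast; ring
  let f : ℕ → ℝ := fun k => p (2*k) / q (2*k)
  let g : ℕ → ℝ := fun k => p (2*k+1) / q (2*k+1)
  have hf : Monotone f := monotone_nat_of_le_succ fun k => by
    have h := step (2*k)
    rw [pow_mul] at h
    norm_num at h
    have : (0:ℝ) ≤ a (2*k) := by positivity
    change (p (2*k) : ℝ) / q (2*k) ≤ p (2*k+2) / q (2*k+2)
    rw [div_le_div_iff₀ (hq' _) (hq' _)]
    linarith
  have hg : Antitone g := antitone_nat_of_succ_le fun k => by
    have h := step (2*k+1)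
    rw [pow_succ, pow_mul] at h
    norm_num at h
    have : (0:ℝ) ≤ a (2*k+1) := by positivity
    change (p (2*k+1+2) : ℝ) / q (2*k+1+2) ≤ p (2*k+1) / q (2*k+1)
    rw [div_le_div_iff₀ (hq' _) (hq' _)]
    linarith
  have hfg : f ≤ g := fun k => by
    have h := detR (2*k)
    rw [pow_mul] at h
    norm_num at h
    change (p (2*k) : ℝ) / q (2*k) ≤ p (2*k+1) / q (2*k+1)
    rw [div_le_div_iff₀ (hq' _) (hq' _)]
    linarith
  have hmem := hf.ciSup_mem_iInter_Icc_of_antitone hg hfg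
  refine ⟨⨆ n, f n, fun n => ?_⟩
  generalize (⨆ n, f n) = ζ at hmem
  rw [mem_iInter] at hmem
  rcases Nat.even_or_odd' n with ⟨k, rfl | rfl⟩
  · have := (hmem k).1
    change (p (2*k) : ℝ) / q (2*k) ≤ ζ at this
    rw [div_le_iff₀ (hq' _)] at this
    rw [pow_mul]; norm_num; linarith
  · have := (hmem k).2
    change ζ ≤ (p (2*k+1) : ℝ) / q (2*k+1) at this
    rw [le_div_iff₀ (hq' _)] at this
    rw [pow_succ, pow_mul]; norm_num; linarith

/-- best approximation -/
lemma jar_best (ζ : ℝ) (q0 q1 : ℕ) (p0 p1 s : ℤ) (hs : s * s = 1)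
    (h0 : 0 < q0) (h1 : 0 < q1)
    (det : p1 * q0 - p0 * q1 = s)
    (e0 : 0 ≤ (s:ℝ) * (q0 * ζ - p0)) (e1 : 0 ≤ - (s:ℝ) * (q1 * ζ - p1))
    (q : ℕ) (p : ℤ) (hq : 1 ≤ q) (hlt : q < q1) :
    (s:ℝ) * (q0 * ζ - p0) ≤ |(q:ℝ) * ζ - p| := by
  obtain ⟨u, hu⟩ : ∃ u : ℤ, u = s * (p1 * q - p * q1) := ⟨_, rfl⟩
  obtain ⟨v, hv⟩ : ∃ v : ℤ, v = s * (p * q0 - p0 * q) := ⟨_, rfl⟩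
  have hqe : (q:ℤ) = u * q0 + v * q1 := by
    have : u * q0 + v * q1 = s * (p1 * q0 - p0 * q1) * q := by rw [hu, hv]; ring
    rw [this, det, hs, one_mul]
  have hpe : p = u * p0 + v * p1 := by
    have : u * p0 + v * p1 = s * (p1 * q0 - p0 * q1) * p := by rw [hu, hv]; ring
    rw [this, det, hs, one_mul]
  have hqR : (q:ℝ) = u * q0 + v * q1 := by exact_mod_cast hqe
  have hpR : (p:ℝ) = u * p0 + v * p1 := by exact_mod_cast hpe
  have hsR : (s:ℝ) * s = 1 := by exact_mod_cast hs
  have habs : |(s:ℝ)| = 1 := by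
    rcases mul_self_eq_one_iff.1 hsR with h | h <;> rw [h] <;> simp
  obtain ⟨E0, hE0⟩ : ∃ x : ℝ, x = (s:ℝ) * (q0 * ζ - p0) := ⟨_, rfl⟩
  obtain ⟨E1, hE1⟩ : ∃ x : ℝ, x = -(s:ℝ) * (q1 * ζ - p1) := ⟨_, rfl⟩
  have key : |(q:ℝ) * ζ - p| = |u * E0 - v * E1| := by
    rw [← one_mul |(q:ℝ) * ζ - p|, ← habs, ← abs_mul, hqR, hpR, hE0, hE1]
    congr 1; ring
  rw [← hE0] at e0 ⊢
  rw [← hE1] at e1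
  rw [key]
  have hq1 : (1:ℤ) ≤ q := by exact_mod_cast hq
  have hlt' : (q:ℤ) < q1 := by exact_mod_cast hlt
  have h0' : (0:ℤ) < q0 := by exact_mod_cast h0
  have h1' : (0:ℤ) < q1 := by exact_mod_cast h1
  have cases : (1 ≤ u ∧ v ≤ 0) ∨ (u ≤ -1 ∧ 0 ≤ v) := by
    rcases le_or_gt v 0 with hv0 | hv0
    · left
      refine ⟨?_, hv0⟩
      by_contra hcon
      have : u ≤ 0 := by omega
      nlinarith
    · right
      refine ⟨?_, hv0.le⟩
      by_contra hcon
      have : 0 ≤ u := by omega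
      nlinarith
  rcases cases with ⟨a, b⟩ | ⟨a, b⟩
  · have a' : (1:ℝ) ≤ u := by exact_mod_cast a
    have b' : (v:ℝ) ≤ 0 := by exact_mod_cast b
    refine le_trans ?_ (le_abs_self _)
    nlinarith
  · have a' : (u:ℝ) ≤ -1 := by exact_mod_cast a
    have b' : (0:ℝ) ≤ v := by exact_mod_cast b
    refine le_trans ?_ (neg_le_abs _)
    nlinarith

theorem jarnik_one_dimensional (Ψ : ℕ → ℝ) (hpos : ∀ q, 0 < Ψ q)
    (hsmall : Tendsto (fun q : ℕ => (q : ℝ) * Ψ q) atTop (nhds 0))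
    (hanti : Antitone Ψ) :
    (K1 Ψ \ ⋃ c ∈ Ioo (0 : ℝ) 1, K1 (fun x => c * Ψ x)).Nonempty := by
  obtain ⟨q, p, q0, q1, p0, p1, h2, h3⟩ :=
    jar_exists_seq (fun m => ⌈1 / ((m:ℝ) * Ψ m)⌉₊)
  have hq : ∀ n, 0 < q n ∧ 0 < q (n+1) := by
    intro n
    induction n with
    | zero => simp [q0, q1]
    | succ n ih => exact ⟨ih.2, by rw [h2]; omega⟩
  have hq0 : ∀ n, 0 < q n := fun n => (hq n).1
  have hqR : ∀ n, (0:ℝ) < q n := fun n => by exact_mod_cast hq0 n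
  have hlow : ∀ n, 1 / Ψ (q (n+1)) ≤ q (n+2) := by
    intro n
    have := Nat.le_ceil (1 / ((q (n+1):ℝ) * Ψ (q (n+1))))
    have h4 := mul_le_mul_of_nonneg_right this (hqR (n+1)).le
    have h5 : 1 / ((q (n+1):ℝ) * Ψ (q (n+1))) * q (n+1) = 1 / Ψ (q (n+1)) := by
      have := (hqR (n+1)).ne'
      have := (hpos (q (n+1))).ne'
      field_simp
    rw [h5] at h4
    rw [h2]; push_cast
    linarith [hqR n]
  have hmono1 : ∀ n, q n ≤ q (n+1) ∧ q (n+1) < q (n+2) := by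
    have hA : ∀ n, q (n+1) < q (n+2) := by
      intro n
      have : 0 < ⌈1 / ((q (n+1):ℝ) * Ψ (q (n+1)))⌉₊ := by
        rw [Nat.ceil_pos]
        have := hqR (n+1)
        have := hpos (q (n+1))
        positivity
      rw [h2]
      have := hq0 n
      have := hq0 (n+1)
      nlinarith
    intro n
    refine ⟨?_, hA n⟩
    cases n with
    | zero => simp [q0, q1]
    | succ n => exact (hA n).le
  have hhigh : ∀ n, (q (n+2) : ℝ) ≤ 1 / Ψ (q (n+1)) + 2 * q (n+1) := by
    intro n
    have hnn : 0 ≤ 1 / ((q (n+1):ℝ) * Ψ (q (n+1))) := by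
      have := hqR (n+1)
      have := hpos (q (n+1))
      positivity
    have := (Nat.ceil_lt_add_one hnn).le
    have h4 := mul_le_mul_of_nonneg_right this (hqR (n+1)).le
    have h5 : 1 / ((q (n+1):ℝ) * Ψ (q (n+1))) * q (n+1) = 1 / Ψ (q (n+1)) := by
      have := (hqR (n+1)).ne'
      have := (hpos (q (n+1))).ne'
      field_simp
    rw [add_mul, h5] at h4
    have h6 : (q n : ℝ) ≤ q (n+1) := by exact_mod_cast (hmono1 n).1
    rw [h2]; push_cast
    linarith
  have hmono : StrictMono (fun n => q (n+1)) := strictMono_nat_of_lt_succ fun n => (hmono1 n).2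
  have det : ∀ n, p (n+1) * q n - p n * q (n+1) = (-1)^n := by
    intro n
    induction n with
    | zero => simp [q0, q1, p0, p1]
    | succ n ih => rw [h2, h3, pow_succ, ← ih]; push_cast; ring
  obtain ⟨ζ, hζ⟩ := jar_zeta q p _ hq0 h2 h3 det
  obtain ⟨e, he⟩ : ∃ e : ℕ → ℝ, ∀ n, e n = (-1:ℝ)^n * (q n * ζ - p n) := ⟨_, fun _ => rfl⟩
  have he0 : ∀ n, 0 ≤ e n := fun n => by rw [he]; exact hζ n
  have habs : ∀ n, |(q n : ℝ) * ζ - p n| = e n := fun n => by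
    rw [← abs_of_nonneg (he0 n), he, abs_mul]; simp
  have hrec : ∀ n, q (n+1) * e n + q n * e (n+1) = 1 := by
    intro n
    have h := det n
    have hR : (p (n+1) : ℝ) * q n - p n * q (n+1) = (-1)^n := by exact_mod_cast h
    have hs : ((-1:ℝ)^n) * (-1)^n = 1 := by rw [← mul_pow]; simp
    rw [he, he, pow_succ]
    linear_combination hs + (-1:ℝ)^n * hR
  have hbest : ∀ n (m : ℕ) (k : ℤ), 1 ≤ m → m < q (n+1) → e n ≤ |(m:ℝ) * ζ - k| := by
    intro n m k hm hlt
    have := jar_best ζ (q n) (q (n+1)) (p n) (p (n+1)) ((-1)^n) (by rw [← mul_pow]; simp)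
      (hq0 n) (hq0 _) (det n) (by have := he0 n; rw [he] at this; exact_mod_cast this)
      (by have := he0 (n+1); rw [he, pow_succ] at this; push_cast; linarith) m k hm hlt
    rw [he]; exact_mod_cast this
  have hedec : ∀ n, e (n+2) ≤ e (n+1) := by
    intro n
    have hlt : q (n+1) < q (n+2) := (hmono1 n).2
    have h := hbest (n+1) (q (n+1)) (p (n+1)) (hq0 _) hlt
    have hE : e n = (⌈1 / ((q (n+1):ℝ) * Ψ (q (n+1)))⌉₊ : ℝ) * e (n+1) + e (n+2) := by
      rw [he, he, he, h2, h3, pow_succ, pow_succ]; push_cast; ring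
    have h7 : e (n+2) = |(q (n+2) : ℝ) * ζ - p (n+2)| := (habs _).symm
    have hE' : e (n+1) = (⌈1 / ((q (n+2):ℝ) * Ψ (q (n+2)))⌉₊ : ℝ) * e (n+2) + e (n+3) := by
      rw [he, he, he, h2 (n+1), h3 (n+1), pow_succ, pow_succ (-1:ℝ) (n+1)]; push_cast; ring
    have hc : (1:ℝ) ≤ ⌈1 / ((q (n+2):ℝ) * Ψ (q (n+2)))⌉₊ := by
      have : 0 < ⌈1 / ((q (n+2):ℝ) * Ψ (q (n+2)))⌉₊ := by
        rw [Nat.ceil_pos]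
        have := hqR (n+2)
        have := hpos (q (n+2))
        positivity
      exact_mod_cast this
    have := he0 (n+3)
    have := he0 (n+2)
    nlinarith
  have hup : ∀ n, e (n+1) ≤ Ψ (q (n+1)) := by
    intro n
    have h := hrec (n+1)
    have h8 := hlow n
    have hP := hpos (q (n+1))
    rw [div_le_iff₀ hP] at h8
    have h9 : (q (n+2) : ℝ) * e (n+1) ≤ q (n+2) * Ψ (q (n+1)) := by
      have := mul_nonneg (hqR (n+1)).le (he0 (n+2))
      have h' : (q (n+2) : ℝ) * e (n+1) + q (n+1) * e (n+2) = 1 := h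
      linarith
    exact le_of_mul_le_mul_left h9 (hqR (n+2))
  have hlo : ∀ n, 1 ≤ (1 / Ψ (q (n+1)) + 3 * q (n+1)) * e (n+1) := by
    intro n
    have h : (q (n+2) : ℝ) * e (n+1) + q (n+1) * e (n+2) = 1 := hrec (n+1)
    have h10 := mul_le_mul_of_nonneg_left (hedec n) (hqR (n+1)).le
    have h11 := mul_le_mul_of_nonneg_right (hhigh n) (he0 (n+1))
    linarith
  have hepos : ∀ n, 0 < e (n+1) := by
    intro n
    rcases (he0 (n+1)).lt_or_eq with h | h
    · exact h
    · have := hlo n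
      rw [← h] at this
      norm_num at this
  have hbig : ∀ n, n ≤ q (n+1) := fun n => hmono.id_le n
  have hirr : Irrational ζ := by
    rintro ⟨r, hr⟩
    have h := hbest (r.den + 1) r.den r.num r.pos
      (lt_of_lt_of_le (Nat.lt_succ_self _) (hbig (r.den+1)))
    have hz : (r.den:ℝ) * ζ - r.num = 0 := by
      rw [← hr]
      have : (r:ℚ) * r.den = r.num := Rat.mul_den_eq_num r
      have : (r:ℝ) * r.den = r.num := by exact_mod_cast this
      linarith
    rw [hz, abs_zero] at h
    exact absurd h (not_le.2 (hepos _))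
  refine ⟨ζ, ⟨hirr, ?_⟩, ?_⟩
  · refine Set.infinite_of_injective_forall_mem (f := fun n : ℕ => (q (n+1), p (n+1))) ?_ ?_
    · intro a b hab
      exact hmono.injective (Prod.mk.inj hab).1
    · intro n
      refine ⟨hq0 _, ?_⟩
      change |(q (n+1) : ℝ) * ζ - p (n+1)| ≤ Ψ (q (n+1))
      rw [habs]; exact hup n
  · simp only [mem_iUnion, not_exists]
    rintro c ⟨hc0, hc1⟩ ⟨-, hinf⟩
    apply hinf
    have hev : ∀ᶠ m : ℕ in atTop, (m:ℝ) * Ψ m < (1 - c) / 3 :=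
      hsmall.eventually (gt_mem_nhds (by linarith))
    obtain ⟨N, hN⟩ := eventually_atTop.1 hev
    have hfar : ∀ (m : ℕ) (k : ℤ), q (N+1) ≤ m → c * Ψ m < |(m:ℝ) * ζ - k| := by
      intro m k hm
      have hex : ∃ j, m < q (j+1) := ⟨m+1, lt_of_lt_of_le (Nat.lt_succ_self _) (hbig (m+1))⟩
      classical
      obtain ⟨n, hn⟩ : ∃ n, Nat.find hex = n + 1 := by
        apply Nat.exists_eq_succ_of_ne_zero
        intro h0
        have := Nat.find_spec hex
        rw [h0] at this
        have h12 : q (0+1) ≤ q (N+1) := hmono.monotone (Nat.zero_le N)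
        omega
      have hA : m < q (n+2) := by have := Nat.find_spec hex; rwa [hn] at this
      have hB : q (n+1) ≤ m := by
        have := Nat.find_min hex (m := n) (by omega)
        omega
      have hNn : N ≤ n := by
        by_contra hcon
        have h13 : q (n+1+1) ≤ q (N+1) := hmono.monotone (by omega : n+1 ≤ N)
        have : q (n+2) ≤ q (N+1) := h13
        omega
      have h14 := hN (q (n+1)) (le_trans hNn (hbig n))
      have h15 := hbest (n+1) m k (le_trans (hq0 _) hB) hA
      refine lt_of_lt_of_le ?_ h15
      have h16 := hanti hB
      have hP := hpos (q (n+1))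
      have h17 := mul_le_mul_of_nonneg_left h16 hc0.le
      refine lt_of_le_of_lt h17 ?_
      have h18 := mul_le_mul_of_nonneg_left (hlo n) hP.le
      have h19 : Ψ (q (n+1)) * ((1 / Ψ (q (n+1)) + 3 * q (n+1)) * e (n+1))
        = (1 + 3 * (q (n+1) * Ψ (q (n+1)))) * e (n+1) := by
        field_simp
      rw [h19] at h18
      have hE := hepos n
      have hX : 0 < (q (n+1):ℝ) * Ψ (q (n+1)) := mul_pos (hqR _) hP
      generalize (q (n+1):ℝ) * Ψ (q (n+1)) = X at *
      -- Ψ ≤ (1+3X) e, 3X < 1-c, c(1+3X) < c(2-c) < 1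
      have h20 : c * Ψ (q (n+1)) ≤ c * ((1 + 3 * X) * e (n+1)) :=
        mul_le_mul_of_nonneg_left (by linarith) hc0.le
      have h21 : c * (1 + 3 * X) < 1 := by nlinarith
      nlinarith
    obtain ⟨B, hB⟩ := exists_nat_ge ((q (N+1) : ℝ) * |ζ| + c * Ψ 0)
    refine Set.Finite.subset ((Set.finite_Iic (q (N+1))).prod (Set.finite_Icc (-(B:ℤ)) B)) ?_
    rintro ⟨m, k⟩ ⟨h1, hmk⟩
    dsimp only at h1 hmk
    have hm : m ≤ q (N+1) := by
      by_contra hcon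
      exact absurd hmk (not_le.2 (hfar m k (by omega)))
    refine ⟨hm, ?_⟩
    have hk : |(k:ℝ)| ≤ B := by
      have t1 : |(k:ℝ)| ≤ |(m:ℝ) * ζ| + |(m:ℝ) * ζ - k| := by
        have := abs_sub ((m:ℝ) * ζ) ((m:ℝ) * ζ - k)
        simpa using this
      have t2 : |(m:ℝ) * ζ| ≤ q (N+1) * |ζ| := by
        rw [abs_mul, Nat.abs_cast]
        exact mul_le_mul_of_nonneg_right (by exact_mod_cast hm) (abs_nonneg _)
      have t3 := mul_le_mul_of_nonneg_left (hanti (Nat.zero_le m)) hc0.le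
      linarith
    have hk' : |k| ≤ (B:ℤ) := by exact_mod_cast hk
    exact abs_le.1 hk'
end

section
/- Let Ψ : ℕ → (0,∞) satisfy Ψ(x) = o(1/x) as x → ∞ and Ψ(l·x) ≤ l·Ψ(x) for all positive integers l, x. Then for every non-empty open real interval I, the set (𝒦₁(Ψ) \ ⋃_{0<c<1} 𝒦₁(cΨ)) ∩ I is uncountable. -/
open Filter Set

lemma window (q : ℕ) (p : ℤ) (hq : 1 ≤ q) (hc : IsCoprime p (q : ℤ)) (L : ℝ) (hL : 0 ≤ L) :
    ∃ (q' : ℕ) (p' : ℤ), p' * q - p * q' = 1 ∧ L ≤ q' ∧ (q' : ℝ) ≤ L + q := by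
  obtain ⟨u, v, huv⟩ := hc
  have hq0 : (0 : ℝ) < q := by exact_mod_cast hq
  set m : ℤ := ⌈(L + u) / q⌉ with hm
  have h1 : (L + u) / q ≤ m := Int.le_ceil _
  have h2 : (m : ℝ) < (L + u) / q + 1 := Int.ceil_lt_add_one _
  rw [div_le_iff₀ hq0] at h1
  have h2' : (m : ℝ) * q < L + u + q := by
    have := mul_lt_mul_of_pos_right h2 hq0
    rw [add_mul, div_mul_cancel₀ _ hq0.ne'] at this
    linarith
  have hnn : (0 : ℤ) ≤ -u + q * m := by
    have : (0 : ℝ) ≤ -u + q * m := by nlinarith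
    exact_mod_cast this
  obtain ⟨q', hq'⟩ := Int.eq_ofNat_of_zero_le hnn
  have hq'r : (q' : ℝ) = -u + q * m := by
    have : ((q' : ℤ) : ℝ) = ((-u + q * m : ℤ) : ℝ) := by rw [hq']
    push_cast at this
    exact this
  refine ⟨q', v + p * m, ?_, ?_, ?_⟩
  · rw [← hq']; linear_combination huv
  · rw [hq'r]; linarith
  · rw [hq'r]; linarith

lemma step_exists (Ψ : ℕ → ℝ) (hpos : ∀ q, 0 < Ψ q) (N : ℕ)
    (hN : ∀ q : ℕ, N ≤ q → (q : ℝ) * Ψ q ≤ 1 / 8) (q : ℕ) (p : ℤ) (hq : 1 ≤ q) (hNq : N ≤ q)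
    (hc : IsCoprime p (q : ℤ)) (t : ℝ) :
    ∃ (q' : ℕ) (p' : ℤ), p' * q - p * q' = 1 ∧ 1 / Ψ q + q ≤ q' ∧ (q' : ℝ) ≤ 1 / Ψ q + 3 * q ∧
      ¬ ((p' : ℝ) < q' * t ∧ q' * t ≤ p' + Ψ q') := by
  have hq0 : (0 : ℝ) < q := by exact_mod_cast hq
  have hP : 0 < 1 / Ψ q := one_div_pos.mpr (hpos q)
  obtain ⟨q1, p1, hd, hl, hu⟩ := window q p hq hc (1 / Ψ q + q) (by positivity)
  by_cases ht : (p1 : ℝ) < q1 * t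
  · refine ⟨q1 + q, p1 + p, ?_, ?_, ?_, ?_⟩
    · push_cast; linear_combination hd
    · push_cast; linarith
    · push_cast; linarith
    · rintro ⟨-, h⟩
      have hq1 : (0 : ℝ) < q1 := by linarith
      have hge : N ≤ q1 + q := by omega
      have h8 := hN _ hge
      have hps := hpos (q1 + q)
      push_cast at h h8
      have hdr : (p1 : ℝ) * q - p * q1 = 1 := by exact_mod_cast hd
      -- multiply
      have e1 := mul_le_mul_of_nonneg_left h hq1.le
      have e2 := mul_lt_mul_of_pos_left ht (add_pos hq1 hq0)
      have e3 : (q1 : ℝ) * Ψ (q1 + q) ≤ 1 / 8 := by nlinarith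
      nlinarith
  · exact ⟨q1, p1, hd, hl, by linarith, fun h => ht h.1⟩

lemma init_exists (Ψ : ℕ → ℝ) (hpos : ∀ q, 0 < Ψ q) (N : ℕ)
    (hN : ∀ q : ℕ, N ≤ q → (q : ℝ) * Ψ q ≤ 1 / 8) (a b : ℝ) (hab : a < b) :
    ∃ (q : ℕ) (p : ℤ), 1 ≤ q ∧ N ≤ q ∧ IsCoprime p (q : ℤ) ∧ a * q < p ∧ p + Ψ q < b * q := by
  obtain ⟨r, har, hrb⟩ := exists_rat_btwn hab
  obtain ⟨n, hn⟩ := exists_nat_gt (2 / (b - r))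
  have hv : (1 : ℕ) ≤ r.den := r.den_pos
  have hbr : 0 < b - (r : ℝ) := by linarith
  have hv0 : (1 : ℝ) ≤ r.den := by exact_mod_cast hv
  set M : ℕ := n + N + 1 with hM
  have hM1 : 1 ≤ M := by omega
  have hM0 : (1 : ℝ) ≤ M := by exact_mod_cast hM1
  have hQ1 : M ≤ r.den ^ 2 * M := Nat.le_mul_of_pos_left _ (by positivity)
  have hQr : (M : ℝ) ≤ (r.den : ℝ) ^ 2 * M := by exact_mod_cast hQ1
  have hru : (r.num : ℝ) = r * r.den := by
    exact_mod_cast (Rat.mul_den_eq_num r).symm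
  have hnum : (r.num : ℝ) * r.den * M + 1 = r * ((r.den : ℝ) ^ 2 * M) + 1 := by
    rw [hru]; ring
  refine ⟨r.den ^ 2 * M, r.num * r.den * M + 1, by omega, by omega, ?_, ?_, ?_⟩
  · refine ⟨1 - r.num * r.den * M, r.num ^ 2 * M, ?_⟩
    push_cast; ring
  · push_cast
    rw [hnum]
    nlinarith
  · have h8 := hN (r.den ^ 2 * M) (by omega)
    have hps := hpos (r.den ^ 2 * M)
    push_cast at h8 ⊢
    rw [hnum]
    have h1 : Ψ (r.den ^ 2 * M) ≤ 1 / 8 := by nlinarith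
    have h2 : 2 < (b - r) * M := by
      rw [div_lt_iff₀ hbr] at hn
      have : (n : ℝ) ≤ M := by exact_mod_cast (by omega : n ≤ M)
      nlinarith
    nlinarith

lemma nest (Ψ : ℕ → ℝ) (hpos : ∀ q, 0 < Ψ q) (q q' : ℕ) (p p' : ℤ) (hq : 1 ≤ q)
    (h8 : (q' : ℝ) * Ψ q' ≤ 1 / 8) (hd : p' * q - p * q' = 1) (hl : 1 / Ψ q + q ≤ q') :
    (p : ℝ) / q < p' / q' ∧ (p' : ℝ) / q' + Ψ q' / q' ≤ p / q + Ψ q / q := by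
  have hq0 : (0 : ℝ) < q := by exact_mod_cast hq
  have hP := hpos q
  have hP' : 0 < 1 / Ψ q := one_div_pos.mpr (hpos q)
  have hq' : (0 : ℝ) < q' := by linarith
  have hdr : (p' : ℝ) * q - p * q' = 1 := by exact_mod_cast hd
  have hl' : 1 + Ψ q * q ≤ Ψ q * q' := by
    have := mul_le_mul_of_nonneg_left hl hP.le
    rw [mul_add, mul_one_div_cancel hP.ne'] at this
    exact this
  constructor
  · rw [div_lt_div_iff₀ hq0 hq']; linarith
  · rw [← add_div, ← add_div, div_le_div_iff₀ hq' hq0]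
    have : Ψ q' ≤ Ψ q := by
      have : (q' : ℝ) * Ψ q' ≤ q' * Ψ q := by nlinarith
      exact le_of_mul_le_mul_left this hq'
    nlinarith

theorem jarnik_one_dimensional_dense (Ψ : ℕ → ℝ) (hpos : ∀ q, 0 < Ψ q)
    (hsmall : Tendsto (fun q : ℕ => (q : ℝ) * Ψ q) atTop (nhds 0))
    (hB2 : ∀ l x : ℕ, 1 ≤ l → 1 ≤ x → Ψ (l * x) ≤ (l : ℝ) * Ψ x)
    (a b : ℝ) (hab : a < b) :
    ¬ ((K1 Ψ \ ⋃ c ∈ Ioo (0 : ℝ) 1, K1 (fun x => c * Ψ x)) ∩ Ioo a b).Countable := by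
  intro hcount
  obtain ⟨f, hf⟩ := Set.countable_iff_exists_subset_range.mp hcount
  have hev : ∀ ε : ℝ, 0 < ε → ∃ N : ℕ, ∀ q : ℕ, N ≤ q → (q : ℝ) * Ψ q ≤ ε := by
    intro ε hε
    obtain ⟨N, hN⟩ := eventually_atTop.mp (hsmall.eventually (ge_mem_nhds hε))
    exact ⟨N, hN⟩
  obtain ⟨N, hN⟩ := hev (1 / 8) (by norm_num)
  obtain ⟨q0, p0, hq01, hq0N, hc0, ha0, hb0⟩ := init_exists Ψ hpos N hN a b hab
  let State := {x : ℕ × ℤ // 1 ≤ x.1 ∧ N ≤ x.1 ∧ IsCoprime x.2 (x.1 : ℤ)}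
  have hstep : ∀ (k : ℕ) (s : State), ∃ s' : State,
      s'.1.2 * s.1.1 - s.1.2 * s'.1.1 = 1 ∧ 1 / Ψ s.1.1 + s.1.1 ≤ s'.1.1 ∧
      (s'.1.1 : ℝ) ≤ 1 / Ψ s.1.1 + 3 * s.1.1 ∧
      ¬ ((s'.1.2 : ℝ) < s'.1.1 * f k ∧ s'.1.1 * f k ≤ s'.1.2 + Ψ s'.1.1) := by
    rintro k ⟨⟨q, p⟩, hq, hNq, hc⟩
    obtain ⟨q', p', h1, h2, h3, h4⟩ := step_exists Ψ hpos N hN q p hq hNq hc (f k)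
    have hqq : q ≤ q' := by
      have : (q : ℝ) ≤ q' := by
        have := one_div_pos.mpr (hpos q)
        linarith
      exact_mod_cast this
    refine ⟨⟨⟨q', p'⟩, ?_, ?_, ?_⟩, h1, h2, h3, h4⟩
    · dsimp only at *; omega
    · dsimp only at *; omega
    · exact ⟨q, -p, by linear_combination h1⟩
  choose g hg using hstep
  let s : ℕ → State := fun n => Nat.rec ⟨⟨q0, p0⟩, hq01, hq0N, hc0⟩ (fun k x => g k x) n
  obtain ⟨q, hq⟩ : ∃ q : ℕ → ℕ, ∀ k, q k = (s k).1.1 := ⟨_, fun _ => rfl⟩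
  obtain ⟨p, hp⟩ : ∃ p : ℕ → ℤ, ∀ k, p k = (s k).1.2 := ⟨_, fun _ => rfl⟩
  have hq1 : ∀ k, 1 ≤ q k := fun k => by rw [hq]; exact (s k).2.1
  have hqN : ∀ k, N ≤ q k := fun k => by rw [hq]; exact (s k).2.2.1
  have hcop : ∀ k, IsCoprime (p k) (q k : ℤ) := fun k => by rw [hq, hp]; exact (s k).2.2.2
  have hS : ∀ k, p (k+1) * q k - p k * q (k+1) = 1 ∧ 1 / Ψ (q k) + q k ≤ q (k+1) ∧
      (q (k+1) : ℝ) ≤ 1 / Ψ (q k) + 3 * q k ∧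
      ¬ ((p (k+1) : ℝ) < q (k+1) * f k ∧ q (k+1) * f k ≤ p (k+1) + Ψ (q (k+1))) := by
    intro k
    simp only [hq, hp]
    exact hg k (s k)
  have hq00 : q 0 = q0 := hq 0
  have hp00 : p 0 = p0 := hp 0
  clear_value s
  clear hg hq hp
  have hqpos : ∀ k, (0 : ℝ) < q k := fun k => by exact_mod_cast hq1 k
  have h8 : ∀ k, (q k : ℝ) * Ψ (q k) ≤ 1 / 8 := fun k => hN _ (hqN k)
  have hmono : StrictMono q := by
    refine strictMono_nat_of_lt_succ fun k => ?_
    have := (hS k).2.1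
    have h2 := one_div_pos.mpr (hpos (q k))
    have : (q k : ℝ) < q (k+1) := by linarith
    exact_mod_cast this
  have hnest := fun k => nest Ψ hpos (q k) (q (k+1)) (p k) (p (k+1)) (hq1 k) (h8 (k+1))
    (hS k).1 (hS k).2.1
  obtain ⟨ζ, hζ⟩ : ∃ ζ : ℝ, ∀ k, ζ ∈ Icc ((p k : ℝ) / q k) ((p k : ℝ) / q k + Ψ (q k) / q k) := by
    have := ciSup_mem_iInter_Icc_of_antitone_Icc (f := fun k => (p k : ℝ) / q k)
      (g := fun k => (p k : ℝ) / q k + Ψ (q k) / q k)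
      (antitone_nat_of_succ_le fun k => Icc_subset_Icc (hnest k).1.le (hnest k).2)
      (fun k => by have := div_pos (hpos (q k)) (hqpos k); linarith)
    exact ⟨_, fun k => mem_iInter.mp this k⟩
  have hlow : ∀ k, (p k : ℝ) < q k * ζ := by
    intro k
    have := (hnest k).1.trans_le (hζ (k+1)).1
    rw [div_lt_iff₀ (hqpos k)] at this
    linarith
  have hup : ∀ k, q k * ζ ≤ p k + Ψ (q k) := by
    intro k
    have := (hζ k).2
    rw [← add_div, le_div_iff₀ (hqpos k)] at this
    linarith
  have habs : ∀ k, |(q k : ℝ) * ζ - p k| = q k * ζ - p k := fun k =>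
    abs_of_pos (by linarith [hlow k])
  -- two-sided bounds with respect to the next denominator
  have hlow' : ∀ k, 1 ≤ q (k+1) * (q k * ζ - p k) := by
    intro k
    have hdr : (p (k+1) : ℝ) * q k - p k * q (k+1) = 1 := by exact_mod_cast (hS k).1
    nlinarith [hlow (k+1), hqpos k]
  have hup' : ∀ k, q (k+1) * (q k * ζ - p k) ≤ 9 / 8 := by
    intro k
    have hdr : (p (k+1) : ℝ) * q k - p k * q (k+1) = 1 := by exact_mod_cast (hS k).1
    have h1 := mul_le_mul_of_nonneg_left (hup (k+1)) (hqpos k).le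
    have h2 : (q k : ℝ) ≤ q (k+1) := by exact_mod_cast (hmono (Nat.lt_succ_self k)).le
    have h3 := mul_le_mul_of_nonneg_right h2 (hpos (q (k+1))).le
    nlinarith [h8 (k+1)]
  have hirr : Irrational ζ := by
    rintro ⟨r, hr⟩
    obtain ⟨M, hM⟩ := hev (1 / 2) (by norm_num)
    have hrd : (0 : ℝ) < r.den := by exact_mod_cast r.den_pos
    have hru : (r.num : ℝ) = ζ * r.den := by
      rw [← hr]; exact_mod_cast (Rat.mul_den_eq_num r).symm
    set k := r.den
    have hk : (k : ℝ) ≤ q k := by exact_mod_cast hmono.le_apply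
    have hint : (1 : ℝ) ≤ (q k : ℝ) * r.num - p k * r.den := by
      have h0 : (0 : ℝ) < (q k : ℝ) * r.num - p k * r.den := by
        rw [hru]; nlinarith [hlow k]
      have : (0 : ℤ) < (q k : ℤ) * r.num - p k * r.den := by exact_mod_cast h0
      exact_mod_cast this
    rw [hru] at hint
    have := mul_le_mul_of_nonneg_left (hup k) hrd.le
    have := mul_le_mul_of_nonneg_right hk (hpos (q k)).le
    have := h8 k
    nlinarith
  have hmem : ζ ∈ (K1 Ψ \ ⋃ c ∈ Ioo (0 : ℝ) 1, K1 (fun x => c * Ψ x)) ∩ Ioo a b := by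
    refine ⟨⟨⟨hirr, ?_⟩, ?_⟩, ?_, ?_⟩
    · refine Set.Infinite.mono ?_ (Set.infinite_range_of_injective
        (f := fun k => ((q k, p k) : ℕ × ℤ)) ?_)
      · rintro _ ⟨k, rfl⟩
        refine ⟨hq1 k, ?_⟩
        dsimp only
        rw [habs]; linarith [hup k]
      · intro i j hij
        exact hmono.injective (congrArg Prod.fst hij)
    · simp only [mem_iUnion, not_exists]
      rintro c ⟨hc0, hc1⟩ ⟨-, hinf⟩
      apply hinf
      obtain ⟨M, hM⟩ := hev ((1 - c) / 6) (by linarith)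
      have key : ∀ (Q : ℕ) (P : ℤ), q M ≤ Q → ¬ |(Q : ℝ) * ζ - P| ≤ c * Ψ Q := by
        intro Q P hQ hbad
        have hQpos : 0 < Q := lt_of_lt_of_le (hq1 M) hQ
        have hQr : (0 : ℝ) < Q := by exact_mod_cast hQpos
        have hQ8 : (Q : ℝ) * Ψ Q ≤ 1 / 8 := hN Q ((hqN M).trans hQ)
        have hbadΨ : |(Q : ℝ) * ζ - P| < Ψ Q :=
          lt_of_le_of_lt hbad (by nlinarith [hpos Q])
        have hsmallQ : Q * |(Q : ℝ) * ζ - P| < 1 / 8 := by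
          nlinarith
        obtain ⟨k, hMk, hk1, hk2⟩ : ∃ k, M ≤ k ∧ q k ≤ Q ∧ Q < q (k+1) := by
          have hex : ∃ n, Q < q n := ⟨Q + 1, lt_of_lt_of_le (Nat.lt_succ_self Q) hmono.le_apply⟩
          classical
          have hfs := Nat.find_spec hex
          have hfm := fun m => Nat.find_min hex (m := m)
          set n := Nat.find hex
          have hMn : M < n := by
            by_contra hh
            have := hmono.monotone (not_lt.mp hh)
            omega
          refine ⟨n - 1, by omega, not_lt.mp (hfm (n - 1) (by omega)), ?_⟩
          rwa [Nat.sub_add_cancel (by omega)]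
        -- general triangle inequality
        have tri : ∀ j, P * q j ≠ Q * p j →
            1 ≤ Q * (q j * ζ - p j) + q j * |(Q : ℝ) * ζ - P| := by
          intro j hne
          have h1 : (1 : ℤ) ≤ |P * q j - Q * p j| := Int.one_le_abs (sub_ne_zero.mpr hne)
          have h2 : (1 : ℝ) ≤ |(P : ℝ) * q j - Q * p j| := by exact_mod_cast h1
          have h3 : (P : ℝ) * q j - Q * p j
              = Q * (q j * ζ - p j) - q j * ((Q : ℝ) * ζ - P) := by ring
          have h4 := abs_sub ((Q : ℝ) * (q j * ζ - p j)) (q j * ((Q : ℝ) * ζ - P))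
          rw [← h3, abs_mul, abs_mul, habs, abs_of_pos hQr, abs_of_pos (hqpos j)] at h4
          linarith
        have hk1r : (q k : ℝ) ≤ Q := by exact_mod_cast hk1
        have hk2r : (Q : ℝ) < q (k+1) := by exact_mod_cast hk2
        have heq : P * q k = Q * p k := by
          by_contra hne
          have t1 := tri k hne
          have ab := abs_nonneg ((Q : ℝ) * ζ - P)
          have dpos := sub_pos.mpr (hlow k)
          rcases le_or_gt (2 * (Q : ℝ)) (q (k+1)) with hh | hh
          · have e1 := mul_le_mul_of_nonneg_right hh dpos.le
            have e2 := mul_le_mul_of_nonneg_right hk1r ab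
            have := hup' k
            linarith
          · have hne2 : P * q (k+1) ≠ Q * p (k+1) := by
              intro he
              have hdv : (q (k+1) : ℤ) ∣ Q :=
                (hcop (k+1)).symm.dvd_of_dvd_mul_right ⟨P, by linear_combination -he⟩
              have := Nat.le_of_dvd hQpos (by exact_mod_cast hdv)
              omega
            have t2 := tri (k+1) hne2
            have e1 : (Q : ℝ) * (q (k+1) * ζ - p (k+1)) ≤ 1 / 8 := by
              have := sub_pos.mpr (hlow (k+1))
              have := hup (k+1)
              have := h8 (k+1)
              nlinarith
            have e2 := mul_le_mul_of_nonneg_right hh.le ab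
            linarith
        have hdv : (q k : ℤ) ∣ Q :=
          (hcop k).symm.dvd_of_dvd_mul_right ⟨P, by linear_combination -heq⟩
        obtain ⟨l, hl⟩ : q k ∣ Q := by exact_mod_cast hdv
        have hlpos : 1 ≤ l := by
          rcases Nat.eq_zero_or_pos l with h | h
          · subst h; simp at hl; omega
          · exact h
        have hlr : (0 : ℝ) < l := by exact_mod_cast hlpos
        have hPl : P = l * p k := by
          have h0 : (q k : ℤ) ≠ 0 := by have := hq1 k; omega
          have : P * q k = (l * p k) * q k := by
            rw [heq, hl]; push_cast; ring
          exact mul_right_cancel₀ h0 this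
        have hB := hB2 l (q k) hlpos (hq1 k)
        have hQl : Q = l * q k := by rw [hl, mul_comm]
        have hfin : q k * ζ - p k ≤ c * Ψ (q k) := by
          have e : (Q : ℝ) * ζ - P = l * (q k * ζ - p k) := by
            rw [hQl, hPl]; push_cast; ring
          rw [e, abs_mul, habs, abs_of_pos hlr, hQl] at hbad
          have : l * (q k * ζ - p k) ≤ l * (c * Ψ (q k)) := by
            have := mul_le_mul_of_nonneg_left hB hc0.le
            linarith
          exact le_of_mul_le_mul_left this hlr
        have hMq : M ≤ q k := hMk.trans hmono.le_apply
        have hs := hM _ hMq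
        have hu := (hS k).2.2.1
        have hu' : Ψ (q k) * q (k+1) ≤ 1 + 3 * (q k * Ψ (q k)) := by
          have := mul_le_mul_of_nonneg_left hu (hpos (q k)).le
          rw [mul_add, mul_one_div_cancel (hpos (q k)).ne'] at this
          linarith
        have h1 := hlow' k
        have h2 := mul_le_mul_of_nonneg_left hfin (hqpos (k+1)).le
        nlinarith
      refine Set.Finite.subset (s := ⋃ Q ∈ Finset.range (q M),
        ({Q} : Set ℕ) ×ˢ (Icc ⌈(Q : ℝ) * ζ - c * Ψ Q⌉ ⌊(Q : ℝ) * ζ + c * Ψ Q⌋)) ?_ ?_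
      · exact Set.Finite.biUnion (Finset.finite_toSet _)
          fun Q _ => (Set.finite_singleton Q).prod (Set.finite_Icc _ _)
      · rintro ⟨Q, P⟩ ⟨-, hQP⟩
        dsimp only at hQP
        have hlt : Q < q M := by
          by_contra hh
          exact key Q P (not_lt.mp hh) hQP
        rw [abs_le] at hQP
        simp only [mem_iUnion]
        refine ⟨Q, Finset.mem_range.mpr hlt, rfl, ?_, ?_⟩
        · exact Int.ceil_le.mpr (by dsimp only; linarith [hQP.2])
        · exact Int.le_floor.mpr (by dsimp only; linarith [hQP.1])
    · have := hlow 0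
      rw [hq00, hp00] at this
      have h0 : (0 : ℝ) < q0 := by exact_mod_cast hq01
      have : a * q0 < ζ * q0 := by linarith
      exact lt_of_mul_lt_mul_right this h0.le
    · have := hup 0
      rw [hq00, hp00] at this
      have h0 : (0 : ℝ) < q0 := by exact_mod_cast hq01
      have : ζ * q0 < b * q0 := by linarith
      exact lt_of_mul_lt_mul_right this h0.le
  obtain ⟨k, hk⟩ := hf hmem
  apply (hS k).2.2.2
  rw [hk]
  exact ⟨hlow (k+1), hup (k+1)⟩
end

section
/- Let Ψ : ℕ → (0,∞) satisfy Ψ(x) = o(1/x) as x → ∞. Then for every non-empty open real interval I, the set (𝒦₁*(Ψ) \ ⋃_{0<c<1} 𝒦₁*(cΨ)) ∩ I is uncountable. -/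
open Filter Set

/-- `K1star Ψ` is the set of irrational `ζ` such that `|q·ζ - p| ≤ Ψ q` holds for
infinitely many pairs `(q, p) ∈ ℕ × ℤ` with `q ≥ 1` and `gcd(p, q) = 1`. -/
def K1star (Ψ : ℕ → ℝ) : Set ℝ :=
  {ζ : ℝ | Irrational ζ ∧
    {qp : ℕ × ℤ | 1 ≤ qp.1 ∧ Int.gcd qp.2 (qp.1 : ℤ) = 1 ∧
      |(qp.1 : ℝ) * ζ - (qp.2 : ℝ)| ≤ Ψ qp.1}.Infinite}


/-- Abstract properties of a sequence of increasing convergents `P n / Q n` with limit `ζ`. -/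
structure GoodSeq (P Q : ℕ → ℤ) (ζ : ℝ) : Prop where
  qpos : ∀ n, 0 < Q n
  det : ∀ n, P (n+1) * Q n - P n * Q (n+1) = 1
  lo : ∀ n, (P n : ℝ) < Q n * ζ
  q01 : Q 0 < Q 1
  q3 : ∀ n, 3 * Q (n+1) ≤ Q (n+2)
  hi : ∀ n, ((Q (n+1) : ℝ) - Q n) * ζ < P (n+1) - P n

namespace GoodSeq

variable {P Q : ℕ → ℤ} {ζ : ℝ}

theorem mono (h : GoodSeq P Q ζ) : StrictMono Q := by
  apply strictMono_nat_of_lt_succ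
  intro n
  rcases n with _ | n
  · exact h.q01
  · have := h.q3 n
    have := h.qpos (n+1)
    show Q (n+1) < Q (n+2)
    omega

theorem detR (h : GoodSeq P Q ζ) (n : ℕ) :
    (P (n+1) : ℝ) * Q n - P n * Q (n+1) = 1 := by exact_mod_cast h.det n

theorem qposR (h : GoodSeq P Q ζ) (n : ℕ) : (0:ℝ) < Q n := by exact_mod_cast h.qpos n

theorem monoR (h : GoodSeq P Q ζ) (n : ℕ) : (Q n : ℝ) < Q (n+1) := by
  exact_mod_cast h.mono (Nat.lt_succ_self n)

theorem err_lo (h : GoodSeq P Q ζ) (n : ℕ) : 1 < (Q (n+1) : ℝ) * (Q n * ζ - P n) := by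
  have h1 := h.detR n
  have h2 := h.lo (n+1)
  have h3 := h.qposR n
  nlinarith

theorem err_hi (h : GoodSeq P Q ζ) (n : ℕ) :
    ((Q (n+1) : ℝ) - Q n) * (Q n * ζ - P n) < 1 := by
  have h1 := h.detR n
  have h2 := h.hi n
  have h3 := h.qposR n
  nlinarith

theorem le_q (h : GoodSeq P Q ζ) (n : ℕ) : (n : ℤ) < Q n := by
  induction n with
  | zero => exact_mod_cast h.qpos 0
  | succ n ih =>
    have := h.mono (Nat.lt_succ_self n)
    simp only [Nat.succ_eq_add_one] at this
    push_cast
    omega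

theorem coprime (h : GoodSeq P Q ζ) (n : ℕ) : IsCoprime (P n) (Q n) :=
  ⟨-Q (n+1), P (n+1), by linarith [h.det n]⟩

theorem irrational (h : GoodSeq P Q ζ) : Irrational ζ := by
  rintro ⟨r, hr⟩
  set n : ℕ := r.den + 1 with hn
  have hd : (0:ℝ) < r.den := by exact_mod_cast r.den_pos
  have hz : ζ * r.den = r.num := by
    rw [← hr]; exact_mod_cast Rat.mul_den_eq_num r
  have hlo := h.lo n
  have hhi := h.err_hi n
  have hint : (0:ℝ) < ((Q n * r.num - P n * r.den : ℤ) : ℝ) := by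
    push_cast
    rw [← hz]
    nlinarith
  have hint1 : (1:ℝ) ≤ ((Q n * r.num - P n * r.den : ℤ) : ℝ) := by
    have : (0:ℤ) < Q n * r.num - P n * r.den := by exact_mod_cast hint
    exact_mod_cast this
  have hq : (r.den : ℝ) ≤ (Q (n+1) : ℝ) - Q n := by
    have h1 := h.q3 r.den
    have h2 := h.le_q n
    have h3 : (r.den : ℤ) ≤ Q (n+1) - Q n := by
      rw [← hn] at h1
      have : r.den + 2 = n + 1 := by omega
      rw [this] at h1
      omega
    exact_mod_cast h3
  push_cast at hint1
  rw [← hz] at hint1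
  have h5 : 1 ≤ (r.den : ℝ) * (Q n * ζ - P n) := by linarith
  have h6 : (r.den : ℝ) * (Q n * ζ - P n) ≤ ((Q (n+1) : ℝ) - Q n) * (Q n * ζ - P n) :=
    mul_le_mul_of_nonneg_right hq (by linarith)
  linarith

/-- Reduced fractions that are not convergents approximate badly. -/
theorem bad (h : GoodSeq P Q ζ) (q : ℕ) (p : ℤ) (hq : Q 1 ≤ q)
    (hc : IsCoprime p (q : ℤ)) :
    (∃ n, Q (n+1) = q ∧ P (n+1) = p) ∨ 1 / 8 ≤ (q : ℝ) * |(q : ℝ) * ζ - p| := by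
  have hex : ∃ m, (q : ℤ) < Q m := ⟨q, h.le_q q⟩
  obtain ⟨n, hn1, hn2⟩ : ∃ n, Q (n+1) ≤ q ∧ (q : ℤ) < Q (n+2) := by
    classical
    have hs := Nat.find_spec hex
    have hm := fun k => Nat.find_min (m := k) hex
    set m := Nat.find hex
    have h2 : 2 ≤ m := by
      by_contra hlt
      have : Q m ≤ Q 1 := h.mono.monotone (by omega)
      omega
    refine ⟨m - 2, ?_, ?_⟩
    · have := hm (m - 2 + 1) (by omega)
      omega
    · rwa [Nat.sub_add_cancel h2]
  have hqp : (0:ℤ) < q := lt_of_lt_of_le (h.qpos _) hn1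
  have hqR : (0:ℝ) < q := by exact_mod_cast hqp
  have hn1R : (Q (n+1) : ℝ) ≤ q := by exact_mod_cast hn1
  have hn2R : (q:ℝ) < Q (n+2) := by exact_mod_cast hn2
  have h3R : 3 * (Q (n+1) : ℝ) ≤ Q (n+2) := by exact_mod_cast h.q3 n
  have h4R : 3 * (Q (n+2) : ℝ) ≤ Q (n+3) := by exact_mod_cast h.q3 (n+1)
  -- general estimate
  have key : ∀ m, p * Q m ≠ P m * q → 2 * (q:ℝ) ≤ Q (m+1) - Q m →
      1 ≤ 2 * ((Q m : ℝ) * |(q : ℝ) * ζ - p|) := by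
    intro m hne hle
    have h1 : (1:ℝ) ≤ |((p * Q m - P m * q : ℤ) : ℝ)| := by
      have : 1 ≤ |p * Q m - P m * q| := Int.one_le_abs (sub_ne_zero.mpr hne)
      exact_mod_cast this
    have hm := h.qposR m
    have h2 : (Q m : ℝ) * |(q : ℝ) * ζ - p| = |(Q m : ℝ) * ((q : ℝ) * ζ - p)| := by
      rw [abs_mul, abs_of_pos hm]
    have h3 : (Q m : ℝ) * ((q : ℝ) * ζ - p) =
      q * (Q m * ζ - P m) - ((p * Q m - P m * q : ℤ) : ℝ) := by push_cast; ring
    have h4 := h.err_hi m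
    have h5 := h.lo m
    have h6 : 2 * (q:ℝ) * (Q m * ζ - P m) ≤ ((Q (m+1) : ℝ) - Q m) * (Q m * ζ - P m) :=
      mul_le_mul_of_nonneg_right hle (by linarith)
    have h7 : |(q:ℝ) * (Q m * ζ - P m)| ≤ 1 / 2 := by
      rw [abs_of_nonneg (mul_nonneg hqR.le (by linarith))]
      linarith
    rw [h2, h3]
    have h8 := abs_sub_abs_le_abs_sub ((p * Q m - P m * q : ℤ) : ℝ) (q * (Q m * ζ - P m))
    rw [abs_sub_comm] at h8
    linarith
  have habs := abs_nonneg ((q : ℝ) * ζ - p)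
  by_cases heq : p * Q (n+1) = P (n+1) * q
  · left
    have hdvd : (q:ℤ) ∣ Q (n+1) := hc.symm.dvd_of_dvd_mul_left ⟨P (n+1), by linarith⟩
    have hle := Int.le_of_dvd (h.qpos _) hdvd
    have hE : Q (n+1) = q := le_antisymm hn1 hle
    refine ⟨n, hE, ?_⟩
    rw [hE] at heq
    exact (mul_right_cancel₀ hqp.ne' heq).symm
  · right
    by_cases hcase : 4 * (q:ℝ) ≤ Q (n+2)
    · by_cases hh : 2 * (q:ℝ) ≤ Q (n+2) - Q (n+1)
      · have := key (n+1) heq hh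
        nlinarith
      · exfalso; linarith
    · have hne : p * Q (n+2) ≠ P (n+2) * q := by
        intro hE
        have hdvd : Q (n+2) ∣ (q:ℤ) :=
          (h.coprime (n+2)).symm.dvd_of_dvd_mul_left ⟨p, by linarith⟩
        have := Int.le_of_dvd hqp hdvd
        omega
      have hk := key (n+2) hne (by
        show 2 * (q:ℝ) ≤ Q (n+3) - Q (n+2)
        linarith)
      have : (Q (n+2) : ℝ) * |(q : ℝ) * ζ - p| ≤ 4 * q * |(q : ℝ) * ζ - p| :=
        mul_le_mul_of_nonneg_right (by linarith) habs
      linarith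

theorem mem (h : GoodSeq P Q ζ) (Ψ : ℕ → ℝ) 
    (hup : ∀ n, 1 ≤ ((Q (n+2) : ℝ) - Q (n+1)) * Ψ (Q (n+1)).toNat) :
    ζ ∈ K1star Ψ := by
  refine ⟨h.irrational, ?_⟩
  refine Set.infinite_of_injective_forall_mem (f := fun n : ℕ => ((Q (n+1)).toNat, P (n+1))) ?_ ?_
  · intro m n hmn
    have h1 : (Q (m+1)).toNat = (Q (n+1)).toNat := congrArg Prod.fst hmn
    have h2 := h.qpos (m+1)
    have h3 := h.qpos (n+1)
    have h4 : Q (m+1) = Q (n+1) := by omega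
    have := h.mono.injective h4
    omega
  · intro n
    have h2 := h.qpos (n+1)
    have hcast : (((Q (n+1)).toNat : ℕ) : ℤ) = Q (n+1) := Int.toNat_of_nonneg h2.le
    have hcastR : (((Q (n+1)).toNat : ℕ) : ℝ) = Q (n+1) := by exact_mod_cast hcast
    refine ⟨?_, ?_, ?_⟩
    · show 1 ≤ (Q (n+1)).toNat
      omega
    · show Int.gcd (P (n+1)) ((Q (n+1)).toNat : ℤ) = 1
      rw [hcast]
      exact Int.isCoprime_iff_gcd_eq_one.mp (h.coprime _)
    · show |(((Q (n+1)).toNat : ℕ) : ℝ) * ζ - P (n+1)| ≤ Ψ (Q (n+1)).toNat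
      rw [hcastR, abs_of_pos (by linarith [h.lo (n+1)])]
      have h5 := h.err_hi (n+1)
      have h6 := h.monoR (n+1)
      have h7 := hup n
      have h8 : (0:ℝ) < (Q (n+2) : ℝ) - Q (n+1) := by
        have : (Q (n+1) : ℝ) < Q (n+2) := h6
        linarith
      have h9 : ((Q (n+2) : ℝ) - Q (n+1)) * (Q (n+1) * ζ - P (n+1)) < 1 := h5
      by_contra hcon
      push Not at hcon
      nlinarith

theorem not_mem (h : GoodSeq P Q ζ) (Ψ : ℕ → ℝ) (hpos : ∀ q, 0 < Ψ q)
    (hsmall : Tendsto (fun q : ℕ => (q : ℝ) * Ψ q) atTop (nhds 0))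
    (hlow : ∀ n, (Q (n+2) : ℝ) * Ψ (Q (n+1)).toNat ≤ 1 + 5 * (Q (n+1) * Ψ (Q (n+1)).toNat))
    (c : ℝ) (hc : c ∈ Ioo (0:ℝ) 1) : ζ ∉ K1star (fun x => c * Ψ x) := by
  rintro ⟨-, hinf⟩
  apply hinf
  obtain ⟨hc0, hc1⟩ := hc
  have hδ : (0:ℝ) < min (1/8) ((1 - c) / 5) := lt_min (by norm_num) (by linarith)
  obtain ⟨M, hM⟩ := eventually_atTop.mp (hsmall.eventually (gt_mem_nhds hδ))
  set N := max M (Q 1).toNat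
  have hfin : (⋃ q ∈ Set.Iio N, (fun p : ℤ => (q, p)) ''
      (Set.Icc ⌈(q:ℝ) * ζ - c * Ψ q⌉ ⌊(q:ℝ) * ζ + c * Ψ q⌋)).Finite :=
    (Set.finite_Iio N).biUnion (fun q _ => (Set.finite_Icc _ _).image _)
  refine hfin.subset ?_
  rintro ⟨q, p⟩ ⟨hq1, hgcd, hle⟩
  simp only at hq1 hgcd hle
  by_cases hqN : q < N
  · refine Set.mem_biUnion (show q ∈ Set.Iio N from hqN) ⟨p, ⟨?_, ?_⟩, rfl⟩
    · rw [Int.ceil_le]; linarith [(abs_le.mp hle).2]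
    · rw [Int.le_floor]; linarith [(abs_le.mp hle).1]
  · exfalso
    push Not at hqN
    have hsm := hM q (le_trans (le_max_left _ _) hqN)
    have hsm1 := lt_of_lt_of_le hsm (min_le_left _ _)
    have hsm2 := lt_of_lt_of_le hsm (min_le_right _ _)
    have hQ1 : Q 1 ≤ q := by
      have := le_trans (le_max_right _ _) hqN
      omega
    have hqR : (0:ℝ) < q := by exact_mod_cast hq1
    have hP := hpos q
    rcases h.bad q p hQ1 (Int.isCoprime_iff_gcd_eq_one.mpr hgcd) with ⟨n, hn1, hn2⟩ | hb
    · have h1 := hlow n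
      have h2 : 1 < (Q (n+2) : ℝ) * (Q (n+1) * ζ - P (n+1)) := h.err_lo (n+1)
      have h3 := h.qposR (n+2)
      have hnat : (Q (n+1)).toNat = q := by omega
      have hnR : (Q (n+1) : ℝ) = q := by exact_mod_cast hn1
      rw [hnat, hnR] at h1
      rw [hnR, hn2] at h2
      have h4 := (abs_le.mp hle).2
      have h5 : (Q (n+2) : ℝ) * (q * ζ - p) ≤ Q (n+2) * (c * Ψ q) :=
        mul_le_mul_of_nonneg_left h4 h3.le
      nlinarith
    · have h1 : (q:ℝ) * |(q : ℝ) * ζ - p| ≤ q * (c * Ψ q) :=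
        mul_le_mul_of_nonneg_left hle hqR.le
      nlinarith [mul_pos hqR hP]

end GoodSeq

/-- The partial quotient chosen at denominator `q`. -/
noncomputable def coefA (Ψ : ℕ → ℝ) (q : ℤ) (s : Bool) : ℤ :=
  ⌈1 / ((q : ℝ) * Ψ q.toNat)⌉ + 3 + (if s then 1 else 0)

/-- The state of two consecutive convergents. -/
noncomputable def stt (Ψ : ℕ → ℝ) (i : (ℤ × ℤ) × (ℤ × ℤ)) (s : ℕ → Bool) :
    ℕ → (ℤ × ℤ) × (ℤ × ℤ)
  | 0 => i
  | n+1 =>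
    let t := stt Ψ i s n
    (t.2, (coefA Ψ t.2.2 (s n) * t.2.1 - t.1.1, coefA Ψ t.2.2 (s n) * t.2.2 - t.1.2))

theorem stt_congr (Ψ : ℕ → ℝ) (i) (s s' : ℕ → Bool) (n : ℕ) (h : ∀ k < n, s k = s' k) :
    stt Ψ i s n = stt Ψ i s' n := by
  induction n with
  | zero => rfl
  | succ n ih =>
    simp only [stt]
    rw [ih (fun k hk => h k (by omega)), h n (by omega)]

/-- Everything about one sequence of choices. -/
theorem build (Ψ : ℕ → ℝ) (hpos : ∀ q, 0 < Ψ q) (i : (ℤ × ℤ) × (ℤ × ℤ))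
    (h0 : 0 < i.1.2) (h1 : i.1.2 < i.2.2) (hd : i.2.1 * i.1.2 - i.1.1 * i.2.2 = 1)
    (s : ℕ → Bool) :
    ∃ ζ : ℝ, GoodSeq (fun n => (stt Ψ i s n).1.1) (fun n => (stt Ψ i s n).1.2) ζ ∧
      (∀ n, 1 ≤ (((stt Ψ i s (n+2)).1.2 : ℝ) - (stt Ψ i s (n+1)).1.2) *
        Ψ ((stt Ψ i s (n+1)).1.2).toNat) ∧
      (∀ n, ((stt Ψ i s (n+2)).1.2 : ℝ) * Ψ ((stt Ψ i s (n+1)).1.2).toNat ≤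
        1 + 5 * ((stt Ψ i s (n+1)).1.2 * Ψ ((stt Ψ i s (n+1)).1.2).toNat)) := by
  set P : ℕ → ℤ := fun n => (stt Ψ i s n).1.1 with hPdef
  set Q : ℕ → ℤ := fun n => (stt Ψ i s n).1.2 with hQdef
  set A : ℕ → ℤ := fun n => coefA Ψ (Q (n+1)) (s n) with hAdef
  have hP : ∀ n, P (n+2) = A n * P (n+1) - P n := fun n => rfl
  have hQ : ∀ n, Q (n+2) = A n * Q (n+1) - Q n := fun n => rfl
  have hinv : ∀ n, 0 < Q n ∧ Q n < Q (n+1) ∧ P (n+1) * Q n - P n * Q (n+1) = 1 ∧ 4 ≤ A n := by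
    have hA : ∀ n, 0 < Q (n+1) → 4 ≤ A n := by
      intro n hn
      have : 0 < ⌈1 / ((Q (n+1) : ℝ) * Ψ (Q (n+1)).toNat)⌉ := by
        rw [Int.ceil_pos]
        have := hpos (Q (n+1)).toNat
        have : (0:ℝ) < Q (n+1) := by exact_mod_cast hn
        positivity
      simp only [hAdef, coefA]
      split_ifs <;> omega
    intro n
    induction n with
    | zero => exact ⟨h0, h1, hd, hA 0 (lt_trans h0 h1)⟩
    | succ n ih =>
      obtain ⟨a1, a2, a3, a4⟩ := ih
      have b1 : 0 < Q (n+1) := lt_trans a1 a2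
      have b2 : Q (n+1) < Q (n+2) := by rw [hQ]; nlinarith
      refine ⟨b1, b2, ?_, hA _ (lt_trans b1 b2)⟩
      show P (n+2) * Q (n+1) - P (n+1) * Q (n+2) = 1
      rw [hP, hQ]; linarith
  have qp : ∀ n, (0:ℝ) < Q n := fun n => by exact_mod_cast (hinv n).1
  have qm : ∀ n, (Q n:ℝ) < Q (n+1) := fun n => by exact_mod_cast (hinv n).2.1
  have dt : ∀ n, (P (n+1) : ℝ) * Q n - P n * Q (n+1) = 1 := fun n => by
    exact_mod_cast (hinv n).2.2.1
  have a4 : ∀ n, (4:ℝ) ≤ A n := fun n => by exact_mod_cast (hinv n).2.2.2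
  have hPR : ∀ n, (P (n+2) : ℝ) = A n * P (n+1) - P n := fun n => by exact_mod_cast hP n
  have hQR : ∀ n, (Q (n+2) : ℝ) = A n * Q (n+1) - Q n := fun n => by exact_mod_cast hQ n
  set L : ℕ → ℝ := fun n => P n / Q n with hL
  set U : ℕ → ℝ := fun n => ((P (n+1) : ℝ) - P n) / (Q (n+1) - Q n) with hU
  have hLm : StrictMono L := strictMono_nat_of_lt_succ fun n => by
    simp only [hL]
    rw [div_lt_div_iff₀ (qp _) (qp _)]
    linarith [dt n]
  have hUm : StrictAnti U := strictAnti_nat_of_succ_lt fun n => by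
    show ((P (n+2) : ℝ) - P (n+1)) / (Q (n+2) - Q (n+1)) < ((P (n+1) : ℝ) - P n) / (Q (n+1) - Q n)
    have e : (Q (n+1) : ℝ) < Q (n+2) := qm (n+1)
    rw [div_lt_div_iff₀ (by linarith) (by linarith [qm n]), hPR, hQR]
    have := dt n
    have := a4 n
    nlinarith
  have hLU : ∀ n, L n ≤ U n := fun n => by
    simp only [hL, hU]
    rw [div_le_div_iff₀ (qp _) (by linarith [qm n])]
    linarith [dt n]
  have hmem := hLm.monotone.ciSup_mem_iInter_Icc_of_antitone hUm.antitone hLU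
  rw [Set.mem_iInter] at hmem
  refine ⟨⨆ n, L n, ⟨fun n => (hinv n).1, fun n => (hinv n).2.2.1, ?_, (hinv 0).2.1, ?_, ?_⟩, ?_, ?_⟩
  · intro n
    have := lt_of_lt_of_le (hLm (Nat.lt_succ_self n)) (hmem (n+1)).1
    rw [div_lt_iff₀ (qp n)] at this
    linarith
  · intro n
    show 3 * Q (n+1) ≤ Q (n+2)
    rw [hQ]
    nlinarith [(hinv n).2.2.2, (hinv n).2.1, (hinv n).1]
  · intro n
    have := lt_of_le_of_lt (hmem (n+1)).2 (hUm (Nat.lt_succ_self n))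
    rw [lt_div_iff₀ (by linarith [qm n])] at this
    linarith
  · intro n
    show 1 ≤ ((Q (n+2) : ℝ) - Q (n+1)) * Ψ (Q (n+1)).toNat
    set ψ := Ψ (Q (n+1)).toNat with hψ
    have hψ0 : 0 < ψ := hpos _
    have hx : 0 < (Q (n+1) : ℝ) * ψ := mul_pos (qp _) hψ0
    have hA : 1 / ((Q (n+1) : ℝ) * ψ) + 2 ≤ A n := by
      have := Int.le_ceil (1 / ((Q (n+1) : ℝ) * ψ))
      simp only [hAdef, coefA]
      push_cast
      split_ifs <;> linarith
    have : 1 ≤ ((A n : ℝ) - 2) * (Q (n+1) * ψ) := by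
      rw [← div_le_iff₀ hx]; linarith
    rw [hQR]
    nlinarith [qm n]
  · intro n
    show (Q (n+2) : ℝ) * Ψ (Q (n+1)).toNat ≤ 1 + 5 * (Q (n+1) * Ψ (Q (n+1)).toNat)
    set ψ := Ψ (Q (n+1)).toNat with hψ
    have hψ0 : 0 < ψ := hpos _
    have hx : 0 < (Q (n+1) : ℝ) * ψ := mul_pos (qp _) hψ0
    have hA : (A n : ℝ) - 5 ≤ 1 / ((Q (n+1) : ℝ) * ψ) := by
      have := Int.ceil_lt_add_one (1 / ((Q (n+1) : ℝ) * ψ))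
      simp only [hAdef, coefA]
      push_cast
      split_ifs <;> linarith
    have : ((A n : ℝ) - 5) * (Q (n+1) * ψ) ≤ 1 := by
      rw [← le_div_iff₀ hx]; linarith
    rw [hQR]
    nlinarith [qp n]

theorem separate (Ψ : ℕ → ℝ) (i : (ℤ × ℤ) × (ℤ × ℤ)) (s s' : ℕ → Bool) (ζ : ℝ) (n : ℕ)
    (h : GoodSeq (fun n => (stt Ψ i s n).1.1) (fun n => (stt Ψ i s n).1.2) ζ)
    (h' : GoodSeq (fun n => (stt Ψ i s' n).1.1) (fun n => (stt Ψ i s' n).1.2) ζ)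
    (heq : stt Ψ i s n = stt Ψ i s' n) (hs : s n = false) (hs' : s' n = true) : False := by
  have h1 := h.lo (n+2)
  have h2 := h'.hi (n+1)
  simp only [stt, ← heq, hs, hs', coefA] at h1 h2
  push_cast at h1 h2
  linarith

theorem exists_init (a b : ℝ) (hab : a < b) : ∃ i : (ℤ × ℤ) × (ℤ × ℤ),
    0 < i.1.2 ∧ i.1.2 < i.2.2 ∧ i.2.1 * i.1.2 - i.1.1 * i.2.2 = 1 ∧
    a * i.1.2 ≤ i.1.1 ∧ (i.2.1 : ℝ) - i.1.1 ≤ b * (i.2.2 - i.1.2) := by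
  obtain ⟨r, hr1, hr2⟩ := exists_rat_btwn hab
  have hd : (0:ℤ) < r.den := by exact_mod_cast r.den_pos
  have hdR : (0:ℝ) < r.den := by exact_mod_cast r.den_pos
  have hz : (r:ℝ) * r.den = r.num := by exact_mod_cast Rat.mul_den_eq_num r
  obtain ⟨u, v, huv⟩ : IsCoprime r.num (r.den : ℤ) :=
    Int.isCoprime_iff_gcd_eq_one.mpr r.reduced
  -- `v * den - num * (-u) = 1`
  obtain ⟨t, ht⟩ := exists_nat_gt (max (|(u:ℝ)| + 1) (1 / (b - r) + |(u:ℝ)| + 1))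
  have ht1 := lt_of_le_of_lt (le_max_left _ _) ht
  have ht2 := lt_of_le_of_lt (le_max_right _ _) ht
  have hu := le_abs_self (u:ℝ)
  have hden1 : (1:ℝ) ≤ r.den := by exact_mod_cast r.den_pos
  have hbr : 0 < b - r := by linarith
  have htd : (t:ℝ) - 1 ≤ (t - 1) * r.den := by
    have := abs_nonneg (u:ℝ)
    nlinarith
  refine ⟨((r.num, r.den), (v + t * r.num, -u + t * r.den)), hd, ?_, ?_, ?_, ?_⟩
  · show (r.den : ℤ) < -u + t * r.den
    have : (r.den : ℝ) < -u + t * r.den := by nlinarith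
    exact_mod_cast this
  · show (v + t * r.num) * r.den - r.num * (-u + t * r.den) = 1
    linarith
  · show a * ((r.den : ℤ) : ℝ) ≤ r.num
    push_cast
    nlinarith
  · show ((v + t * r.num : ℤ) : ℝ) - r.num ≤ b * (((-u + t * r.den : ℤ) : ℝ) - ((r.den : ℤ) : ℝ))
    push_cast
    have huvR : (u:ℝ) * r.num + v * r.den = 1 := by exact_mod_cast huv
    set X : ℝ := -u + t * r.den - r.den with hX
    have hXb : 1 / (b - r) ≤ X := by simp only [hX]; linarith
    have hXb' : 1 ≤ X * (b - r) := by rwa [div_le_iff₀ hbr] at hXb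
    have hid : ((v:ℝ) + t * r.num - r.num) * r.den = 1 + r * r.den * X := by
      rw [← hz] at huvR ⊢
      simp only [hX]
      linear_combination huvR
    have : ((v:ℝ) + t * r.num - r.num) * r.den ≤ (b * X) * r.den := by
      rw [hid]; nlinarith
    exact le_of_mul_le_mul_right this hdR

/-- If `Ψ` is positive and satisfies `Ψ(x) = o(1/x)`, then for every non-empty open
interval `(a, b)` the set `(𝒦₁*(Ψ) \ ⋃_{0<c<1} 𝒦₁*(cΨ)) ∩ (a, b)` is uncountable. -/
theorem jarnik_one_dimensional_coprime (Ψ : ℕ → ℝ) (hpos : ∀ q, 0 < Ψ q)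
    (hsmall : Tendsto (fun q : ℕ => (q : ℝ) * Ψ q) atTop (nhds 0))
    (a b : ℝ) (hab : a < b) :
    ¬ ((K1star Ψ \ ⋃ c ∈ Ioo (0 : ℝ) 1, K1star (fun x => c * Ψ x)) ∩ Ioo a b).Countable := by
  obtain ⟨i, h0, h1, hd, ha, hb⟩ := exists_init a b hab
  choose f hf hup hlow using build Ψ hpos i h0 h1 hd
  have hinj : Function.Injective f := by
    intro s s' hss
    by_contra hne
    have hex : ∃ n, s n ≠ s' n := Function.ne_iff.mp hne
    classical
    have hs := Nat.find_spec hex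
    have hm : ∀ k < Nat.find hex, s k = s' k := fun k hk => not_not.mp (Nat.find_min hex hk)
    have heq := stt_congr Ψ i s s' _ hm
    set n := Nat.find hex
    have g := hf s
    have g' := hf s'
    rw [← hss] at g'
    cases e : s n <;> cases e' : s' n
    · exact hs (e.trans e'.symm)
    · exact separate Ψ i s s' _ n g g' heq e e'
    · exact separate Ψ i s' s _ n g' g heq.symm e' e
    · exact hs (e.trans e'.symm)
  have hmem : ∀ s, f s ∈ (K1star Ψ \ ⋃ c ∈ Ioo (0 : ℝ) 1, K1star (fun x => c * Ψ x)) ∩ Ioo a b := by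
    intro s
    refine ⟨⟨(hf s).mem Ψ (hup s), ?_⟩, ?_, ?_⟩
    · simp only [Set.mem_iUnion, not_exists]
      intro c hc
      exact (hf s).not_mem Ψ hpos hsmall (hlow s) c hc
    · have h2 : (i.1.1 : ℝ) < i.1.2 * f s := (hf s).lo 0
      have h3 : (0:ℝ) < i.1.2 := by exact_mod_cast h0
      by_contra hcon
      push Not at hcon
      nlinarith
    · have h2 : ((i.2.2 : ℝ) - i.1.2) * f s < i.2.1 - i.1.1 := (hf s).hi 0
      have h3 : (i.1.2 : ℝ) < i.2.2 := by exact_mod_cast h1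
      by_contra hcon
      push Not at hcon
      nlinarith
  intro hcount
  have hc2 : (Set.univ : Set (ℕ → Bool)).Countable :=
    (hcount.preimage_of_injOn hinj.injOn).mono (fun s _ => hmem s)
  have : Countable (ℕ → Bool) := Set.countable_univ_iff.mp hc2
  obtain ⟨g, hg⟩ := exists_surjective_nat (ℕ → Bool)
  obtain ⟨n, hn⟩ := hg (fun n => !(g n n))
  have := congrFun hn n
  simp at this
end

section
/- Let b ≥ 2 be an integer, J(b) ⊆ {0,1,…,b−1} with at least two elements, and let Ψ : ℕ → (0,∞) satisfy Ψ(x) = o(1/x) as x → ∞ and be non-increasing. Then for every constant c with 0 < c < 1/b, the set (𝒦₁(Ψ) \ 𝒦₁(cΨ)) ∩ K_{J(b)} is uncountable. -/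
open Filter Set


/-- `baseExpSet b J` is the set of numbers in `[0,1]` admitting a base-`b` expansion all
of whose digits lie in `J`. -/
def baseExpSet (b : ℕ) (J : Set ℕ) : Set ℝ :=
  {x : ℝ | x ∈ Icc (0 : ℝ) 1 ∧ ∃ d : ℕ → ℕ, (∀ n, d n ∈ J) ∧
    x = ∑' n : ℕ, (d n : ℝ) / (b : ℝ) ^ (n + 1)}



/-- sharp goodness, away from the exceptional set `S` -/
def Gd (b : ℕ) (S : Set ℤ) (A : ℤ) (n : ℕ) (ε : ℝ) : Prop :=
  ∀ q c : ℤ, q ≠ 0 → c ≠ 0 → ((b : ℤ) ^ n ∣ A * q - c) → q ∉ S →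
    ε * ((b : ℝ) ^ n + |(q : ℝ)| / |(c : ℝ)| + |(c : ℝ)| / |(q : ℝ)|) ≤ |(q : ℝ)| * |(c : ℝ)|

/-- crude goodness -/
def Gc (b : ℕ) (A : ℤ) (n : ℕ) (ε : ℝ) : Prop :=
  ∀ q c : ℤ, q ≠ 0 → c ≠ 0 → ((b : ℤ) ^ n ∣ A * q - c) →
    ε * (b : ℝ) ^ n ≤ |(q : ℝ)| * |(c : ℝ)|

lemma one_le_abs_cast {q : ℤ} (h : q ≠ 0) : (1 : ℝ) ≤ |(q : ℝ)| := by
  have := Int.one_le_abs h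
  exact_mod_cast this

lemma core_aux (a d w β B ε : ℝ) (ha : 1 ≤ a) (hw : 1 ≤ w) (hB : 1 ≤ B) (hβ : 16 * B ≤ β)
    (hε : 0 < ε) (hε1 : ε ≤ 1 / 16) (had : a ≤ d) (h1 : β * w ≤ a + d) (h2 : d ≤ a + β * w)
    (h : ε * (B + a / w + w / a) ≤ a * w) :
    ε * (β * B + a / d + d / a) ≤ a * d := by
  have ha0 : 0 < a := by linarith
  have hw0 : 0 < w := by linarith
  have hd0 : 0 < d := by linarith
  have hβ0 : 0 < β := by linarith
  have e1 : a / d ≤ 1 := by rw [div_le_one hd0]; exact had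
  have e2 : d / a ≤ 1 + β * (w / a) := by
    rw [div_le_iff₀ ha0]; field_simp; linarith
  have e3 : ε * (β * B + a / d + d / a) ≤ ε * (β * B + 2 + β * (w / a)) := by
    apply mul_le_mul_of_nonneg_left _ hε.le; linarith
  refine e3.trans ?_
  by_cases hc : 2 * (a * w) ≤ ε * β
  · have h3 : β * (ε * (B + a / w + w / a)) ≤ β * (a * w) := mul_le_mul_of_nonneg_left h hβ0.le
    have h4 : 2 * a ^ 2 ≤ ε * β * (a / w) := by
      rw [← mul_div_assoc, le_div_iff₀ hw0]
      nlinarith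
    nlinarith [mul_le_mul_of_nonneg_left h1 ha0.le]
  · push Not at hc
    have h5 : 8 * ε * B < a * w := by nlinarith
    have h6 : a * (β * w) ≤ 2 * (a * d) := by nlinarith
    have h7 : w / a ≤ a * w := by
      rw [div_le_iff₀ ha0]; nlinarith [mul_nonneg ha0.le hw0.le, mul_pos ha0 hw0]
    have h8 : 1 ≤ a * w := by nlinarith
    have h9 : β * (w / a) ≤ β * (a * w) := mul_le_mul_of_nonneg_left h7 hβ0.le
    have h10 : β * (8 * ε * B) ≤ β * (a * w) := mul_le_mul_of_nonneg_left h5.le hβ0.le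
    have h11 : 16 ≤ β * (a * w) := by nlinarith
    have h12 : ε * (β * (w / a)) ≤ 1 / 16 * (β * (a * w)) := by
      apply mul_le_mul hε1 h9 (by positivity) (by norm_num)
    nlinarith

/-- core inequality for the folding step -/
lemma core (q c c0 : ℤ) (β B ε : ℝ) (hq : q ≠ 0) (hc : c ≠ 0) (hc0 : c0 ≠ 0) (hB : 1 ≤ B)
    (hβ : 16 * B ≤ β) (hε : 0 < ε) (hε1 : ε ≤ 1 / 16) (hr : (c : ℝ) = q + β * c0)
    (h1 : ε * (B + |(q : ℝ)| / |(c0 : ℝ)| + |(c0 : ℝ)| / |(q : ℝ)|) ≤ |(q : ℝ)| * |(c0 : ℝ)|)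
    (h2 : ε * (B + |(c : ℝ)| / |(c0 : ℝ)| + |(c0 : ℝ)| / |(c : ℝ)|) ≤ |(c : ℝ)| * |(c0 : ℝ)|) :
    ε * (β * B + |(q : ℝ)| / |(c : ℝ)| + |(c : ℝ)| / |(q : ℝ)|) ≤ |(q : ℝ)| * |(c : ℝ)| := by
  have hβ0 : 0 < β := by linarith
  have k1 : |(c : ℝ)| ≤ |(q : ℝ)| + β * |(c0 : ℝ)| := by
    rw [hr]; refine (abs_add_le _ _).trans ?_; rw [abs_mul, abs_of_pos hβ0]
  have k2 : |(q : ℝ)| ≤ |(c : ℝ)| + β * |(c0 : ℝ)| := by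
    have : (q : ℝ) = c - β * c0 := by rw [hr]; ring
    rw [this]; refine (abs_sub _ _).trans ?_; rw [abs_mul, abs_of_pos hβ0]
  have k3 : β * |(c0 : ℝ)| ≤ |(q : ℝ)| + |(c : ℝ)| := by
    have : β * (c0 : ℝ) = c - q := by rw [hr]; ring
    calc β * |(c0 : ℝ)| = |β * (c0 : ℝ)| := by rw [abs_mul, abs_of_pos hβ0]
      _ = |(c : ℝ) - q| := by rw [this]
      _ ≤ _ := by refine (abs_sub _ _).trans ?_; linarith
  rcases le_total |(q : ℝ)| |(c : ℝ)| with h | h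
  · exact core_aux _ _ _ β B ε (one_le_abs_cast hq) (one_le_abs_cast hc0) hB hβ hε hε1 h k3 k1 h1
  · have := core_aux _ _ _ β B ε (one_le_abs_cast hc) (one_le_abs_cast hc0) hB hβ hε hε1 h
      (by linarith) k2 h2
    calc _ = ε * (β * B + |(c : ℝ)| / |(q : ℝ)| + |(q : ℝ)| / |(c : ℝ)|) := by ring
      _ ≤ _ := this
      _ = _ := by ring

lemma dvd_of_one_mod {b : ℕ} {A q : ℤ} {n : ℕ} (hA : (b : ℤ) ∣ A - 1)
    (h : (b : ℤ) ^ n ∣ A * q) : (b : ℤ) ^ n ∣ q := by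
  have hcop : IsCoprime ((b : ℤ)) A := by
    obtain ⟨k, hk⟩ := hA
    exact ⟨-k, 1, by linarith⟩
  exact (hcop.pow_left).dvd_of_dvd_mul_left h

/-- algebra of an append step : `A' = A b^s + T`. -/
lemma step_alg {b : ℕ} (hb : 2 ≤ b) {A T q c : ℤ} {n s : ℕ}
    (h : (b : ℤ) ^ (n + s) ∣ (A * (b : ℤ) ^ s + T) * q - c) :
    ∃ c0 : ℤ, c = T * q + (b : ℤ) ^ s * c0 ∧ (b : ℤ) ^ n ∣ A * q - c0 := by
  obtain ⟨p, hp⟩ := h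
  refine ⟨A * q - (b : ℤ) ^ n * p, ?_, ⟨p, by ring⟩⟩
  rw [pow_add] at hp
  linear_combination -hp

lemma Gd.mono {b : ℕ} {S : Set ℤ} {A : ℤ} {n : ℕ} {ε ε' : ℝ} (h : Gd b S A n ε) (hε : ε' ≤ ε) :
    Gd b S A n ε' := by
  intro q c hq hc hd hS
  refine le_trans ?_ (h q c hq hc hd hS)
  apply mul_le_mul_of_nonneg_right hε
  positivity

lemma Gc.mono {b : ℕ} {A : ℤ} {n : ℕ} {ε ε' : ℝ} (h : Gc b A n ε) (hε : ε' ≤ ε) :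
    Gc b A n ε' := by
  intro q c hq hc hd
  refine le_trans ?_ (h q c hq hc hd)
  apply mul_le_mul_of_nonneg_right hε
  positivity

lemma Gd.toGc {b : ℕ} {A : ℤ} {n : ℕ} {ε : ℝ} (hε : 0 < ε) (h : Gd b ∅ A n ε) : Gc b A n ε := by
  intro q c hq hc hd
  refine le_trans ?_ (h q c hq hc hd (by simp))
  apply mul_le_mul_of_nonneg_left _ hε.le
  have : 0 ≤ |(q : ℝ)| / |(c : ℝ)| := by positivity
  have : 0 ≤ |(c : ℝ)| / |(q : ℝ)| := by positivity
  linarith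

lemma Gc.toGd {b : ℕ} {A : ℤ} {n : ℕ} {ε : ℝ} (hε : 0 < ε) (hε1 : ε ≤ 1) (h : Gc b A n ε) :
    Gd b ∅ A n (ε / 3) := by
  intro q c hq hc hd _
  have h0 := h q c hq hc hd
  have q1 := one_le_abs_cast hq
  have c1 := one_le_abs_cast hc
  have e1 : |(q : ℝ)| / |(c : ℝ)| ≤ |(q : ℝ)| * |(c : ℝ)| := by
    rw [div_le_iff₀ (by linarith)]
    nlinarith [mul_le_mul_of_nonneg_left c1 (by positivity : 0 ≤ |(q : ℝ)| * |(c : ℝ)|),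
      mul_le_mul_of_nonneg_left c1 (by positivity : 0 ≤ |(q : ℝ)|)]
  have e2 : |(c : ℝ)| / |(q : ℝ)| ≤ |(q : ℝ)| * |(c : ℝ)| := by
    rw [div_le_iff₀ (by linarith)]
    nlinarith [mul_le_mul_of_nonneg_left q1 (by positivity : 0 ≤ |(q : ℝ)| * |(c : ℝ)|),
      mul_le_mul_of_nonneg_left q1 (by positivity : 0 ≤ |(c : ℝ)|)]
  have e3 : ε * (|(q : ℝ)| / |(c : ℝ)|) ≤ 1 * (|(q : ℝ)| * |(c : ℝ)|) :=
    mul_le_mul hε1 e1 (by positivity) (by norm_num)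
  have e4 : ε * (|(c : ℝ)| / |(q : ℝ)|) ≤ 1 * (|(q : ℝ)| * |(c : ℝ)|) :=
    mul_le_mul hε1 e2 (by positivity) (by norm_num)
  nlinarith

lemma b4 {b : ℕ} (hb : 2 ≤ b) {e : ℕ} (he : 4 ≤ e) : (16 : ℝ) ≤ (b : ℝ) ^ e := by
  have hb' : (2 : ℝ) ≤ b := by exact_mod_cast hb
  calc (16 : ℝ) = 2 ^ 4 := by norm_num
    _ ≤ (b : ℝ) ^ 4 := by gcongr
    _ ≤ (b : ℝ) ^ e := by gcongr; linarith

/-- sharp folding, exceptional set `{b^k ∣ q}`. -/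
lemma fold_special {b : ℕ} (hb : 2 ≤ b) {A : ℤ} {n k e : ℕ} {ε : ℝ} (hA : (b : ℤ) ∣ A - 1)
    (hk : k ≤ n) (he : 4 ≤ e) (hε : 0 < ε) (hε1 : ε ≤ 1 / 16)
    (h : Gd b {q | (b : ℤ) ^ k ∣ q} A n ε) :
    Gd b {q | (b : ℤ) ^ k ∣ q} (A * (b : ℤ) ^ (n + e) + 1) (n + (n + e)) ε := by
  intro q c hq hc hd hS
  obtain ⟨c0, hc0, hd0⟩ := step_alg hb hd
  have hb1 : (1 : ℝ) ≤ b := by exact_mod_cast (by omega : 1 ≤ b)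
  have hne : c0 ≠ 0 := by
    rintro rfl
    apply hS
    have : (b : ℤ) ^ n ∣ q := dvd_of_one_mod hA (by simpa using hd0)
    exact (pow_dvd_pow _ hk).trans this
  have hd1 : (b : ℤ) ^ n ∣ A * c - c0 := by
    have : A * c - c0 = (A * q - c0) + (b : ℤ) ^ n * ((b : ℤ) ^ e * A * c0) := by
      rw [hc0, pow_add]; ring
    rw [this]; exact dvd_add hd0 (dvd_mul_right _ _)
  have hcS : c ∉ {q : ℤ | (b : ℤ) ^ k ∣ q} := by
    intro hc'
    apply hS
    have : q = c - (b : ℤ) ^ (n + e) * c0 := by rw [hc0]; ring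
    change (b : ℤ) ^ k ∣ q
    rw [this]
    exact dvd_sub hc' ((pow_dvd_pow _ (by omega)).mul_right _)
  have := core q c c0 ((b : ℝ) ^ (n + e)) ((b : ℝ) ^ n) ε hq hc hne (one_le_pow₀ hb1)
    (by rw [pow_add, mul_comm]; exact mul_le_mul_of_nonneg_left (b4 hb he) (by positivity)) hε hε1
    (by rw [hc0]; push_cast; ring) (h q c0 hq hne hd0 hS) (h c c0 hc hne hd1 hcS)
  rw [pow_add (b : ℝ) n (n + e)]
  calc _ = ε * ((b : ℝ) ^ (n + e) * (b : ℝ) ^ n + |(q : ℝ)| / |(c : ℝ)| + |(c : ℝ)| / |(q : ℝ)|) := by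
        ring
    _ ≤ _ := this

lemma abs_ge_of_dvd {b : ℕ} {n : ℕ} {q : ℤ} (hq : q ≠ 0) (h : (b : ℤ) ^ n ∣ q) :
    (b : ℝ) ^ n ≤ |(q : ℝ)| := by
  have := Int.le_of_dvd (abs_pos.mpr hq) ((dvd_abs _ _).mpr h)
  exact_mod_cast this

/-- sharp folding, no exceptional set. -/
lemma fold_full {b : ℕ} (hb : 2 ≤ b) {A : ℤ} {n e : ℕ} {ε : ℝ} (hA : (b : ℤ) ∣ A - 1)
    (he : 4 ≤ e) (hε : 0 < ε) (hε1 : ε ≤ 1 / 16) (hε2 : 4 * ε * (b : ℝ) ^ e ≤ 1)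
    (h : Gd b ∅ A n ε) :
    Gd b ∅ (A * (b : ℤ) ^ (n + e) + 1) (n + (n + e)) ε := by
  intro q c hq hc hd hS
  obtain ⟨c0, hc0, hd0⟩ := step_alg hb hd
  have hb1 : (1 : ℝ) ≤ b := by exact_mod_cast (by omega : 1 ≤ b)
  by_cases hne : c0 = 0
  · subst hne
    have h1 : (b : ℤ) ^ n ∣ q := dvd_of_one_mod hA (by simpa using hd0)
    have h2 := abs_ge_of_dvd hq h1
    have h3 : c = q := by simpa using hc0
    subst h3
    have h4 : (1 : ℝ) ≤ (b : ℝ) ^ n := one_le_pow₀ hb1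
    have h5 : |(c : ℝ)| ≠ 0 := by positivity
    rw [div_self h5]
    have h6 : (b : ℝ) ^ n * (b : ℝ) ^ n ≤ |(c : ℝ)| * |(c : ℝ)| := by gcongr
    have h7 : (b : ℝ) ^ (n + (n + e)) = (b : ℝ) ^ n * (b : ℝ) ^ n * (b : ℝ) ^ e := by
      rw [pow_add, pow_add]; ring
    rw [h7]
    have h8 : ε * ((b : ℝ) ^ n * (b : ℝ) ^ n * (b : ℝ) ^ e) ≤ (b : ℝ) ^ n * (b : ℝ) ^ n / 4 := by
      have : 0 ≤ (b : ℝ) ^ n * (b : ℝ) ^ n := by positivity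
      nlinarith
    nlinarith
  have hd1 : (b : ℤ) ^ n ∣ A * c - c0 := by
    have : A * c - c0 = (A * q - c0) + (b : ℤ) ^ n * ((b : ℤ) ^ e * A * c0) := by
      rw [hc0, pow_add]; ring
    rw [this]; exact dvd_add hd0 (dvd_mul_right _ _)
  have := core q c c0 ((b : ℝ) ^ (n + e)) ((b : ℝ) ^ n) ε hq hc hne (one_le_pow₀ hb1)
    (by rw [pow_add, mul_comm]; exact mul_le_mul_of_nonneg_left (b4 hb he) (by positivity)) hε hε1
    (by rw [hc0]; push_cast; ring) (h q c0 hq hne hd0 hS) (h c c0 hc hne hd1 (by simp))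
  rw [pow_add (b : ℝ) n (n + e)]
  calc _ = ε * ((b : ℝ) ^ (n + e) * (b : ℝ) ^ n + |(q : ℝ)| / |(c : ℝ)| + |(c : ℝ)| / |(q : ℝ)|) := by
        ring
    _ ≤ _ := this

/-- crude folding with numerator `T`. -/
lemma fold_crude {b : ℕ} (hb : 2 ≤ b) {A T : ℤ} {n : ℕ} {ε : ℝ} (hA : (b : ℤ) ∣ A - 1)
    (hT : T ≠ 0) (hTb : |(T : ℝ)| ≤ b) (hε : 0 < ε) (hε2 : ε * (b : ℝ) ^ 4 ≤ 1)
    (h : Gc b A n ε) :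
    Gc b (A * (b : ℤ) ^ (n + 4) + T) (n + (n + 4)) (ε / (b : ℝ) ^ 3) := by
  intro q c hq hc hd
  obtain ⟨c0, hc0, hd0⟩ := step_alg hb hd
  have hb2 : (2 : ℝ) ≤ b := by exact_mod_cast hb
  have hb0 : (0 : ℝ) < b := by linarith
  have hT1 := one_le_abs_cast hT
  have hq1 := one_le_abs_cast hq
  have hc1 := one_le_abs_cast hc
  by_cases hne : c0 = 0
  · subst hne
    have h1 : (b : ℤ) ^ n ∣ q := dvd_of_one_mod hA (by simpa using hd0)
    have h2 := abs_ge_of_dvd hq h1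
    have h3 : |(c : ℝ)| = |(T : ℝ)| * |(q : ℝ)| := by rw [hc0]; push_cast; simp [abs_mul]
    have h6 : (b : ℝ) ^ n * (b : ℝ) ^ n ≤ |(q : ℝ)| * |(q : ℝ)| := by gcongr
    have h7 : (b : ℝ) ^ (n + (n + 4)) = (b : ℝ) ^ n * (b : ℝ) ^ n * (b : ℝ) ^ 4 := by
      rw [pow_add, pow_add]; ring
    rw [h7, h3]
    have h9 : ε / (b : ℝ) ^ 3 ≤ ε := div_le_self hε.le (one_le_pow₀ (by linarith))
    have h8 : ε / (b : ℝ) ^ 3 * ((b : ℝ) ^ n * (b : ℝ) ^ n * (b : ℝ) ^ 4) ≤ (b : ℝ) ^ n * (b : ℝ) ^ n := by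
      have : 0 ≤ (b : ℝ) ^ n * (b : ℝ) ^ n := by positivity
      calc _ ≤ ε * ((b : ℝ) ^ n * (b : ℝ) ^ n * (b : ℝ) ^ 4) := by gcongr
        _ = (ε * (b : ℝ) ^ 4) * ((b : ℝ) ^ n * (b : ℝ) ^ n) := by ring
        _ ≤ 1 * ((b : ℝ) ^ n * (b : ℝ) ^ n) := by gcongr
        _ = _ := by ring
    nlinarith [mul_nonneg (abs_nonneg (q : ℝ)) (abs_nonneg (q : ℝ))]
  have hc01 := one_le_abs_cast hne
  have hd1 : (b : ℤ) ^ n ∣ A * c - T * c0 := by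
    have : A * c - T * c0 = (A * q - c0) * T + (b : ℤ) ^ n * ((b : ℤ) ^ 4 * A * c0) := by
      rw [hc0, pow_add]; ring
    rw [this]; exact dvd_add (hd0.mul_right _) (dvd_mul_right _ _)
  have g1 := h q c0 hq hne hd0
  have g2 := h c (T * c0) hc (mul_ne_zero hT hne) hd1
  push_cast at g2
  rw [abs_mul] at g2
  set β := (b : ℝ) ^ (n + 4) with hβ
  have hβ0 : 0 < β := by positivity
  have k3 : β * |(c0 : ℝ)| ≤ |(T : ℝ)| * |(q : ℝ)| + |(c : ℝ)| := by
    have : β * (c0 : ℝ) = c - T * q := by rw [hc0]; push_cast; ring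
    calc β * |(c0 : ℝ)| = |β * (c0 : ℝ)| := by rw [abs_mul, abs_of_pos hβ0]
      _ = |(c : ℝ) - T * q| := by rw [this]
      _ ≤ _ := by refine (abs_sub _ _).trans ?_; rw [abs_mul]; linarith
  rw [pow_add, ← hβ, div_mul_eq_mul_div, div_le_iff₀ (by positivity)]
  have hb3 : (2 : ℝ) * b ^ 2 ≤ b ^ 3 := by nlinarith [sq_nonneg (b : ℝ)]
  have hTsq : |(T : ℝ)| * |(T : ℝ)| ≤ b ^ 2 := by nlinarith
  have pq : 0 ≤ |(q : ℝ)| * |(c : ℝ)| := by positivity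
  rcases le_total (|(T : ℝ)| * |(q : ℝ)|) |(c : ℝ)| with hl | hl
  · -- |c| large
    have : β * |(c0 : ℝ)| ≤ 2 * |(c : ℝ)| := by linarith
    have h2 : β * (ε * (b : ℝ) ^ n) ≤ 2 * (|(q : ℝ)| * |(c : ℝ)|) := by
      calc β * (ε * (b : ℝ) ^ n) ≤ β * (|(q : ℝ)| * |(c0 : ℝ)|) := by gcongr
        _ = |(q : ℝ)| * (β * |(c0 : ℝ)|) := by ring
        _ ≤ |(q : ℝ)| * (2 * |(c : ℝ)|) := by gcongr
        _ = _ := by ring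
    have hb3' : (2 : ℝ) ≤ (b : ℝ) ^ 3 := by nlinarith [sq_nonneg (b : ℝ)]
    nlinarith [mul_le_mul_of_nonneg_left hb3' pq]
  · have : β * |(c0 : ℝ)| ≤ 2 * (|(T : ℝ)| * |(q : ℝ)|) := by linarith
    have h2 : β * (ε * (b : ℝ) ^ n) ≤ 2 * (|(T : ℝ)| * |(T : ℝ)|) * (|(q : ℝ)| * |(c : ℝ)|) := by
      calc β * (ε * (b : ℝ) ^ n) ≤ β * (|(c : ℝ)| * (|(T : ℝ)| * |(c0 : ℝ)|)) := by gcongr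
        _ = |(c : ℝ)| * |(T : ℝ)| * (β * |(c0 : ℝ)|) := by ring
        _ ≤ |(c : ℝ)| * |(T : ℝ)| * (2 * (|(T : ℝ)| * |(q : ℝ)|)) := by gcongr
        _ = _ := by ring
    nlinarith

/-- underfolding -/
lemma underfold {b : ℕ} (hb : 2 ≤ b) {A : ℤ} {m s : ℕ} {ε : ℝ} (hA : (b : ℤ) ∣ A - 1)
    (hms : m ≤ s) (hAm : (b : ℤ) ^ m ∣ A - 1) (hε : 0 < ε) (hε2 : ε ≤ 1)
    (h : Gc b A (s + m) ε) (h' : Gc b (A - (b : ℤ) ^ s) (s + m) ε) :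
    Gc b (A * (b : ℤ) ^ s + 1) (s + m + s) (ε / b) := by
  intro q c hq hc hd
  obtain ⟨c0, hc0, hd0⟩ := step_alg hb hd
  have hb2 : (2 : ℝ) ≤ b := by exact_mod_cast hb
  have hb0 : (0 : ℝ) < b := by linarith
  have hq1 := one_le_abs_cast hq
  have hc1 := one_le_abs_cast hc
  by_cases hne : c0 = 0
  · subst hne
    have h1 : (b : ℤ) ^ (s + m) ∣ q := dvd_of_one_mod hA (by simpa using hd0)
    have h2 := abs_ge_of_dvd hq h1
    have h3 : c = q := by simpa using hc0
    subst h3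
    have h6 : (b : ℝ) ^ (s + m) * (b : ℝ) ^ (s + m) ≤ |(c : ℝ)| * |(c : ℝ)| := by gcongr
    have h7 : (b : ℝ) ^ (s + m + s) ≤ (b : ℝ) ^ (s + m) * (b : ℝ) ^ (s + m) := by
      rw [← pow_add]; apply pow_le_pow_right₀ (by linarith); omega
    have h9 : ε / (b : ℝ) ≤ 1 := by rw [div_le_one hb0]; linarith
    calc _ ≤ 1 * (b : ℝ) ^ (s + m + s) := by gcongr
      _ ≤ _ := by linarith
  have hc01 := one_le_abs_cast hne
  have hd1 : (b : ℤ) ^ (s + m) ∣ (A - (b : ℤ) ^ s) * c - c0 := by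
    have e1 : (b : ℤ) ^ m ∣ A * c0 - q := by
      have : A * c0 - q = (A - 1) * (c0 + q) - (A * q - c0) := by ring
      rw [this]
      exact dvd_sub (hAm.mul_right _) ((pow_dvd_pow _ (by omega)).trans hd0)
    have e2 : (A - (b : ℤ) ^ s) * c - c0 =
        (A * q - c0) + (b : ℤ) ^ s * (A * c0 - q) - (b : ℤ) ^ s * (b : ℤ) ^ s * c0 := by
      rw [hc0]; ring
    rw [e2]
    refine dvd_sub (dvd_add hd0 ?_) ?_
    · rw [pow_add]; exact mul_dvd_mul_left _ e1
    · rw [pow_add]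
      exact (mul_dvd_mul_left _ (pow_dvd_pow _ hms)).mul_right _
  have g1 := h q c0 hq hne hd0
  have g2 := h' c c0 hc hne hd1
  set β := (b : ℝ) ^ s with hβ
  have hβ0 : 0 < β := by positivity
  have k3 : β * |(c0 : ℝ)| ≤ |(q : ℝ)| + |(c : ℝ)| := by
    have : β * (c0 : ℝ) = c - q := by rw [hc0]; push_cast; ring
    calc β * |(c0 : ℝ)| = |β * (c0 : ℝ)| := by rw [abs_mul, abs_of_pos hβ0]
      _ = |(c : ℝ) - q| := by rw [this]
      _ ≤ _ := by refine (abs_sub _ _).trans ?_; linarith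
  rw [pow_add _ (s + m), ← hβ, div_mul_eq_mul_div, div_le_iff₀ (by positivity)]
  have pq : 0 ≤ |(q : ℝ)| * |(c : ℝ)| := by positivity
  rcases le_total |(q : ℝ)| |(c : ℝ)| with hl | hl
  · have : β * |(c0 : ℝ)| ≤ 2 * |(c : ℝ)| := by linarith
    have h2 : β * (ε * (b : ℝ) ^ (s + m)) ≤ 2 * (|(q : ℝ)| * |(c : ℝ)|) := by
      calc β * (ε * (b : ℝ) ^ (s + m)) ≤ β * (|(q : ℝ)| * |(c0 : ℝ)|) := by gcongr
        _ = |(q : ℝ)| * (β * |(c0 : ℝ)|) := by ring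
        _ ≤ |(q : ℝ)| * (2 * |(c : ℝ)|) := by gcongr
        _ = _ := by ring
    nlinarith
  · have : β * |(c0 : ℝ)| ≤ 2 * |(q : ℝ)| := by linarith
    have h2 : β * (ε * (b : ℝ) ^ (s + m)) ≤ 2 * (|(q : ℝ)| * |(c : ℝ)|) := by
      calc β * (ε * (b : ℝ) ^ (s + m)) ≤ β * (|(c : ℝ)| * |(c0 : ℝ)|) := by gcongr
        _ = |(c : ℝ)| * (β * |(c0 : ℝ)|) := by ring
        _ ≤ |(c : ℝ)| * (2 * |(q : ℝ)|) := by gcongr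
        _ = _ := by ring
    nlinarith


/-- finite `0/1` expansions whose last digit is `1` -/
inductive St (b : ℕ) : ℤ → ℕ → Prop
  | init : St b 1 1
  | app {A : ℤ} {n : ℕ} (k : ℕ) (hk : 1 ≤ k) (h : St b A n) : St b (A * (b : ℤ) ^ k + 1) (n + k)

lemma St.one_le {b : ℕ} {A : ℤ} {n : ℕ} (h : St b A n) : 1 ≤ n := by
  induction h with
  | init => exact le_rfl
  | app k hk h ih => omega

lemma St.dvd {b : ℕ} {A : ℤ} {n : ℕ} (h : St b A n) : (b : ℤ) ∣ A - 1 := by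
  induction h with
  | init => simp
  | app k hk h ih =>
    simp only [add_sub_cancel_right]
    exact (dvd_pow_self _ (by omega)).mul_left _

/-- cylinder extension -/
def Exn (b : ℕ) (A : ℤ) (n : ℕ) (A' : ℤ) (n' : ℕ) : Prop :=
  n ≤ n' ∧ (A : ℝ) / (b : ℝ) ^ n ≤ (A' : ℝ) / (b : ℝ) ^ n' ∧
    ((A' : ℝ) + 1) / (b : ℝ) ^ n' ≤ ((A : ℝ) + 1) / (b : ℝ) ^ n

/-- folded extension -/
def Fx (b : ℕ) (A : ℤ) (n : ℕ) (A' : ℤ) (n' : ℕ) : Prop :=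
  n ≤ n' ∧ (A : ℝ) / (b : ℝ) ^ n ≤ (A' : ℝ) / (b : ℝ) ^ n' ∧
    (A' : ℝ) / (b : ℝ) ^ n' + 1 / (b : ℝ) ^ (2 * n') ≤ (A : ℝ) / (b : ℝ) ^ n + 1 / (b : ℝ) ^ (2 * n)

lemma Fx.rfl' (b : ℕ) (A : ℤ) (n : ℕ) : Fx b A n A n := ⟨le_rfl, le_rfl, le_rfl⟩

lemma Fx.trans {b : ℕ} {A A' A'' : ℤ} {n n' n'' : ℕ} (h : Fx b A n A' n') (h' : Fx b A' n' A'' n'') :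
    Fx b A n A'' n'' := ⟨h.1.trans h'.1, h.2.1.trans h'.2.1, h'.2.2.trans h.2.2⟩

lemma Exn.trans {b : ℕ} {A A' A'' : ℤ} {n n' n'' : ℕ} (h : Exn b A n A' n')
    (h' : Exn b A' n' A'' n'') :
    Exn b A n A'' n'' := ⟨h.1.trans h'.1, h.2.1.trans h'.2.1, h'.2.2.trans h.2.2⟩

lemma Exn.rfl' (b : ℕ) (A : ℤ) (n : ℕ) : Exn b A n A n := ⟨le_rfl, le_rfl, le_rfl⟩

lemma Exn.app {b : ℕ} (hb : 2 ≤ b) (A : ℤ) (n k : ℕ) (hk : 1 ≤ k) :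
    Exn b A n (A * (b : ℤ) ^ k + 1) (n + k) := by
  have hb2 : (2 : ℝ) ≤ b := by exact_mod_cast hb
  have hB : (0 : ℝ) < (b : ℝ) ^ n := by positivity
  have hk2 : (2 : ℝ) ≤ (b : ℝ) ^ k := by
    calc (2 : ℝ) ≤ b := hb2
      _ = (b : ℝ) ^ 1 := by ring
      _ ≤ _ := pow_le_pow_right₀ (by linarith) hk
  refine ⟨by omega, ?_, ?_⟩
  · push_cast
    rw [div_le_div_iff₀ hB (by positivity), pow_add]
    nlinarith
  · push_cast
    rw [div_le_div_iff₀ (by positivity) hB, pow_add]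
    nlinarith

/-- value of a fold -/
lemma fold_val {b : ℕ} (hb : 2 ≤ b) (A : ℤ) (n e : ℕ) :
    ((A * (b : ℤ) ^ (n + e) + 1 : ℤ) : ℝ) / (b : ℝ) ^ (n + (n + e)) =
      (A : ℝ) / (b : ℝ) ^ n + 1 / (b : ℝ) ^ (2 * n + e) := by
  have hb2 : (2 : ℝ) ≤ b := by exact_mod_cast hb
  have hb0 : (b : ℝ) ≠ 0 := by positivity
  push_cast
  rw [two_mul, pow_add _ n (n + e), pow_add _ (n + n), pow_add _ n e, pow_add _ n n]
  field_simp

lemma Fx.of_fold {b : ℕ} (hb : 2 ≤ b) {A A' : ℤ} {n e n' : ℕ} (he : 4 ≤ e)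
    (h : Exn b (A * (b : ℤ) ^ (n + e) + 1) (n + (n + e)) A' n') : Fx b A n A' n' := by
  have hb2 : (2 : ℝ) ≤ b := by exact_mod_cast hb
  obtain ⟨h1, h2, h3⟩ := h
  have hv := fold_val hb A n e
  have hB : (0 : ℝ) < (b : ℝ) ^ (2 * n) := by positivity
  have h16 := b4 hb he
  have key : 1 / (b : ℝ) ^ (2 * n + e) ≤ 1 / (b : ℝ) ^ (2 * n) / 16 := by
    rw [pow_add, ← div_div]
    gcongr
  have key0 : (0 : ℝ) < 1 / (b : ℝ) ^ (2 * n + e) := by positivity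
  refine ⟨by omega, by linarith, ?_⟩
  have e1 : 1 / (b : ℝ) ^ (2 * n') ≤ 1 / (b : ℝ) ^ n' := by
    apply one_div_le_one_div_of_le (by positivity)
    exact pow_le_pow_right₀ (by linarith) (by omega)
  rw [add_div, add_div, hv] at h3
  have e2 : n + (n + e) = 2 * n + e := by ring
  rw [e2] at h3
  linarith

lemma Fx.fold {b : ℕ} (hb : 2 ≤ b) (A : ℤ) (n e : ℕ) (he : 4 ≤ e) :
    Fx b A n (A * (b : ℤ) ^ (n + e) + 1) (n + (n + e)) := Fx.of_fold hb he (Exn.rfl' _ _ _)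

lemma folds {b : ℕ} (hb : 2 ≤ b) {A : ℤ} {n : ℕ} {ε : ℝ} (hε : 0 < ε)
    (hε1 : ε * (b : ℝ) ^ 7 ≤ 1) (hs : St b A n) (h : Gd b ∅ A n ε) (J : ℕ) :
    ∀ D : ℕ, D / 2 ^ J = n + 4 → ∃ A' n', n' + 4 = D ∧ St b A' n' ∧ Gd b ∅ A' n' ε ∧ Fx b A n A' n' := by
  have hb2 : (2 : ℝ) ≤ b := by exact_mod_cast hb
  induction J with
  | zero =>
    intro D hD
    exact ⟨A, n, by simpa using hD.symm, hs, h, Fx.rfl' _ _ _⟩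
  | succ J ih =>
    intro D hD
    obtain ⟨A', n', h1, h2, h3, h4⟩ := ih (D / 2) (by rw [Nat.div_div_eq_div_mul, ← pow_succ', hD])
    have : ∃ e, 4 ≤ e ∧ e ≤ 5 ∧ n' + (n' + e) + 4 = D := ⟨D - 2 * n' - 4, by omega, by omega, by omega⟩
    obtain ⟨e, he, he5, hD'⟩ := this
    have hbe : (b : ℝ) ^ e ≤ (b : ℝ) ^ 5 := pow_le_pow_right₀ (by linarith) he5
    have h7 : (4 : ℝ) * (b : ℝ) ^ 5 ≤ (b : ℝ) ^ 7 := by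
      have : (0 : ℝ) < (b : ℝ) ^ 5 := by positivity
      have e7 : (b : ℝ) ^ 7 = (b : ℝ) ^ 5 * (b * b) := by ring
      rw [e7]; nlinarith [mul_self_nonneg ((b : ℝ) - 2), mul_le_mul_of_nonneg_left (by nlinarith : (4 : ℝ) ≤ b * b) this.le]
    have h16 : (16 : ℝ) ≤ (b : ℝ) ^ 7 := b4 hb (by norm_num)
    refine ⟨_, _, hD', St.app _ (by omega) h2, fold_full hb h2.dvd he hε ?_ ?_ h3,
      h4.trans (Fx.fold hb _ _ _ he)⟩
    · nlinarith
    · nlinarith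

lemma parfold {b : ℕ} (hb : 2 ≤ b) {A : ℤ} {m g : ℕ} {ε : ℝ} (hε : 0 < ε)
    (hε1 : ε * (b : ℝ) ^ 4 ≤ 1) (hg : 1 ≤ g) (hs : St b A (g + m)) (h : Gc b A (g + m) ε)
    (h' : Gc b (A - (b : ℤ) ^ g) (g + m) ε) (i : ℕ) :
    ∃ A' g', g' + m + 4 = 2 ^ (i + 1) * (g + m + 4) ∧ St b A' (g' + m) ∧
      Gc b A' (g' + m) (ε / (b : ℝ) ^ (3 * (i + 1))) ∧
      Gc b (A' - (b : ℤ) ^ g') (g' + m) (ε / (b : ℝ) ^ (3 * (i + 1))) ∧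
      (b : ℤ) ^ m ∣ A' - 1 ∧ Exn b A (g + m) A' (g' + m) := by
  have hb2 : (2 : ℝ) ≤ b := by exact_mod_cast hb
  -- single step
  have step : ∀ (A : ℤ) (g : ℕ) (ε : ℝ), 0 < ε → ε * (b : ℝ) ^ 4 ≤ 1 → 1 ≤ g →
      St b A (g + m) → Gc b A (g + m) ε →
      Gc b (A - (b : ℤ) ^ g) (g + m) ε →
      ∃ A' g', g' + m + 4 = 2 * (g + m + 4) ∧ St b A' (g' + m) ∧
      Gc b A' (g' + m) (ε / (b : ℝ) ^ 3) ∧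
      Gc b (A' - (b : ℤ) ^ g') (g' + m) (ε / (b : ℝ) ^ 3) ∧
      (b : ℤ) ^ m ∣ A' - 1 ∧ Exn b A (g + m) A' (g' + m) := by
    intro A g ε hε hε1 hg hs h h'
    have en : g + (g + m + 4) + m = g + m + (g + m + 4) := by ring
    have hone : |((1 : ℤ) : ℝ)| ≤ b := by norm_num; linarith
    refine ⟨A * (b : ℤ) ^ (g + m + 4) + 1, g + (g + m + 4), by ring, ?_, ?_, ?_, ?_, ?_⟩
    · rw [en]; exact St.app _ (by omega) hs
    · rw [en]; exact fold_crude hb hs.dvd (by norm_num) hone hε hε1 h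
    · have e2 : A * (b : ℤ) ^ (g + m + 4) + 1 - (b : ℤ) ^ (g + (g + m + 4)) =
          (A - (b : ℤ) ^ g) * (b : ℤ) ^ (g + m + 4) + 1 := by rw [pow_add _ g]; ring
      rw [en, e2]
      refine fold_crude hb ?_ (by norm_num) hone hε hε1 h'
      have : A - (b : ℤ) ^ g - 1 = (A - 1) - (b : ℤ) ^ g := by ring
      rw [this]; exact dvd_sub hs.dvd (dvd_pow_self _ (by omega))
    · rw [add_sub_cancel_right]
      exact (pow_dvd_pow _ (by omega)).mul_left _
    · rw [en]; exact Exn.app hb _ _ _ (by omega)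
  induction i with
  | zero => simpa using step A g ε hε hε1 hg hs h h'
  | succ i ih =>
    obtain ⟨A1, g1, a1, a2, a3, a4, a5, a6⟩ := ih
    have hle : ε / (b : ℝ) ^ (3 * (i + 1)) ≤ ε := div_le_self hε.le (one_le_pow₀ (by linarith))
    have hgg : g ≤ g1 := by
      have := a6.1; omega
    obtain ⟨A2, g2, b1, b2, b3, b4, b5, b6⟩ := step A1 g1 _ (by positivity)
      ((mul_le_mul_of_nonneg_right hle (by positivity)).trans hε1) (by omega) a2 a3 a4
    refine ⟨A2, g2, by rw [b1, a1]; ring, b2, ?_, ?_, b5, a6.trans b6⟩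
    · rw [div_div, ← pow_add] at b3; exact b3
    · rw [div_div, ← pow_add] at b4; exact b4

lemma opL {b : ℕ} (hb : 2 ≤ b) {A : ℤ} {n : ℕ} {ε : ℝ} (hε : 0 < ε)
    (hε1 : ε * (b : ℝ) ^ 4 ≤ 1) (hs : St b A n) (h : Gc b A n ε) (i : ℕ) :
    ∃ A' n', n' + 4 = (2 ^ (i + 3) - 2) * (n + 4) + 1 ∧ St b A' n' ∧
      Gc b A' n' (ε / (b : ℝ) ^ (3 * (i + 2) + 1)) ∧ Fx b A n A' n' := by
  have hb2 : (2 : ℝ) ≤ b := by exact_mod_cast hb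
  have hone : |((1 : ℤ) : ℝ)| ≤ b := by norm_num; linarith
  have f1 := fold_crude hb (T := 1) hs.dvd (by norm_num) hone hε hε1 h
  have f2 := fold_crude hb (T := 1 - b) hs.dvd (by omega)
    (by push_cast; rw [abs_le]; constructor <;> linarith) hε hε1 h
  have en : n + (n + 4) = 1 + (2 * n + 3) := by ring
  have e2 : A * (b : ℤ) ^ (n + 4) + (1 - b) = A * (b : ℤ) ^ (n + 4) + 1 - (b : ℤ) ^ 1 := by ring
  have s1 : St b (A * (b : ℤ) ^ (n + 4) + 1) (n + (n + 4)) := St.app _ (by omega) hs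
  rw [e2] at f2
  rw [en] at f1 f2 s1
  have hle : ε / (b : ℝ) ^ 3 ≤ ε := div_le_self hε.le (one_le_pow₀ (by linarith))
  obtain ⟨A', g', a1, a2, a3, a4, a5, a6⟩ := parfold hb (by positivity)
    ((mul_le_mul_of_nonneg_right hle (by positivity)).trans hε1) le_rfl s1 f1 f2 i
  have ee : ε / (b : ℝ) ^ 3 / (b : ℝ) ^ (3 * (i + 1)) / (b : ℝ) = ε / (b : ℝ) ^ (3 * (i + 2) + 1) := by
    rw [div_div, div_div]; congr 1; ring
  have hpow : 4 ≤ 2 ^ (i + 2) := by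
    calc 4 = 2 ^ 2 := by norm_num
      _ ≤ 2 ^ (i + 2) := Nat.pow_le_pow_right (by norm_num) (by omega)
  have a1' : g' + (2 * n + 3) + 4 = 2 ^ (i + 2) * (n + 4) * 1 := by
    rw [a1]; ring
  have hm4 : 4 * (n + 4) ≤ 2 ^ (i + 2) * (n + 4) := Nat.mul_le_mul_right _ hpow
  have u := underfold hb a2.dvd (by omega) a5 (by positivity) ?_ a3 a4
  · rw [ee] at u
    refine ⟨_, _, ?_, St.app g' (by omega) a2, u, ?_⟩
    · have : 2 ^ (i + 3) = 2 * 2 ^ (i + 2) := by ring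
      rw [this]
      have h3 : (2 * 2 ^ (i + 2) - 2) * (n + 4) + 2 * (n + 4) = 2 * (2 ^ (i + 2) * (n + 4)) := by
        rw [← add_mul, Nat.sub_add_cancel (by omega)]; ring
      omega
    · apply Fx.of_fold hb le_rfl
      rw [en]
      exact a6.trans (Exn.app hb _ _ _ (by omega))
  · have : (1 : ℝ) ≤ (b : ℝ) ^ 4 := one_le_pow₀ (by linarith)
    have h1 : ε ≤ 1 := by nlinarith
    have h3 : ε / (b : ℝ) ^ 3 / (b : ℝ) ^ (3 * (i + 1)) ≤ ε / (b : ℝ) ^ 3 :=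
      div_le_self (by positivity) (one_le_pow₀ (by linarith))
    linarith

lemma opIter {b : ℕ} (hb : 2 ≤ b) {A : ℤ} {n : ℕ} {ε : ℝ} (hε : 0 < ε)
    (hε1 : ε * (b : ℝ) ^ 4 ≤ 1) (hs : St b A n) (h : Gc b A n ε) (i y : ℕ) :
    ∃ A' n', n' + 4 = (fun x => (2 ^ (i + 3) - 2) * x + 1)^[y] (n + 4) ∧ St b A' n' ∧
      Gc b A' n' (ε / (b : ℝ) ^ ((3 * (i + 2) + 1) * y)) ∧ Fx b A n A' n' := by
  have hb2 : (2 : ℝ) ≤ b := by exact_mod_cast hb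
  induction y with
  | zero => exact ⟨A, n, rfl, hs, by simpa using h, Fx.rfl' _ _ _⟩
  | succ y ih =>
    obtain ⟨A1, n1, a1, a2, a3, a4⟩ := ih
    have hle : ε / (b : ℝ) ^ ((3 * (i + 2) + 1) * y) ≤ ε := div_le_self hε.le (one_le_pow₀ (by linarith))
    obtain ⟨A2, n2, b1, b2, b3, b4⟩ := opL hb (by positivity)
      ((mul_le_mul_of_nonneg_right hle (by positivity)).trans hε1) a2 a3 i
    refine ⟨A2, n2, ?_, b2, ?_, a4.trans b4⟩
    · rw [Function.iterate_succ_apply', ← a1, b1]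
    · rw [div_div, ← pow_add] at b3
      convert b3 using 3
      ring


lemma iter_form (α : ℕ) (hα : 2 ≤ α) (y : ℕ) : ∃ C : ℕ, C + 1 ≤ α ^ y ∧
    ∀ x, (fun x => α * x + 1)^[y] x = α ^ y * x + C := by
  induction y with
  | zero => exact ⟨0, by simp, by simp⟩
  | succ y ih =>
    obtain ⟨C, hC, h⟩ := ih
    refine ⟨α * C + 1, ?_, fun x => ?_⟩
    · rw [pow_succ']
      calc α * C + 1 + 1 ≤ α * (C + 1) := by rw [mul_add]; omega
        _ ≤ _ := Nat.mul_le_mul_left _ hC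
    · rw [Function.iterate_succ_apply', h]; ring

set_option maxHeartbeats 1000000 in
lemma hit_num (ν0 : ℕ) : ∃ i Yb τ : ℕ, ∀ J0 : ℕ, ∃ D0 : ℕ, ∀ D ≥ D0,
    ∃ J ≥ J0, ∃ ν y : ℕ, y ≤ Yb ∧ ν / 2 ^ J = ν0 ∧
      (fun x => (2 ^ (i + 3) - 2) * x + 1)^[y] ν ≤ D ∧
      D ≤ (fun x => (2 ^ (i + 3) - 2) * x + 1)^[y] ν + τ := by
  set α : ℕ := 2 ^ (ν0 + 3) - 2 with hαdef
  have hpow : 8 ≤ 2 ^ (ν0 + 3) := by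
    calc 8 = 2 ^ 3 := by norm_num
      _ ≤ 2 ^ (ν0 + 3) := Nat.pow_le_pow_right (by norm_num) (by omega)
  have hα2 : 6 ≤ α := by omega
  have hαR : (α : ℝ) = 2 ^ (ν0 + 3) - 2 := by
    rw [hαdef, Nat.cast_sub (by omega)]; push_cast; ring
  set P : ℝ := 2 ^ (ν0 + 3) with hP
  have hP8 : (8 : ℝ) ≤ P := by rw [hP]; exact_mod_cast hpow
  set H : ℝ := ν0 + 3 / 4 with hH
  have hH0 : 0 < H := by positivity
  have hPH : 4 * H ≤ P := by
    have : ν0 + 1 ≤ 2 ^ (ν0 + 1) := (Nat.lt_two_pow_self (n := ν0 + 1)).le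
    have h2 : ((ν0 : ℝ) + 1) ≤ 2 ^ (ν0 + 1) := by exact_mod_cast this
    have : P = 4 * 2 ^ (ν0 + 1) := by rw [hP]; ring
    rw [this, hH]; linarith
  -- ρ = 1 / θ
  set ρ : ℝ := P / α with hρ
  have hα0 : (0 : ℝ) < α := by rw [hαR]; linarith
  have hρ1 : 1 < ρ := by rw [hρ, one_lt_div hα0, hαR]; linarith
  obtain ⟨Yb, hYb⟩ := pow_unbounded_of_one_lt 2 hρ1
  refine ⟨ν0, Yb, α ^ Yb, fun J0 => ?_⟩
  refine ⟨(ν0 + 1) * 2 ^ (J0 + 3 + (ν0 + 3) * Yb + 1), fun D hD => ?_⟩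
  have hDR : H * 2 ^ (J0 + 3 + (ν0 + 3) * Yb + 1) ≤ (D : ℝ) := by
    have : (((ν0 + 1) * 2 ^ (J0 + 3 + (ν0 + 3) * Yb + 1) : ℕ) : ℝ) ≤ D := by exact_mod_cast hD
    push_cast at this
    refine le_trans ?_ this
    gcongr
    rw [hH]; linarith
  have hp1 : (1 : ℝ) ≤ 2 ^ (J0 + 3 + (ν0 + 3) * Yb + 1) := one_le_pow₀ (by norm_num)
  have hDH : H ≤ D := by nlinarith
  obtain ⟨K, hK1, hK2⟩ := exists_nat_pow_near (x := 2 * (D : ℝ) / H) (y := 2)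
    (by rw [le_div_iff₀ hH0]; linarith) (by norm_num)
  rw [le_div_iff₀ hH0] at hK1
  rw [div_lt_iff₀ hH0, pow_succ] at hK2
  have h2K : (0 : ℝ) < 2 ^ K := by positivity
  have hD0 : (0 : ℝ) < D := by linarith
  obtain ⟨y, hy1, hy2⟩ := exists_nat_pow_near (x := H * 2 ^ K / D) (y := ρ)
    (by rw [le_div_iff₀ hD0]; linarith) hρ1
  have hyY : y < Yb := by
    by_contra hcon
    push Not at hcon
    have h1 : ρ ^ Yb ≤ ρ ^ y := pow_le_pow_right₀ hρ1.le hcon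
    have h2 : H * 2 ^ K / D ≤ 2 := by rw [div_le_iff₀ hD0]; linarith
    linarith
  have hKbig : J0 + 3 + (ν0 + 3) * Yb < K + 1 := by
    have : (2 : ℝ) ^ (J0 + 3 + (ν0 + 3) * Yb + 1) < 2 ^ (K + 1) := by
      rw [pow_succ _ K]
      by_contra hcon
      push Not at hcon
      have := mul_le_mul_of_nonneg_left hcon hH0.le
      linarith
    have := (pow_lt_pow_iff_right₀ (by norm_num : (1 : ℝ) < 2)).mp this
    omega
  have hmul : (ν0 + 3) * y ≤ (ν0 + 3) * Yb := Nat.mul_le_mul_left _ hyY.le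
  obtain ⟨J, hJ⟩ : ∃ J, K = J + (ν0 + 3) * y := ⟨K - (ν0 + 3) * y, by omega⟩
  have hJJ : J0 + 3 ≤ J := by omega
  obtain ⟨C, hC, hform⟩ := iter_form α (by omega) y
  have hαy : 0 < α ^ y := by positivity
  -- bounds
  have hPy : (2 : ℝ) ^ K = 2 ^ J * P ^ y := by rw [hJ, pow_add, hP, pow_mul]
  have hup : (D : ℝ) ≤ H * (2 ^ J * α ^ y) := by
    rw [hρ, div_pow, hPy, div_le_div_iff₀ (by positivity) hD0] at hy1
    have hPp : 0 < P ^ y := by positivity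
    have : P ^ y * D ≤ P ^ y * (H * (2 ^ J * α ^ y)) := by linarith
    exact le_of_mul_le_mul_left this hPp
  have hlo : (H - 1 / 2) * (2 ^ J * α ^ y) ≤ (D : ℝ) := by
    rw [hρ, div_pow, hPy, div_lt_div_iff₀ hD0 (by positivity), pow_succ, pow_succ] at hy2
    have hPp : 0 < P ^ y := by positivity
    have h3 : P ^ y * (H * (2 ^ J * α ^ y) * α) < P ^ y * (P * D) := by linarith
    have h4 := lt_of_mul_lt_mul_left h3 hPp.le
    have hX : (0 : ℝ) < 2 ^ J * α ^ y := by positivity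
    have h5 : (H - 1 / 2) * P ≤ H * α := by rw [hαR]; nlinarith
    have h6 : P * ((H - 1 / 2) * (2 ^ J * α ^ y)) ≤ P * D := by
      nlinarith [mul_le_mul_of_nonneg_right h5 hX.le]
    exact le_of_mul_le_mul_left h6 (by linarith)
  have h2J : (8 : ℝ) ≤ 2 ^ J := by
    calc (8 : ℝ) = 2 ^ 3 := by norm_num
      _ ≤ 2 ^ J := pow_le_pow_right₀ (by norm_num) (by omega)
  have hX0 : (0 : ℝ) < α ^ y := by positivity
  have hCR : (C : ℝ) + 1 ≤ α ^ y := by exact_mod_cast hC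
  have hlo' : (ν0 : ℝ) * 2 ^ J * α ^ y + 2 * α ^ y ≤ D := by
    have : H - 1 / 2 = ν0 + 1 / 4 := by rw [hH]; ring
    rw [this] at hlo
    nlinarith
  have hCD : C ≤ D := by
    have : (C : ℝ) ≤ D := by
      have : (0 : ℝ) ≤ (ν0 : ℝ) * 2 ^ J * α ^ y := by positivity
      linarith
    exact_mod_cast this
  refine ⟨J, by omega, (D - C) / α ^ y, y, hyY.le, ?_, ?_, ?_⟩
  · have l1 : ν0 * 2 ^ J ≤ (D - C) / α ^ y := by
      rw [Nat.le_div_iff_mul_le hαy]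
      apply Nat.le_sub_of_add_le
      have : (ν0 : ℝ) * 2 ^ J * α ^ y + C ≤ D := by linarith
      exact_mod_cast this
    have l2 : (D - C) / α ^ y < (ν0 + 1) * 2 ^ J := by
      rw [Nat.div_lt_iff_lt_mul hαy]
      refine lt_of_le_of_lt (Nat.sub_le _ _) ?_
      have : (D : ℝ) < (ν0 + 1) * 2 ^ J * α ^ y := by
        have hX1 : (0 : ℝ) < 2 ^ J * α ^ y := by positivity
        calc (D : ℝ) ≤ H * (2 ^ J * α ^ y) := hup
          _ < (ν0 + 1) * (2 ^ J * α ^ y) := by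
            apply mul_lt_mul_of_pos_right _ hX1
            rw [hH]; linarith
          _ = _ := by ring
      exact_mod_cast this
    rw [Nat.div_eq_iff (by positivity)]
    constructor
    · rw [mul_comm] at l1 ⊢; linarith
    · have := l2
      rw [add_mul, one_mul] at this
      omega
  · rw [hform]
    have := Nat.mul_div_le (D - C) (α ^ y)
    omega
  · rw [hform]
    have h1 := Nat.lt_mul_div_succ (D - C) hαy
    rw [mul_add, mul_one] at h1
    have h2 : α ^ y ≤ α ^ Yb := Nat.pow_le_pow_right (by omega) hyY.le
    omega

lemma hitA {b : ℕ} (hb : 2 ≤ b) {A : ℤ} {n : ℕ} {ε : ℝ} (hε : 0 < ε)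
    (hε1 : ε * (b : ℝ) ^ 7 ≤ 1) (hs : St b A n) (h : Gd b ∅ A n ε) :
    ∃ ε1 : ℝ, 0 < ε1 ∧ ε1 * (b : ℝ) ^ 7 ≤ 1 ∧ ∃ τ : ℕ, ∀ M0 : ℕ, ∃ D0 : ℕ, ∀ d ≥ D0,
      ∃ (AJ : ℤ) (nJ : ℕ) (A2 : ℤ) (n2 : ℕ), M0 ≤ nJ ∧ St b AJ nJ ∧ Gd b ∅ AJ nJ ε ∧ Fx b A n AJ nJ ∧
        Fx b AJ nJ A2 n2 ∧ St b A2 n2 ∧ Gd b ∅ A2 n2 ε1 ∧ n2 ≤ d ∧ d ≤ n2 + τ := by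
  have hb2 : (2 : ℝ) ≤ b := by exact_mod_cast hb
  obtain ⟨i, Yb, τ, hh⟩ := hit_num (n + 4)
  have h1 : ε / (b : ℝ) ^ ((3 * (i + 2) + 1) * Yb) / 3 ≤ ε := by
    have : ε / (b : ℝ) ^ ((3 * (i + 2) + 1) * Yb) ≤ ε := div_le_self hε.le (one_le_pow₀ (by linarith))
    linarith
  refine ⟨ε / (b : ℝ) ^ ((3 * (i + 2) + 1) * Yb) / 3, by positivity,
    (mul_le_mul_of_nonneg_right h1 (by positivity)).trans hε1, τ, fun M0 => ?_⟩
  obtain ⟨D0, hD0⟩ := hh (M0 + 4)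
  refine ⟨D0, fun d hd => ?_⟩
  obtain ⟨J, hJ, ν, y, hy, hν, hl, hu⟩ := hD0 (d + 4) (by omega)
  obtain ⟨AJ, nJ, a1, a2, a3, a4⟩ := folds hb hε hε1 hs h J ν hν
  have h47 : ε * (b : ℝ) ^ 4 ≤ 1 := by
    refine le_trans ?_ hε1
    apply mul_le_mul_of_nonneg_left _ hε.le
    exact pow_le_pow_right₀ (by linarith) (by norm_num)
  obtain ⟨A2, n2, c1, c2, c3, c4⟩ := opIter hb hε h47 a2 (a3.toGc hε) i y
  rw [a1] at c1
  rw [← c1] at hl hu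
  have h17 : (1 : ℝ) ≤ (b : ℝ) ^ 7 := one_le_pow₀ (by linarith)
  have hε' : ε ≤ 1 := by nlinarith
  refine ⟨AJ, nJ, A2, n2, ?_, a2, a3, a4, c4, c2, (c3.toGd (by positivity) ?_).mono ?_, by omega, by omega⟩
  · have hp := Nat.lt_two_pow_self (n := J)
    have : 2 ^ J ≤ ν := by
      by_contra hcon
      push Not at hcon
      rw [Nat.div_eq_of_lt hcon] at hν
      omega
    omega
  · exact (div_le_self hε.le (one_le_pow₀ (by linarith))).trans hε'
  · apply div_le_div_of_nonneg_right _ (by norm_num)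
    apply div_le_div_of_nonneg_left hε.le (by positivity)
    apply pow_le_pow_right₀ (by linarith)
    exact Nat.mul_le_mul_left _ hy


def chN (m c0 : ℕ) : ℕ → ℕ
  | 0 => m
  | j + 1 => chN m c0 j + (chN m c0 j + c0)

def chA (b : ℕ) (a : ℤ) (m c0 : ℕ) : ℕ → ℤ
  | 0 => a
  | j + 1 => chA b a m c0 j * (b : ℤ) ^ (chN m c0 j + c0) + 1

lemma chN_val (m c0 j : ℕ) : chN m c0 j + c0 = 2 ^ j * (m + c0) := by
  induction j with
  | zero => simp [chN]
  | succ j ih => rw [chN, pow_succ]; linarith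

lemma chN_ge (m c0 j : ℕ) (hm : 1 ≤ m) : j < chN m c0 j := by
  induction j with
  | zero => simp [chN]; omega
  | succ j ih => rw [chN]; omega

lemma ch_St {b : ℕ} {a : ℤ} {m c0 : ℕ} (hc : 4 ≤ c0) (h : St b a m) (j : ℕ) :
    St b (chA b a m c0 j) (chN m c0 j) := by
  induction j with
  | zero => exact h
  | succ j ih => exact St.app _ (by omega) ih

lemma ch_Fx {b : ℕ} (hb : 2 ≤ b) (a : ℤ) (m : ℕ) {c0 : ℕ} (hc : 4 ≤ c0) (j : ℕ) :
    Fx b a m (chA b a m c0 j) (chN m c0 j) := by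
  induction j with
  | zero => exact Fx.rfl' _ _ _
  | succ j ih => exact ih.trans (Fx.fold hb _ _ _ hc)

lemma ch_Fx' {b : ℕ} (hb : 2 ≤ b) (a : ℤ) (m : ℕ) {c0 : ℕ} (hc : 4 ≤ c0) (i j : ℕ) :
    Fx b (chA b a m c0 i) (chN m c0 i) (chA b a m c0 (i + j)) (chN m c0 (i + j)) := by
  induction j with
  | zero => exact Fx.rfl' _ _ _
  | succ j ih => exact ih.trans (Fx.fold hb _ _ _ hc)

lemma ch_full {b : ℕ} (hb : 2 ≤ b) {a : ℤ} {m c0 : ℕ} {ε : ℝ} (hc : 4 ≤ c0) (h : St b a m)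
    (hε : 0 < ε) (hε1 : ε ≤ 1 / 16) (hε2 : 4 * ε * (b : ℝ) ^ c0 ≤ 1) (hG : Gd b ∅ a m ε) (j : ℕ) :
    Gd b ∅ (chA b a m c0 j) (chN m c0 j) ε := by
  induction j with
  | zero => exact hG
  | succ j ih => exact fold_full hb (ch_St hc h j).dvd hc hε hε1 hε2 ih

lemma ch_special {b : ℕ} (hb : 2 ≤ b) {a : ℤ} {m c0 k : ℕ} {ε : ℝ} (hc : 4 ≤ c0) (h : St b a m)
    (hk : k ≤ m)
    (hε : 0 < ε) (hε1 : ε ≤ 1 / 16) (hG : Gd b {q | (b : ℤ) ^ k ∣ q} a m ε) (j : ℕ) :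
    Gd b {q | (b : ℤ) ^ k ∣ q} (chA b a m c0 j) (chN m c0 j) ε := by
  induction j with
  | zero => exact hG
  | succ j ih =>
    exact fold_special hb (ch_St hc h j).dvd (hk.trans (ch_Fx hb a m hc j).1) hc hε hε1 ih

lemma ch_sum {b : ℕ} (hb : 2 ≤ b) (a : ℤ) (m c0 j : ℕ) :
    (chA b a m c0 j : ℝ) / (b : ℝ) ^ (chN m c0 j) =
      (a : ℝ) / (b : ℝ) ^ m + (b : ℝ) ^ c0 *
        ∑ i ∈ Finset.range j, 1 / (b : ℝ) ^ (2 ^ (i + 1) * (m + c0)) := by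
  have hb2 : (2 : ℝ) ≤ b := by exact_mod_cast hb
  have hb0 : (b : ℝ) ≠ 0 := by positivity
  induction j with
  | zero => simp [chA, chN]
  | succ j ih =>
    rw [Finset.sum_range_succ, mul_add, ← add_assoc, ← ih]
    rw [chA, chN, fold_val hb]
    congr 1
    have : 2 ^ (j + 1) * (m + c0) = 2 * chN m c0 j + c0 + c0 := by
      rw [pow_succ, mul_comm _ 2, mul_assoc, ← chN_val]; ring
    rw [this, pow_add _ _ c0]
    field_simp
    ring

noncomputable def fsum (b Λ : ℕ) : ℝ := ∑' i : ℕ, 1 / (b : ℝ) ^ (2 ^ i * Λ)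

lemma fsum_hasSum {b : ℕ} (hb : 2 ≤ b) {Λ : ℕ} (hΛ : 1 ≤ Λ) :
    HasSum (fun i : ℕ => 1 / (b : ℝ) ^ (2 ^ i * Λ)) (fsum b Λ) := by
  have hb2 : (2 : ℝ) ≤ b := by exact_mod_cast hb
  apply Summable.hasSum
  apply Summable.of_nonneg_of_le (fun i => by positivity) (f := fun i : ℕ => (1 / 2 : ℝ) ^ i) _
    (summable_geometric_of_lt_one (by norm_num) (by norm_num))
  intro i
  rw [one_div_pow]
  apply one_div_le_one_div_of_le (by positivity)
  calc (2 : ℝ) ^ i ≤ (b : ℝ) ^ i := by gcongr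
    _ ≤ _ := by
      apply pow_le_pow_right₀ (by linarith)
      have := Nat.lt_two_pow_self (n := i)
      nlinarith

/-- the event chain attached to the state `(A, n)` -/
lemma ch_tendsto {b : ℕ} (hb : 2 ≤ b) (A : ℤ) (n e c0 : ℕ) (he : 1 ≤ e) :
    Tendsto (fun j => (chA b (A * (b : ℤ) ^ (n + e) + 1) (n + (n + e)) c0 j : ℝ) /
      (b : ℝ) ^ (chN (n + (n + e)) c0 j)) atTop
      (nhds ((A : ℝ) / (b : ℝ) ^ n + (b : ℝ) ^ c0 * fsum b (2 * n + e + c0))) := by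
  have hb2 : (2 : ℝ) ≤ b := by exact_mod_cast hb
  have hb0 : (b : ℝ) ≠ 0 := by positivity
  have h := ((fsum_hasSum hb (Λ := 2 * n + e + c0) (by omega)).tendsto_sum_nat.comp
    (tendsto_add_atTop_nat 1)).const_mul ((b : ℝ) ^ c0) |>.const_add ((A : ℝ) / (b : ℝ) ^ n)
  refine h.congr (fun j => ?_)
  rw [ch_sum hb, fold_val hb, Function.comp, Finset.sum_range_succ', mul_add]
  have e1 : n + (n + e) + c0 = 2 * n + e + c0 := by ring
  rw [e1]
  have e2 : (b : ℝ) ^ c0 * (1 / (b : ℝ) ^ (2 ^ 0 * (2 * n + e + c0))) = 1 / (b : ℝ) ^ (2 * n + e) := by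
    rw [pow_zero, one_mul, pow_add _ (2 * n + e) c0]
    field_simp
  rw [e2]
  ring

/-- goodness in the limit -/
lemma limit_good {b : ℕ} (hb : 2 ≤ b) {S : Set ℤ} {a : ℤ} {m c0 : ℕ} {ε ξ : ℝ} (hε : 0 < ε)
    (hG : ∀ j, Gd b S (chA b a m c0 j) (chN m c0 j) ε)
    (hlim : Tendsto (fun j => (chA b a m c0 j : ℝ) / (b : ℝ) ^ (chN m c0 j)) atTop (nhds ξ))
    (Q P : ℤ) (hQ : Q ≠ 0) (hQS : Q ∉ S) : ε ≤ |(Q : ℝ)| * |(Q : ℝ) * ξ - P| := by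
  have hb2 : (2 : ℝ) ≤ b := by exact_mod_cast hb
  by_contra hcon
  push Not at hcon
  have hl : Tendsto (fun j => |(Q : ℝ)| * |(Q : ℝ) * ((chA b a m c0 j : ℝ) / (b : ℝ) ^ (chN m c0 j)) - P|)
      atTop (nhds (|(Q : ℝ)| * |(Q : ℝ) * ξ - P|)) :=
    ((hlim.const_mul _).sub_const _).abs.const_mul _
  obtain ⟨j0, hj0⟩ := eventually_atTop.mp (hl.eventually (gt_mem_nhds hcon))
  -- nonzero numerators give a contradiction
  have key : ∀ j ≥ j0, chA b a m c0 j * Q - P * (b : ℤ) ^ chN m c0 j = 0 := by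
    intro j hj
    by_contra hne
    have h1 := hG j Q _ hQ hne ⟨P, by ring⟩ hQS
    have h2 := hj0 j hj
    set B := (b : ℝ) ^ chN m c0 j with hB
    have hB0 : 0 < B := by positivity
    have h3 : (Q : ℝ) * ((chA b a m c0 j : ℝ) / B) - P =
        ((chA b a m c0 j * Q - P * (b : ℤ) ^ chN m c0 j : ℤ) : ℝ) / B := by
      push_cast; rw [← hB]; field_simp
    rw [h3, abs_div, abs_of_pos hB0, ← mul_div_assoc, div_lt_iff₀ hB0] at h2
    have h4 : ε * B ≤ ε * (B + |(Q : ℝ)| / |((chA b a m c0 j * Q - P * (b : ℤ) ^ chN m c0 j : ℤ) : ℝ)| +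
        |((chA b a m c0 j * Q - P * (b : ℤ) ^ chN m c0 j : ℤ) : ℝ)| / |(Q : ℝ)|) := by
      apply mul_le_mul_of_nonneg_left _ hε.le
      rw [add_assoc]
      exact le_add_of_nonneg_right (by positivity)
    linarith
  have k1 := key j0 le_rfl
  have k2 := key (j0 + 1) (by omega)
  apply hQ
  rw [chA, chN, pow_add] at k2
  linear_combination k2 - (b : ℤ) ^ (chN m c0 j0 + c0) * k1

noncomputable def ze (b u t : ℕ) (ξ : ℝ) : ℝ := (u : ℝ) / ((b : ℝ) - 1) + t * ξ

lemma ze_conv {b : ℕ} (hb : 2 ≤ b) (u t q : ℕ) (p : ℤ) (ξ : ℝ) :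
    ((((b : ℤ) - 1) * t * q : ℤ) : ℝ) * ξ - (((b : ℤ) - 1) * p - u * q : ℤ) =
      ((b : ℝ) - 1) * ((q : ℝ) * ze b u t ξ - p) := by
  have hb2 : (2 : ℝ) ≤ b := by exact_mod_cast hb
  have : (b : ℝ) - 1 ≠ 0 := by linarith
  rw [ze]; push_cast
  field_simp
  ring

lemma conv_le {b : ℕ} (hb : 2 ≤ b) {u t q : ℕ} (ht : t < b) (p : ℤ) (ξ : ℝ) :
    |((((b : ℤ) - 1) * t * q : ℤ) : ℝ)| *
      |((((b : ℤ) - 1) * t * q : ℤ) : ℝ) * ξ - (((b : ℤ) - 1) * p - u * q : ℤ)| ≤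
      (b : ℝ) ^ 3 * (q * |(q : ℝ) * ze b u t ξ - p|) := by
  have hb2 : (2 : ℝ) ≤ b := by exact_mod_cast hb
  have ht' : (t : ℝ) ≤ b := by exact_mod_cast ht.le
  rw [ze_conv hb, abs_mul, abs_of_pos (by linarith : (0 : ℝ) < (b : ℝ) - 1)]
  push_cast
  rw [abs_of_nonneg (by have : (0 : ℝ) ≤ (b : ℝ) - 1 := by linarith
                        positivity)]
  have h1 : ((b : ℝ) - 1) * t * ((b : ℝ) - 1) ≤ (b : ℝ) ^ 3 := by
    have : ((b : ℝ) - 1) * t ≤ b * b := mul_le_mul (by linarith) ht' (by positivity) (by positivity)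
    calc _ ≤ (b * b : ℝ) * b := mul_le_mul this (by linarith) (by linarith) (by positivity)
      _ = _ := by ring
  calc _ = (((b : ℝ) - 1) * t * ((b : ℝ) - 1)) * (q * |(q : ℝ) * ze b u t ξ - p|) := by ring
    _ ≤ _ := by gcongr

lemma Qne {b : ℕ} (hb : 2 ≤ b) {t q : ℕ} (ht : 1 ≤ t) (hq : 1 ≤ q) :
    (((b : ℤ) - 1) * t * q : ℤ) ≠ 0 := by
  have h1 : (b : ℤ) - 1 ≠ 0 := by omega
  have h2 : (t : ℤ) ≠ 0 := by omega
  have h3 : (q : ℤ) ≠ 0 := by omega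
  exact mul_ne_zero (mul_ne_zero h1 h2) h3

lemma Qle {b : ℕ} (hb : 2 ≤ b) {t q : ℕ} (ht : t < b) :
    |((((b : ℤ) - 1) * t * q : ℤ) : ℝ)| ≤ (b : ℝ) ^ 2 * q := by
  have hb2 : (2 : ℝ) ≤ b := by exact_mod_cast hb
  have ht' : (t : ℝ) ≤ b := by exact_mod_cast ht.le
  push_cast
  rw [abs_of_nonneg (by have : (0 : ℝ) ≤ (b : ℝ) - 1 := by linarith
                        positivity), sq]
  have : ((b : ℝ) - 1) * t ≤ b * b := mul_le_mul (by linarith) ht' (by positivity) (by positivity)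
  gcongr

/-- tier one : finite goodness -/
lemma finite_good {b : ℕ} (hb : 2 ≤ b) {A : ℤ} {n : ℕ} {ε ξ : ℝ} (hA : (b : ℤ) ∣ A - 1) (hε : 0 < ε)
    (hε1 : ε ≤ 1 / 2) (hG : Gd b ∅ A n ε) (h1 : (A : ℝ) / (b : ℝ) ^ n ≤ ξ)
    (h2 : ξ ≤ (A : ℝ) / (b : ℝ) ^ n + 1 / (b : ℝ) ^ (2 * n)) (Q P : ℤ) (hQ : Q ≠ 0)
    (hQl : |(Q : ℝ)| ≤ ε * (b : ℝ) ^ n) : ε / 2 ≤ |(Q : ℝ)| * |(Q : ℝ) * ξ - P| := by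
  have hb2 : (2 : ℝ) ≤ b := by exact_mod_cast hb
  set B := (b : ℝ) ^ n with hB
  have hB0 : 0 < B := by positivity
  have hne : A * Q - P * (b : ℤ) ^ n ≠ 0 := by
    intro h0
    have : (b : ℤ) ^ n ∣ Q := dvd_of_one_mod hA ⟨P, by linarith⟩
    have := abs_ge_of_dvd hQ this
    rw [← hB] at this
    nlinarith
  have hg := hG Q _ hQ hne ⟨P, by ring⟩ (by simp)
  rw [← hB] at hg
  set c : ℝ := ((A * Q - P * (b : ℤ) ^ n : ℤ) : ℝ) with hc
  have h4 : ε * B ≤ |(Q : ℝ)| * |c| := by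
    refine le_trans ?_ hg
    apply mul_le_mul_of_nonneg_left _ hε.le
    rw [add_assoc]
    exact le_add_of_nonneg_right (by positivity)
  have h5 : (Q : ℝ) * ξ - P = c / B + Q * (ξ - A / B) := by
    rw [hc]; push_cast; rw [← hB]; field_simp; ring
  have h6 : |ξ - A / B| ≤ 1 / B ^ 2 := by
    rw [abs_of_nonneg (by linarith), hB, ← pow_mul, mul_comm n 2]; linarith
  have h7 : |c| / B - |(Q : ℝ)| * (1 / B ^ 2) ≤ |(Q : ℝ) * ξ - P| := by
    rw [h5]
    have : |c / B| ≤ |c / B + Q * (ξ - A / B)| + |Q * (ξ - A / B)| := by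
      have := abs_sub (c / B + Q * (ξ - A / B)) (Q * (ξ - A / B))
      simpa using this
    rw [abs_div, abs_of_pos hB0, abs_mul (Q : ℝ)] at this
    have h8 : |(Q : ℝ)| * |ξ - A / B| ≤ |(Q : ℝ)| * (1 / B ^ 2) := by gcongr
    linarith
  have h9 : |(Q : ℝ)| * (|c| / B - |(Q : ℝ)| * (1 / B ^ 2)) ≤ |(Q : ℝ)| * |(Q : ℝ) * ξ - P| := by
    gcongr
  refine le_trans ?_ h9
  have h10 : ε ≤ |(Q : ℝ)| * (|c| / B) := by
    rw [← mul_div_assoc, le_div_iff₀ hB0]; exact h4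
  have h11 : |(Q : ℝ)| * (|(Q : ℝ)| * (1 / B ^ 2)) ≤ ε * ε := by
    have : |(Q : ℝ)| * (|(Q : ℝ)| * (1 / B ^ 2)) = (|(Q : ℝ)| * |(Q : ℝ)|) / B ^ 2 := by ring
    rw [this, div_le_iff₀ (by positivity)]
    calc _ ≤ (ε * B) * (ε * B) := by gcongr
      _ = _ := by ring
  rw [mul_sub]
  nlinarith


/-- the point of the event family -/
noncomputable def evx (b : ℕ) (A : ℤ) (n S e : ℕ) : ℝ :=
  (A : ℝ) / (b : ℝ) ^ n + (b : ℝ) ^ (S - e) * fsum b (2 * n + S)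

lemma evx_tendsto {b : ℕ} (hb : 2 ≤ b) (A : ℤ) (n S e : ℕ) (he : 1 ≤ e) (heS : e ≤ S) :
    Tendsto (fun j => (chA b (A * (b : ℤ) ^ (n + e) + 1) (n + (n + e)) (S - e) j : ℝ) /
      (b : ℝ) ^ (chN (n + (n + e)) (S - e) j)) atTop (nhds (evx b A n S e)) := by
  have := ch_tendsto hb A n e (S - e) he
  rw [show 2 * n + e + (S - e) = 2 * n + S by omega] at this
  exact this

lemma evx_ge {b : ℕ} (A : ℤ) (n S e : ℕ) : (A : ℝ) / (b : ℝ) ^ n ≤ evx b A n S e := by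
  have : 0 ≤ fsum b (2 * n + S) := tsum_nonneg (fun i => by positivity)
  have : 0 ≤ (b : ℝ) ^ (S - e) * fsum b (2 * n + S) := by positivity
  rw [evx]; linarith

lemma evx_le {b : ℕ} (hb : 2 ≤ b) (A : ℤ) (n S e : ℕ) (he : 1 ≤ e) (heS : e + 4 ≤ S) :
    evx b A n S e ≤ (A : ℝ) / (b : ℝ) ^ n + 2 / (b : ℝ) ^ (2 * n + e) := by
  have hb2 : (2 : ℝ) ≤ b := by exact_mod_cast hb
  refine le_of_tendsto' (evx_tendsto hb A n S e he (by omega)) (fun j => ?_)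
  have h := (ch_Fx hb (A * (b : ℤ) ^ (n + e) + 1) (n + (n + e)) (c0 := S - e) (by omega) j).2.2
  rw [fold_val hb] at h
  have h1 : (0 : ℝ) < 1 / (b : ℝ) ^ (2 * chN (n + (n + e)) (S - e) j) := by positivity
  have h2 : 1 / (b : ℝ) ^ (2 * (n + (n + e))) ≤ 1 / (b : ℝ) ^ (2 * n + e) := by
    apply one_div_le_one_div_of_le (by positivity)
    exact pow_le_pow_right₀ (by linarith) (by omega)
  have h3 : 2 / (b : ℝ) ^ (2 * n + e) = 1 / (b : ℝ) ^ (2 * n + e) + 1 / (b : ℝ) ^ (2 * n + e) := by ring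
  linarith

lemma evx_le' {b : ℕ} (hb : 2 ≤ b) (A : ℤ) (n S e : ℕ) (he : 4 ≤ e) (heS : e + 4 ≤ S) :
    evx b A n S e ≤ (A : ℝ) / (b : ℝ) ^ n + 1 / (b : ℝ) ^ (2 * n) := by
  have hb2 : (2 : ℝ) ≤ b := by exact_mod_cast hb
  refine (evx_le hb A n S e (by omega) heS).trans ?_
  have h16 := b4 hb he
  have : 2 / (b : ℝ) ^ (2 * n + e) ≤ 1 / (b : ℝ) ^ (2 * n) := by
    rw [pow_add, div_le_div_iff₀ (by positivity) (by positivity)]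
    have : (0 : ℝ) < (b : ℝ) ^ (2 * n) := by positivity
    nlinarith
  linarith

lemma evx_succ {b : ℕ} (A : ℤ) (n S e : ℕ) (heS : e + 1 ≤ S) :
    evx b A n S e - (A : ℝ) / (b : ℝ) ^ n = b * (evx b A n S (e + 1) - (A : ℝ) / (b : ℝ) ^ n) := by
  rw [evx, evx, show S - e = (S - (e + 1)) + 1 by omega, pow_succ]
  ring

/-- special vectors are shifted -/
lemma shift_special {b : ℕ} (hb : 2 ≤ b) {A : ℤ} {n S e u t q : ℕ} (heS : e + 1 ≤ S)
    (hsp : (b : ℤ) ^ n ∣ ((b : ℤ) - 1) * t * q) (p : ℤ) :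
    ∃ p' : ℤ, |(q : ℝ) * ze b u t (evx b A n S e) - p'| =
      b * |(q : ℝ) * ze b u t (evx b A n S (e + 1)) - p| := by
  have hb2 : (2 : ℝ) ≤ b := by exact_mod_cast hb
  obtain ⟨R, hR⟩ := hsp
  have hR' : ((b : ℝ) - 1) * t * q = (b : ℝ) ^ n * R := by exact_mod_cast hR
  refine ⟨b * p - (u * q + R * A), ?_⟩
  have hb0 : (0 : ℝ) < b := by linarith
  have hb1 : (b : ℝ) - 1 ≠ 0 := by linarith
  rw [← abs_of_pos hb0, ← abs_mul]
  congr 1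
  have h1 := evx_succ (b := b) A n S e heS
  set x := evx b A n S e
  set x1 := evx b A n S (e + 1)
  have hx : x = b * x1 - (b - 1) * (A / (b : ℝ) ^ n) := by linarith
  rw [ze, ze, hx]
  push_cast
  have h2 : (R : ℝ) * A = ((b : ℝ) - 1) * t * q * (A / (b : ℝ) ^ n) := by
    rw [hR']; field_simp
  rw [h2]
  field_simp
  ring

/-- non special goodness on the event family -/
lemma ev_nonspecial {b : ℕ} (hb : 2 ≤ b) {A : ℤ} {n S e u t q : ℕ} {ε : ℝ} (hs : St b A n)
    (ht1 : 1 ≤ t) (ht : t < b) (hε : 0 < ε) (hε1 : ε ≤ 1 / 16) (hG : Gd b ∅ A n ε)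
    (he : 4 ≤ e) (heS : e + 4 ≤ S) (hq : 1 ≤ q) (hsp : ¬ (b : ℤ) ^ n ∣ ((b : ℤ) - 1) * t * q) (p : ℤ) :
    ε ≤ (b : ℝ) ^ 3 * (q * |(q : ℝ) * ze b u t (evx b A n S e) - p|) := by
  refine le_trans ?_ (conv_le hb ht p _)
  have hG' : Gd b {q | (b : ℤ) ^ n ∣ q} A n ε := fun q c h1 h2 h3 _ => hG q c h1 h2 h3 (by simp)
  exact limit_good hb hε (ch_special hb (by omega) (St.app _ (by omega) hs) (by omega : n ≤ n + (n + e)) hε hε1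
    (fold_special hb hs.dvd le_rfl he hε hε1 hG')) (evx_tendsto hb A n S e (by omega) (by omega))
    _ _ (Qne hb ht1 hq) hsp

lemma ev_fullGd {b : ℕ} (hb : 2 ≤ b) {A : ℤ} {n S e : ℕ} {ε : ℝ} (hs : St b A n)
    (hε : 0 < ε) (hε1 : ε ≤ 1 / 16) (hG : Gd b ∅ A n ε)
    (he : 4 ≤ e) (heS : e + 4 ≤ S) (h1 : 4 * ε * (b : ℝ) ^ e ≤ 1) (h2 : 4 * ε * (b : ℝ) ^ (S - e) ≤ 1)
    (j : ℕ) :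
    Gd b ∅ (chA b (A * (b : ℤ) ^ (n + e) + 1) (n + (n + e)) (S - e) j) (chN (n + (n + e)) (S - e) j) ε :=
  ch_full hb (by omega) (St.app _ (by omega) hs) hε hε1 h2 (fold_full hb hs.dvd he hε hε1 h1 hG) j

lemma ev_full {b : ℕ} (hb : 2 ≤ b) {A : ℤ} {n S e u t q : ℕ} {ε : ℝ} (hs : St b A n)
    (ht1 : 1 ≤ t) (ht : t < b) (hε : 0 < ε) (hε1 : ε ≤ 1 / 16) (hG : Gd b ∅ A n ε)
    (he : 4 ≤ e) (heS : e + 4 ≤ S) (h1 : 4 * ε * (b : ℝ) ^ e ≤ 1) (h2 : 4 * ε * (b : ℝ) ^ (S - e) ≤ 1)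
    (hq : 1 ≤ q) (p : ℤ) :
    ε ≤ (b : ℝ) ^ 3 * (q * |(q : ℝ) * ze b u t (evx b A n S e) - p|) := by
  refine le_trans ?_ (conv_le hb ht p _)
  exact limit_good hb hε (ev_fullGd hb hs hε hε1 hG he heS h1 h2)
    (evx_tendsto hb A n S e (by omega) (by omega)) _ _ (Qne hb ht1 hq) (by simp)

set_option maxHeartbeats 2000000 in
/-- the main event lemma -/
lemma event {b : ℕ} (hb : 2 ≤ b) {A : ℤ} {n u t : ℕ} {ε : ℝ} (hs : St b A n)
    (ht1 : 1 ≤ t) (ht : t < b) (hε : 0 < ε) (hε1 : ε ≤ 1 / 16) (hG : Gd b ∅ A n ε)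
    (Φ : ℕ → ℝ) (hΦ : ∀ q, 0 < Φ q) (Y Z κ : ℕ) (hY : 1 ≤ Y) (hYn : b ^ 2 * Y ≤ b ^ n)
    (H1 : ∀ ξ : ℝ, (A : ℝ) / (b : ℝ) ^ n ≤ ξ → ξ ≤ (A : ℝ) / (b : ℝ) ^ n + 1 / (b : ℝ) ^ (2 * n) →
      ∀ q : ℕ, Y ≤ q → q < Z → ∀ p : ℤ, Φ q < |(q : ℝ) * ze b u t ξ - p|)
    (H2 : ∀ q : ℕ, Z ≤ q → (b : ℝ) ^ 3 * (q * Φ q) < ε)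
    (H3 : ∀ q0 q : ℕ, b ^ n ≤ b ^ 2 * q0 → q0 ≤ b ^ (n + 1) → q0 ≤ q →
      q * Φ q ≤ (b : ℝ) ^ κ * (q0 * Φ q0))
    (H4 : ∀ q : ℕ, b ^ n ≤ b ^ 2 * q → (b : ℝ) ^ (2 * κ + 21) * (q * Φ q) ≤ 1)
    (H5 : ∀ q : ℕ, Y ≤ q → 2 * b * Φ q < 1) :
    ∃ S e : ℕ, 4 ≤ e ∧ e + 4 ≤ S ∧
      (∀ q : ℕ, Y ≤ q → ∀ p : ℤ, Φ q / b < |(q : ℝ) * ze b u t (evx b A n S e) - p|) ∧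
      (∃ q : ℕ, Y ≤ q ∧ ∃ p : ℤ, |(q : ℝ) * ze b u t (evx b A n S e) - p| ≤ Φ q) := by
  have hb2 : (2 : ℝ) ≤ b := by exact_mod_cast hb
  have hb0 : (0 : ℝ) < b := by linarith
  have hb1 : (0 : ℝ) < (b : ℝ) - 1 := by linarith
  have hn := hs.one_le
  set r : ℝ := ze b u t ((A : ℝ) / (b : ℝ) ^ n) with hr
  have hrI : ∀ q : ℕ, (b : ℤ) ^ n ∣ ((b : ℤ) - 1) * t * q → ∃ M : ℤ, ((b : ℝ) - 1) * (q * r) = M := by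
    rintro q ⟨R, hR⟩
    have hR' : ((b : ℝ) - 1) * t * q = (b : ℝ) ^ n * R := by exact_mod_cast hR
    refine ⟨u * q + R * A, ?_⟩
    push_cast
    have h2 : (R : ℝ) * A = ((b : ℝ) - 1) * t * q * (A / (b : ℝ) ^ n) := by
      rw [hR']; field_simp
    rw [h2, hr, ze]
    field_simp
  -- least denominator
  have hex : ∃ q : ℕ, 1 ≤ q ∧ ∃ p : ℤ, (q : ℝ) * r = p := by
    refine ⟨(b - 1) * b ^ n, ?_, u * b ^ n + (b - 1) * t * A, ?_⟩
    · exact Nat.mul_pos (by omega) (by positivity)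
    · push_cast
      rw [Nat.cast_sub (by omega), hr, ze]
      push_cast
      field_simp
  classical
  obtain ⟨hq1, p0, hp0⟩ := Nat.find_spec hex
  have hmin := fun m => Nat.find_min hex (m := m)
  have hqle : Nat.find hex ≤ (b - 1) * b ^ n := by
    apply Nat.find_min'
    refine ⟨?_, u * b ^ n + (b - 1) * t * A, ?_⟩
    · exact Nat.mul_pos (by omega) (by positivity)
    · push_cast
      rw [Nat.cast_sub (by omega), hr, ze]
      push_cast
      field_simp
  set q0 := Nat.find hex with hq0
  have hq0R : (q0 : ℝ) ≤ ((b : ℝ) - 1) * (b : ℝ) ^ n := by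
    have : ((q0 : ℕ) : ℝ) ≤ (((b - 1) * b ^ n : ℕ) : ℝ) := by exact_mod_cast hqle
    push_cast at this
    rwa [Nat.cast_sub (by omega), Nat.cast_one] at this
  have hq0b : q0 ≤ b ^ (n + 1) := by
    refine hqle.trans ?_
    rw [pow_succ, mul_comm]
    exact Nat.mul_le_mul_left _ (by omega)
  have hq0lo : b ^ n ≤ b ^ 2 * q0 := by
    have h1 : (b : ℤ) ^ n ∣ ((b : ℤ) - 1) * t * q0 := by
      apply dvd_of_one_mod hs.dvd
      refine ⟨(b - 1) * p0 - u * q0, ?_⟩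
      have h2 := ze_conv hb u t q0 p0 ((A : ℝ) / (b : ℝ) ^ n)
      rw [← hr, hp0, sub_self, mul_zero] at h2
      have h3 : (((A * (((b : ℤ) - 1) * t * q0) : ℤ)) : ℝ) =
          (((b : ℤ) ^ n * (((b : ℤ) - 1) * p0 - u * q0) : ℤ) : ℝ) := by
        have h4 : ((((b : ℤ) - 1) * t * q0 : ℤ) : ℝ) * ((A : ℝ) / (b : ℝ) ^ n) =
          (((b : ℤ) - 1) * p0 - u * q0 : ℤ) := by linarith
        rw [mul_div_assoc', div_eq_iff (by positivity)] at h4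
        push_cast at h4 ⊢
        linarith
      exact_mod_cast h3
    have h2 := abs_ge_of_dvd (Qne hb ht1 hq1) h1
    have h3 := h2.trans (Qle hb ht)
    exact_mod_cast h3
  have hYq0 : Y ≤ q0 := by
    have h := hYn.trans hq0lo
    exact Nat.le_of_mul_le_mul_left h (by positivity)
  set G : ℝ := q0 * Φ q0 with hGdef
  have hG0 : 0 < G := mul_pos (by exact_mod_cast hq1) (hΦ _)
  have hG4 := H4 q0 hq0lo
  rw [← hGdef] at hG4
  -- choice of e_lo
  set K : ℝ := (b : ℝ) ^ κ * G with hK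
  have hK0 : 0 < K := by positivity
  have hKs : (b : ℝ) ^ (κ + 21) * K ≤ 1 := by
    rw [hK, ← mul_assoc, ← pow_add]
    convert hG4 using 3
    ring
  have hK1 : (b : ℝ) ^ (κ + 21) ≤ 1 / K := by rw [le_div_iff₀ hK0]; exact hKs
  obtain ⟨m, hm1, hm2⟩ := exists_nat_pow_near (x := 1 / K) (y := (b : ℝ))
    ((one_le_pow₀ (by linarith)).trans hK1) (by linarith)
  have hmk : κ + 21 ≤ m := by
    have := (pow_lt_pow_iff_right₀ (by linarith : (1 : ℝ) < b)).mp (hK1.trans_lt hm2)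
    omega
  rw [le_div_iff₀ hK0] at hm1
  rw [div_lt_iff₀ hK0] at hm2
  obtain ⟨el, rfl⟩ : ∃ el, m = el + 6 := ⟨m - 6, by omega⟩
  set S := el + (κ + 11) + 4 with hS
  -- the predicate
  set NT : ℕ → Prop := fun e => ∀ q : ℕ, Y ≤ q → ∀ p : ℤ,
    Φ q < |(q : ℝ) * ze b u t (evx b A n S e) - p| with hNT
  have tier : ∀ e, 4 ≤ e → e + 4 ≤ S → ∀ q : ℕ, Y ≤ q → (q < Z ∨ ¬ (b : ℤ) ^ n ∣ ((b : ℤ) - 1) * t * q) →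
      ∀ p : ℤ, Φ q < |(q : ℝ) * ze b u t (evx b A n S e) - p| := by
    intro e he heS q hq hor p
    rcases lt_or_ge q Z with hqZ | hqZ
    · exact H1 _ (evx_ge A n S e) (evx_le' hb A n S e he heS) q hq hqZ p
    · have hsp := hor.resolve_left (by omega)
      have h1 := ev_nonspecial (u := u) hb hs ht1 ht hε hε1 hG he heS (by omega) hsp p
      have h2 := (H2 q hqZ).trans_le h1
      have h3 := lt_of_mul_lt_mul_left h2 (by positivity)
      exact lt_of_mul_lt_mul_left h3 (by positivity)
  have hlo : NT el := by
    intro q hq p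
    by_cases hor : q < Z ∨ ¬ (b : ℤ) ^ n ∣ ((b : ℤ) - 1) * t * q
    · exact tier el (by omega) (by omega) q hq hor p
    · push Not at hor
      obtain ⟨hqZ, hsp⟩ := hor
      rcases lt_or_ge q q0 with hqq | hqq
      · -- q r is not an integer
        obtain ⟨M, hM⟩ := hrI q hsp
        have hne : (q : ℝ) * r - p ≠ 0 := by
          intro h0
          exact hmin q hqq ⟨by omega, p, by linarith⟩
        have h1 : (1 : ℝ) ≤ ((b : ℝ) - 1) * |(q : ℝ) * r - p| := by
          rw [← abs_of_pos hb1, ← abs_mul]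
          have h2 : ((b : ℝ) - 1) * ((q : ℝ) * r - p) = ((M - ((b : ℤ) - 1) * p : ℤ) : ℝ) := by
            push_cast; rw [mul_sub, hM]
          have h3 : (M - ((b : ℤ) - 1) * p : ℤ) ≠ 0 := by
            intro h0
            rw [h0] at h2
            simp at h2
            rcases h2 with h2 | h2
            · linarith
            · exact hne h2
          rw [h2]
          exact one_le_abs_cast h3
        have h4 : (q : ℝ) * ze b u t (evx b A n S el) - p = ((q : ℝ) * r - p) +
            q * (t * (evx b A n S el - (A : ℝ) / (b : ℝ) ^ n)) := by
          rw [hr, ze, ze]; ring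
        have h5 := evx_ge (b := b) A n S el
        have h6 := evx_le hb A n S el (by omega) (by omega)
        have hqR : (q : ℝ) ≤ (b : ℝ) ^ (n + 1) := by exact_mod_cast hqq.le.trans hq0b
        have htR : (t : ℝ) ≤ b := by exact_mod_cast ht.le
        have h7 : |(q : ℝ) * (t * (evx b A n S el - (A : ℝ) / (b : ℝ) ^ n))| ≤ 1 / (2 * b) := by
          rw [abs_of_nonneg (mul_nonneg (by positivity) (mul_nonneg (by positivity) (by linarith)))]
          calc (q : ℝ) * (t * (evx b A n S el - (A : ℝ) / (b : ℝ) ^ n))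
              ≤ (b : ℝ) ^ (n + 1) * (b * (2 / (b : ℝ) ^ (2 * n + el))) := by
                apply mul_le_mul hqR _ (mul_nonneg (by positivity) (by linarith)) (by positivity)
                apply mul_le_mul htR _ (by linarith) (by positivity)
                linarith
            _ ≤ 1 / (2 * b) := by
              obtain ⟨l, rfl⟩ : ∃ l, el = l + 4 := ⟨el - 4, by omega⟩
              obtain ⟨n', rfl⟩ : ∃ l, n = l + 1 := ⟨n - 1, by omega⟩
              have hx : (1 : ℝ) ≤ (b : ℝ) ^ (n' + l) := one_le_pow₀ (by linarith)
              have e1 : (b : ℝ) ^ (n' + 1 + 1) * (b * (2 / (b : ℝ) ^ (2 * (n' + 1) + (l + 4)))) =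
                  2 / (b ^ 3 * (b : ℝ) ^ (n' + l)) := by
                field_simp
                ring
              rw [e1, div_le_div_iff₀ (by positivity) (by positivity)]
              have : (b : ℝ) * 4 ≤ b ^ 3 := by
                have : (b : ℝ) ^ 3 = b * (b * b) := by ring
                rw [this]; apply mul_le_mul_of_nonneg_left _ hb0.le; nlinarith
              nlinarith [mul_le_mul_of_nonneg_left hx (by positivity : (0 : ℝ) ≤ b ^ 3)]
        have h8 : 1 / (b : ℝ) ≤ |(q : ℝ) * r - p| := by
          rw [div_le_iff₀ hb0]
          nlinarith [abs_nonneg ((q : ℝ) * r - p)]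
        have h9 : |(q : ℝ) * r - p| ≤ |(q : ℝ) * ze b u t (evx b A n S el) - p| +
            |(q : ℝ) * (t * (evx b A n S el - (A : ℝ) / (b : ℝ) ^ n))| := by
          rw [h4]
          have := abs_sub (((q : ℝ) * r - p) + q * (t * (evx b A n S el - (A : ℝ) / (b : ℝ) ^ n)))
            (q * (t * (evx b A n S el - (A : ℝ) / (b : ℝ) ^ n)))
          simpa using this
        have h10 : Φ q < 1 / (2 * b) := by
          rw [lt_div_iff₀ (by positivity)]
          have := H5 q hq; linarith
        have h11 : 1 / (b : ℝ) = 1 / (2 * b) + 1 / (2 * b) := by field_simp; norm_num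
        linarith
      · -- full goodness
        set ε' := min ε (min (1 / (b : ℝ) ^ (el + 2)) (1 / (b : ℝ) ^ (κ + 11 + 4 + 2))) with hε'
        have hε'0 : 0 < ε' := by positivity
        have l1 : ε' ≤ ε := min_le_left _ _
        have l2 : ε' ≤ 1 / (b : ℝ) ^ (el + 2) := (min_le_right _ _).trans (min_le_left _ _)
        have l3 : ε' ≤ 1 / (b : ℝ) ^ (κ + 11 + 4 + 2) := (min_le_right _ _).trans (min_le_right _ _)
        have four : ∀ k : ℕ, ε' ≤ 1 / (b : ℝ) ^ (k + 2) → 4 * ε' * (b : ℝ) ^ k ≤ 1 := by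
          intro k hk
          rw [le_div_iff₀ (by positivity), pow_add] at hk
          have : (4 : ℝ) ≤ b ^ 2 := by nlinarith
          have h3 : 0 ≤ ε' * (b : ℝ) ^ k := by positivity
          nlinarith
        have h1 := ev_full (u := u) (S := S) (q := q) hb hs ht1 ht hε'0 (l1.trans hε1) (hG.mono l1)
          (by omega) (by omega) (four el l2)
          (by rw [show S - el = κ + 11 + 4 by omega]; exact four _ l3) (by omega) p
        have h2 := H3 q0 q hq0lo hq0b hqq
        rw [← hGdef, ← hK] at h2
        have hKlt : ∀ k : ℕ, k + 6 ≤ el + 6 → (b : ℝ) ^ 3 * K < 1 / (b : ℝ) ^ (k + 2) := by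
          intro k hk
          rw [lt_div_iff₀ (by positivity)]
          have h5 : (b : ℝ) ^ 3 * K * (b : ℝ) ^ (k + 2) * b = (b : ℝ) ^ (k + 6) * K := by ring
          have h6 : (b : ℝ) ^ (k + 6) * K ≤ 1 := by
            refine le_trans ?_ hm1
            apply mul_le_mul_of_nonneg_right _ hK0.le
            exact pow_le_pow_right₀ (by linarith) hk
          have h7 : 0 < (b : ℝ) ^ 3 * K * (b : ℝ) ^ (k + 2) := by positivity
          nlinarith
        have h3 : (b : ℝ) ^ 3 * (q * Φ q) < ε' := by
          rw [hε', lt_min_iff, lt_min_iff]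
          have h4 : (b : ℝ) ^ 3 * (q * Φ q) ≤ (b : ℝ) ^ 3 * K := by gcongr
          exact ⟨H2 q hqZ, h4.trans_lt (hKlt _ (by omega)), h4.trans_lt (hKlt _ (by omega))⟩
        have h4 := lt_of_mul_lt_mul_left (h3.trans_le h1) (by positivity)
        exact lt_of_mul_lt_mul_left h4 (by positivity)
  have hhi : ¬ NT (el + (κ + 11)) := by
    intro hcon
    have h1 := hcon q0 hYq0 p0
    have h4 : (q0 : ℝ) * ze b u t (evx b A n S (el + (κ + 11))) - p0 =
        q0 * (t * (evx b A n S (el + (κ + 11)) - (A : ℝ) / (b : ℝ) ^ n)) := by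
      have : (q0 : ℝ) * ze b u t (evx b A n S (el + (κ + 11))) - p0 = ((q0 : ℝ) * r - p0) +
            q0 * (t * (evx b A n S (el + (κ + 11)) - (A : ℝ) / (b : ℝ) ^ n)) := by
          rw [hr, ze, ze]; ring
      rw [this, hp0]; ring
    have h5 := evx_ge (b := b) A n S (el + (κ + 11))
    have h6 := evx_le hb A n S (el + (κ + 11)) (by omega) (by omega)
    set δ := evx b A n S (el + (κ + 11)) - (A : ℝ) / (b : ℝ) ^ n with hδ
    have hδ0 : 0 ≤ δ := by linarith
    have hδ1 : δ ≤ 2 / (b : ℝ) ^ (2 * n + (el + (κ + 11))) := by linarith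
    rw [h4, abs_of_nonneg (by positivity)] at h1
    have hq0p : (0 : ℝ) < q0 := by exact_mod_cast hq1
    have h7 : G < q0 * (q0 * (t * δ)) := by rw [hGdef]; gcongr
    have htR : (t : ℝ) ≤ b := by exact_mod_cast ht.le
    have hq0R' : (q0 : ℝ) ≤ b * (b : ℝ) ^ n := by
      refine hq0R.trans ?_
      gcongr; linarith
    have h8 : q0 * (q0 * (t * δ)) ≤ (b * (b : ℝ) ^ n) * ((b * (b : ℝ) ^ n) *
        (b * (2 / (b : ℝ) ^ (2 * n + (el + (κ + 11)))))) := by gcongr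
    have h9 : (b * (b : ℝ) ^ n) * ((b * (b : ℝ) ^ n) *
        (b * (2 / (b : ℝ) ^ (2 * n + (el + (κ + 11)))))) = 2 / (b : ℝ) ^ (el + κ + 8) := by
      field_simp
      ring
    rw [h9] at h8
    have h10 : 1 < (b : ℝ) ^ (el + κ + 7) * G := by
      refine hm2.trans_eq ?_
      rw [hK]; ring
    have h11 : G * (b : ℝ) ^ (el + κ + 8) < 2 := by
      rw [← lt_div_iff₀ (by positivity)]; linarith
    have h12 : G * (b : ℝ) ^ (el + κ + 8) = b * ((b : ℝ) ^ (el + κ + 7) * G) := by ring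
    nlinarith
  -- first transition
  have htrans : ∃ e, el ≤ e ∧ e + 1 ≤ el + (κ + 11) ∧ NT e ∧ ¬ NT (e + 1) := by
    by_contra hcon
    push Not at hcon
    have : ∀ k, k ≤ κ + 11 → NT (el + k) := by
      intro k
      induction k with
      | zero => intro _; exact hlo
      | succ k ih => intro hk; exact hcon (el + k) (by omega) (by omega) (ih (by omega))
    exact hhi (this _ le_rfl)
  obtain ⟨e, he1, he2, heT, heN⟩ := htrans
  refine ⟨S, e + 1, by omega, by omega, ?_, ?_⟩
  · intro q hq p
    have hlt : Φ q / b < Φ q := div_lt_self (hΦ q) (by linarith)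
    by_cases hor : q < Z ∨ ¬ (b : ℤ) ^ n ∣ ((b : ℤ) - 1) * t * q
    · exact hlt.trans (tier (e + 1) (by omega) (by omega) q hq hor p)
    · push Not at hor
      obtain ⟨p', hp'⟩ := shift_special (A := A) (S := S) (e := e) (u := u) hb (by omega) hor.2 p
      have := heT q hq p'
      rw [hp'] at this
      rw [div_lt_iff₀ hb0]; linarith
  · rw [hNT] at heN
    push Not at heN
    obtain ⟨q, hq, p, hp⟩ := heN
    exact ⟨q, hq, p, hp⟩


lemma fold45 {b : ℕ} (hb : 2 ≤ b) {A : ℤ} {n e : ℕ} {ε : ℝ} (hε : 0 < ε)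
    (hε1 : ε * (b : ℝ) ^ 7 ≤ 1) (hs : St b A n) (h : Gd b ∅ A n ε) (he : 4 ≤ e) (he5 : e ≤ 5) :
    Gd b ∅ (A * (b : ℤ) ^ (n + e) + 1) (n + (n + e)) ε := by
  have hb2 : (2 : ℝ) ≤ b := by exact_mod_cast hb
  have hbe : (b : ℝ) ^ e ≤ (b : ℝ) ^ 5 := pow_le_pow_right₀ (by linarith) he5
  have h7 : (4 : ℝ) * (b : ℝ) ^ 5 ≤ (b : ℝ) ^ 7 := by
    have : (0 : ℝ) < (b : ℝ) ^ 5 := by positivity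
    have e7 : (b : ℝ) ^ 7 = (b : ℝ) ^ 5 * (b * b) := by ring
    rw [e7]
    nlinarith [mul_le_mul_of_nonneg_left (by nlinarith : (4 : ℝ) ≤ b * b) this.le]
  have h16 : (16 : ℝ) ≤ (b : ℝ) ^ 7 := b4 hb (by norm_num)
  exact fold_full hb hs.dvd he hε (by nlinarith) (by nlinarith) h

/-- choice of the scale -/
lemma choose_scale {b : ℕ} (hb : 2 ≤ b) (Φ : ℕ → ℝ) (hΦ : ∀ q, 0 < Φ q)
    (hsmall : Tendsto (fun q : ℕ => (q : ℝ) * Φ q) atTop (nhds 0)) (D0 : ℕ) :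
    ∃ d ≥ D0, ∀ k ≥ d, (b : ℝ) ^ k * Φ (b ^ k) ≤ (b : ℝ) ^ d * Φ (b ^ d) := by
  have hb2 : (2 : ℝ) ≤ b := by exact_mod_cast hb
  set γ : ℕ → ℝ := fun k => (b : ℝ) ^ k * Φ (b ^ k) with hγ
  have hlim : Tendsto γ atTop (nhds 0) := by
    have := hsmall.comp (tendsto_pow_atTop_atTop_of_one_lt (by omega : 1 < b))
    refine this.congr (fun k => ?_)
    simp [hγ]
  have hpos : 0 < γ D0 := mul_pos (by positivity) (hΦ _)
  obtain ⟨N, hN⟩ := eventually_atTop.mp (hlim.eventually (gt_mem_nhds hpos))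
  obtain ⟨d, hd, hmax⟩ := Finset.exists_max_image (Finset.Icc D0 (D0 + N)) γ ⟨D0, by simp⟩
  rw [Finset.mem_Icc] at hd
  refine ⟨d, hd.1, fun k hk => ?_⟩
  rcases le_or_gt k (D0 + N) with h | h
  · exact hmax k (by rw [Finset.mem_Icc]; omega)
  · exact (hN k (by omega)).le.trans (hmax D0 (by simp))

lemma scale_bound {b : ℕ} (hb : 2 ≤ b) (Φ : ℕ → ℝ) (hΦ : ∀ q, 0 < Φ q) (hanti : Antitone Φ)
    {d n τ : ℕ} (hd : ∀ k ≥ d, (b : ℝ) ^ k * Φ (b ^ k) ≤ (b : ℝ) ^ d * Φ (b ^ d))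
    (hn : n + 1 ≤ d) (hdn : d ≤ n + 1 + τ) (q0 q : ℕ) (h1 : b ^ n ≤ b ^ 2 * q0)
    (h2 : q0 ≤ b ^ (n + 1)) (h3 : q0 ≤ q) : q * Φ q ≤ (b : ℝ) ^ (τ + 4) * (q0 * Φ q0) := by
  have hb2 : (2 : ℝ) ≤ b := by exact_mod_cast hb
  have hb0 : (0 : ℝ) < b := by linarith
  have hq0d : q0 ≤ b ^ d := h2.trans (Nat.pow_le_pow_right (by omega) hn)
  have hq0lo : (b : ℝ) ^ d ≤ (b : ℝ) ^ (τ + 3) * q0 := by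
    have h1' : (b : ℝ) ^ n ≤ b ^ 2 * q0 := by exact_mod_cast h1
    calc (b : ℝ) ^ d ≤ (b : ℝ) ^ (n + 1 + τ) := pow_le_pow_right₀ (by linarith) hdn
      _ = (b : ℝ) ^ (τ + 1) * (b : ℝ) ^ n := by ring
      _ ≤ (b : ℝ) ^ (τ + 1) * (b ^ 2 * q0) := by gcongr
      _ = _ := by ring
  have hX : (b : ℝ) ^ d * Φ q0 ≤ (b : ℝ) ^ (τ + 3) * (q0 * Φ q0) := by
    have := mul_le_mul_of_nonneg_right hq0lo (hΦ q0).le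
    linarith
  have hX0 : 0 < (b : ℝ) ^ d * Φ q0 := mul_pos (by positivity) (hΦ _)
  have hX' : b * ((b : ℝ) ^ d * Φ q0) ≤ (b : ℝ) ^ (τ + 4) * (q0 * Φ q0) := by
    calc _ ≤ b * ((b : ℝ) ^ (τ + 3) * (q0 * Φ q0)) := by gcongr
      _ = _ := by ring
  refine le_trans ?_ hX'
  rcases lt_or_ge q (b ^ d) with h | h
  · have hq : (q : ℝ) ≤ (b : ℝ) ^ d := by exact_mod_cast h.le
    have : q * Φ q ≤ (b : ℝ) ^ d * Φ q0 := mul_le_mul hq (hanti h3) (hΦ _).le (by positivity)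
    nlinarith
  · have hq1 : 1 ≤ q := le_trans (Nat.one_le_pow _ _ (by omega)) h
    obtain ⟨k, hk1, hk2⟩ := exists_nat_pow_near hq1 (by omega : 1 < b)
    have hkd : d ≤ k := by
      have := (Nat.pow_lt_pow_iff_right (by omega : 1 < b)).mp (h.trans_lt hk2)
      omega
    have hq : (q : ℝ) ≤ (b : ℝ) ^ (k + 1) := by exact_mod_cast hk2.le
    calc q * Φ q ≤ (b : ℝ) ^ (k + 1) * Φ (b ^ k) := mul_le_mul hq (hanti hk1) (hΦ _).le (by positivity)
      _ = b * ((b : ℝ) ^ k * Φ (b ^ k)) := by ring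
      _ ≤ b * ((b : ℝ) ^ d * Φ (b ^ d)) := by
        apply mul_le_mul_of_nonneg_left (hd k hkd) hb0.le
      _ ≤ _ := by
        apply mul_le_mul_of_nonneg_left _ hb0.le
        apply mul_le_mul_of_nonneg_left (hanti hq0d) (by positivity)

lemma ev_small (Φ : ℕ → ℝ)
    (hsmall : Tendsto (fun q : ℕ => (q : ℝ) * Φ q) atTop (nhds 0)) (C η : ℝ) (hη : 0 < η) :
    ∃ Z : ℕ, ∀ q ≥ Z, C * (q * Φ q) < η := by
  have := hsmall.const_mul C
  rw [mul_zero] at this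
  exact eventually_atTop.mp (this.eventually (gt_mem_nhds hη))

/-- first digit choice : avoid `x` -/
lemma avoid {b : ℕ} (hb : 2 ≤ b) {u t : ℕ} (ht1 : 1 ≤ t) (A : ℤ) (n : ℕ) (x : ℝ) :
    ∃ e, 4 ≤ e ∧ e ≤ 5 ∧ ∀ (A' : ℤ) (n' : ℕ), Fx b (A * (b : ℤ) ^ (n + e) + 1) (n + (n + e)) A' n' →
      ∀ ξ : ℝ, (A' : ℝ) / (b : ℝ) ^ n' ≤ ξ → ξ ≤ (A' : ℝ) / (b : ℝ) ^ n' + 1 / (b : ℝ) ^ (2 * n') →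
      ze b u t ξ ≠ x := by
  have hb2 : (2 : ℝ) ≤ b := by exact_mod_cast hb
  have ht0 : (0 : ℝ) < t := by exact_mod_cast ht1
  rcases lt_or_ge x (ze b u t ((A : ℝ) / (b : ℝ) ^ n + 1 / (b : ℝ) ^ (2 * n + 4))) with h | h
  · refine ⟨4, le_rfl, by norm_num, fun A' n' hF ξ h1 _ hx => ?_⟩
    have h3 := hF.2.1
    rw [fold_val hb] at h3
    have h4 := mul_le_mul_of_nonneg_left (h3.trans h1) ht0.le
    rw [← hx, ze, ze] at h
    linarith
  · refine ⟨5, by norm_num, le_rfl, fun A' n' hF ξ _ h2 hx => ?_⟩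
    have h3 := hF.2.2
    rw [fold_val hb] at h3
    have h4 : ξ < (A : ℝ) / (b : ℝ) ^ n + 1 / (b : ℝ) ^ (2 * n + 4) := by
      have e1 : 1 / (b : ℝ) ^ (2 * (n + (n + 5))) < 1 / (b : ℝ) ^ (2 * n + 5) := by
        apply one_div_lt_one_div_of_lt (by positivity)
        exact pow_lt_pow_right₀ (by linarith) (by omega)
      have e2 : 1 / (b : ℝ) ^ (2 * n + 5) + 1 / (b : ℝ) ^ (2 * n + 5) ≤ 1 / (b : ℝ) ^ (2 * n + 4) := by
        rw [← add_div, div_le_div_iff₀ (by positivity) (by positivity), pow_succ _ (2 * n + 4)]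
        have : (0 : ℝ) < (b : ℝ) ^ (2 * n + 4) := by positivity
        nlinarith
      linarith
    have h5 := mul_lt_mul_of_pos_left h4 ht0
    rw [← hx, ze, ze] at h
    linarith

set_option maxHeartbeats 2000000 in
lemma stage {b : ℕ} (hb : 2 ≤ b) {u t : ℕ} (ht1 : 1 ≤ t) (ht : t < b)
    (Ψ : ℕ → ℝ) (hpos : ∀ q, 0 < Ψ q)
    (hsmall : Tendsto (fun q : ℕ => (q : ℝ) * Ψ q) atTop (nhds 0))
    (hanti : Antitone Ψ) (c : ℝ) (hc0 : 0 < c) (hc1 : c < 1 / (b : ℝ))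
    (A : ℤ) (n : ℕ) (ε : ℝ) (Y : ℕ) (hs : St b A n) (hε : 0 < ε) (hε1 : ε * (b : ℝ) ^ 7 ≤ 1)
    (hG : Gd b ∅ A n ε) (hY : 1 ≤ Y) (hYΨ : ∀ q ≥ Y, 2 * (b : ℝ) ^ 3 * (q * Ψ q) < ε) (x : ℝ) :
    ∃ (A' : ℤ) (n' : ℕ) (ε' : ℝ) (Y' : ℕ), St b A' n' ∧ 0 < ε' ∧ ε' * (b : ℝ) ^ 7 ≤ 1 ∧
      Gd b ∅ A' n' ε' ∧ Y < Y' ∧ (∀ q ≥ Y', 2 * (b : ℝ) ^ 3 * (q * Ψ q) < ε') ∧ n < n' ∧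
      Fx b A n A' n' ∧
      ∀ ξ : ℝ, (A' : ℝ) / (b : ℝ) ^ n' ≤ ξ → ξ ≤ (A' : ℝ) / (b : ℝ) ^ n' + 1 / (b : ℝ) ^ (2 * n') →
        (∀ q : ℕ, Y ≤ q → q < Y' → ∀ p : ℤ, c * Ψ q < |(q : ℝ) * ze b u t ξ - p|) ∧
        (∃ q : ℕ, Y ≤ q ∧ q < Y' ∧ ∃ p : ℤ, |(q : ℝ) * ze b u t ξ - p| ≤ Ψ q) ∧ ze b u t ξ ≠ x := by
  have hb2 : (2 : ℝ) ≤ b := by exact_mod_cast hb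
  have hb0 : (0 : ℝ) < b := by linarith
  have h16 : (16 : ℝ) ≤ (b : ℝ) ^ 7 := b4 hb (by norm_num)
  have hε16 : ε ≤ 1 / 16 := by nlinarith
  -- first fold
  obtain ⟨e0, he4, he5, hav⟩ := avoid (u := u) hb ht1 A n x
  have s1 : St b (A * (b : ℤ) ^ (n + e0) + 1) (n + (n + e0)) := St.app _ (by omega) hs
  have g1 := fold45 hb hε hε1 hs hG he4 he5
  have F1 := Fx.fold hb A n e0 he4
  generalize hA1 : A * (b : ℤ) ^ (n + e0) + 1 = A1 at s1 g1 F1 hav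
  generalize hn1 : n + (n + e0) = n1 at s1 g1 F1 hav
  obtain ⟨ε1, hε10, hε17, τ, hhit⟩ := hitA hb hε hε1 s1 g1
  have hε116 : ε1 ≤ 1 / 16 := by nlinarith
  -- lambda
  have hcb : c * b < 1 := by rwa [lt_div_iff₀ hb0] at hc1
  obtain ⟨lam, hl1, hl2⟩ : ∃ lam : ℝ, c * b < lam ∧ lam < 1 := exists_between hcb
  have hlam0 : 0 < lam := lt_trans (by positivity) hl1
  set Φ : ℕ → ℝ := fun q => lam * Ψ q with hΦdef
  have hΦ : ∀ q, 0 < Φ q := fun q => mul_pos hlam0 (hpos q)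
  have hΦΨ : ∀ q, Φ q < Ψ q := fun q => by
    have := hpos q
    simp only [hΦdef]; nlinarith
  have hΦanti : Antitone Φ := fun i j hij => mul_le_mul_of_nonneg_left (hanti hij) hlam0.le
  have hΦsmall : Tendsto (fun q : ℕ => (q : ℝ) * Φ q) atTop (nhds 0) := by
    have := hsmall.const_mul lam
    rw [mul_zero] at this
    refine this.congr (fun q => ?_)
    simp only [hΦdef]; ring
  obtain ⟨Z, hZ⟩ := ev_small Φ hΦsmall ((b : ℝ) ^ 3) ε1 hε10
  obtain ⟨Z2, hZ2⟩ := ev_small Φ hΦsmall ((b : ℝ) ^ (2 * (τ + 4) + 21)) 1 one_pos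
  obtain ⟨M0, hM0⟩ := pow_unbounded_of_one_lt ((b : ℝ) ^ 2 * (Z + Y + Z2) / ε) (by linarith : (1 : ℝ) < b)
  rw [div_lt_iff₀ hε] at hM0
  obtain ⟨D0, hD0⟩ := hhit M0
  obtain ⟨d, hd, hdmax⟩ := choose_scale hb Φ hΦ hΦsmall (D0 + 1)
  obtain ⟨AJ, nJ, A2, n2, hMJ, sJ, gJ, FJ, F2, s2, g2, hn2, hn2'⟩ := hD0 (d - 1) (by omega)
  have hnJ : (b : ℝ) ^ 2 * (Z + Y + Z2) ≤ ε * (b : ℝ) ^ nJ := by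
    have : (b : ℝ) ^ M0 ≤ (b : ℝ) ^ nJ := pow_le_pow_right₀ (by linarith) hMJ
    nlinarith
  have hn2b : (b : ℝ) ^ 2 * (Z + Y + Z2) ≤ (b : ℝ) ^ n2 := by
    have : (b : ℝ) ^ nJ ≤ (b : ℝ) ^ n2 := pow_le_pow_right₀ (by linarith) F2.1
    have : 0 < (b : ℝ) ^ nJ := by positivity
    nlinarith
  have hn2N : b ^ 2 * (Z + Y + Z2) ≤ b ^ n2 := by exact_mod_cast hn2b
  obtain ⟨S, e, he, heS, hno, qt, hqt, pt, hpt⟩ := event (u := u) hb s2 ht1 ht hε10 hε116 g2 Φ hΦ Y Z (τ + 4) hY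
    (by nlinarith) (by
      intro ξ hξ1 hξ2 q hq hqZ p
      have hq1 : 1 ≤ q := by omega
      have hqR : (q : ℝ) ≤ Z := by exact_mod_cast hqZ.le
      have hgood := finite_good hb sJ.dvd hε (by linarith) gJ (F2.2.1.trans hξ1)
        (hξ2.trans F2.2.2) (((b : ℤ) - 1) * t * q) (((b : ℤ) - 1) * p - u * q) (Qne hb ht1 hq1) (by
          refine (Qle hb ht).trans (le_trans ?_ hnJ)
          apply mul_le_mul_of_nonneg_left _ (by positivity)
          have : (0 : ℝ) ≤ Y := by positivity
          have : (0 : ℝ) ≤ Z2 := by positivity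
          linarith)
      have h1 := hgood.trans (conv_le hb ht p ξ)
      have h2 := hYΨ q hq
      have h3 : (b : ℝ) ^ 3 * (q * Ψ q) < (b : ℝ) ^ 3 * (q * |(q : ℝ) * ze b u t ξ - p|) := by linarith
      have h4 := lt_of_mul_lt_mul_left h3 (by positivity)
      exact (hΦΨ q).trans (lt_of_mul_lt_mul_left h4 (by positivity)))
    hZ
    (fun q0 q h1 h2 h3 => scale_bound hb Φ hΦ hΦanti hdmax (by omega) (by omega) q0 q h1 h2 h3)
    (by
      intro q hq
      apply (hZ2 q _).le
      have : b ^ 2 * Z2 ≤ b ^ 2 * q := le_trans (le_trans (Nat.mul_le_mul_left _ (by omega)) hn2N) hq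
      exact Nat.le_of_mul_le_mul_left this (by positivity))
    (by
      intro q hq
      have h1 := hYΨ q hq
      have h2 := hΦΨ q
      have hq1 : (1 : ℝ) ≤ q := by exact_mod_cast hY.trans hq
      have h3 : b * Ψ q ≤ (b : ℝ) ^ 3 * (q * Ψ q) := by
        have hp := hpos q
        apply mul_le_mul _ _ hp.le (by positivity)
        · have : (b : ℝ) ^ 3 = b * (b * b) := by ring
          rw [this]; nlinarith [mul_pos hb0 hb0]
        · nlinarith
      have h4 : b * Φ q ≤ b * Ψ q := by gcongr
      nlinarith)
  -- the chain
  set a0 := A2 * (b : ℤ) ^ (n2 + e) + 1 with ha0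
  set m0 := n2 + (n2 + e) with hm0
  set ξs := evx b A2 n2 S e with hξs
  have s3 : St b a0 m0 := St.app _ (by omega) s2
  have F3 : Fx b A2 n2 a0 m0 := Fx.fold hb A2 n2 e he
  set ε' := min ε1 (1 / (b : ℝ) ^ (S + 2)) with hε'
  have hε'0 : 0 < ε' := by positivity
  have l1 : ε' ≤ ε1 := min_le_left _ _
  have l2 : ε' ≤ 1 / (b : ℝ) ^ (S + 2) := min_le_right _ _
  have four : ∀ k : ℕ, k ≤ S → 4 * ε' * (b : ℝ) ^ k ≤ 1 := by
    intro k hk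
    rw [le_div_iff₀ (by positivity), pow_add] at l2
    have h4 : (4 : ℝ) ≤ b ^ 2 := by nlinarith
    have h5 : (b : ℝ) ^ k ≤ (b : ℝ) ^ S := pow_le_pow_right₀ (by linarith) hk
    have h6 : ε' * (b : ℝ) ^ k ≤ ε' * (b : ℝ) ^ S := by gcongr
    have h3 : 0 ≤ ε' * (b : ℝ) ^ k := by positivity
    nlinarith
  have gch := ev_fullGd hb s2 hε'0 (l1.trans hε116) (g2.mono l1) he heS (four e (by omega))
    (four (S - e) (by omega))
  obtain ⟨Zf, hZf⟩ := ev_small Ψ hsmall (2 * (b : ℝ) ^ 3) ε' hε'0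
  set Y' := qt + Y + Zf + 1 with hY'
  have hlam' : 0 < lam / b - c := by rw [sub_pos, lt_div_iff₀ hb0]; exact hl1
  set η := min ((lam / b - c) * Ψ Y') ((1 - lam) * Ψ Y') with hη
  have hη0 : 0 < η := lt_min (mul_pos hlam' (hpos _)) (mul_pos (by linarith) (hpos _))
  obtain ⟨j, hj⟩ := exists_pow_lt_of_lt_one (y := (1 / 2 : ℝ)) (x := η / (Y' * b)) (by positivity) (by norm_num)
  have sj := ch_St (c0 := S - e) (by omega) s3 j
  have Fj := ch_Fx hb a0 m0 (c0 := S - e) (by omega) j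
  set Af := chA b a0 m0 (S - e) j with hAf
  set nf := chN m0 (S - e) j with hnf
  have hnfj : j < nf := chN_ge m0 (S - e) j s3.one_le
  have hlim := evx_tendsto hb A2 n2 S e (by omega) (by omega)
  have hξs1 : (Af : ℝ) / (b : ℝ) ^ nf ≤ ξs := by
    refine ge_of_tendsto hlim (eventually_atTop.mpr ⟨j, fun i hi => ?_⟩)
    obtain ⟨k, rfl⟩ := Nat.exists_eq_add_of_le hi
    exact (ch_Fx' hb a0 m0 (c0 := S - e) (by omega) j k).2.1
  have hξs2 : ξs ≤ (Af : ℝ) / (b : ℝ) ^ nf + 1 / (b : ℝ) ^ (2 * nf) := by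
    refine le_of_tendsto hlim (eventually_atTop.mpr ⟨j, fun i hi => ?_⟩)
    obtain ⟨k, rfl⟩ := Nat.exists_eq_add_of_le hi
    have := (ch_Fx' hb a0 m0 (c0 := S - e) (by omega) j k).2.2
    refine le_trans ?_ this
    exact le_add_of_nonneg_right (by positivity)
  have hacc : 1 / (b : ℝ) ^ (2 * nf) ≤ η / (Y' * b) := by
    refine le_trans ?_ hj.le
    rw [one_div_pow]
    apply one_div_le_one_div_of_le (by positivity)
    calc (2 : ℝ) ^ j ≤ (b : ℝ) ^ j := by gcongr
      _ ≤ _ := pow_le_pow_right₀ (by linarith) (by omega)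
  have F1f : Fx b A1 n1 Af nf := FJ.trans (F2.trans (F3.trans Fj))
  have hY'0 : (0 : ℝ) < Y' := by rw [hY']; positivity
  refine ⟨Af, nf, ε', Y', sj, hε'0, ?_, gch j, by omega, fun q hq => hZf q (by omega), ?_, F1.trans F1f, ?_⟩
  · exact (mul_le_mul_of_nonneg_right l1 (by positivity)).trans hε17
  · have := F1f.1
    omega
  · intro ξ hξ1 hξ2
    have hdiff : |ξ - ξs| ≤ η / (Y' * b) := by
      rw [abs_le]; constructor <;> linarith
    have htR : (t : ℝ) ≤ b := by exact_mod_cast ht.le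
    have hpert : ∀ q : ℕ, q < Y' → |(q : ℝ) * ze b u t ξ - q * ze b u t ξs| ≤ η := by
      intro q hq
      have h1 : (q : ℝ) * ze b u t ξ - q * ze b u t ξs = q * (t * (ξ - ξs)) := by rw [ze, ze]; ring
      have hqR : (q : ℝ) ≤ Y' := by exact_mod_cast hq.le
      rw [h1, abs_mul, abs_mul, abs_of_nonneg (by positivity : (0 : ℝ) ≤ q),
        abs_of_nonneg (by positivity : (0 : ℝ) ≤ t)]
      calc (q : ℝ) * (t * |ξ - ξs|) ≤ Y' * (b * (η / (Y' * b))) := by gcongr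
        _ = η := by field_simp
    have tri : ∀ (q : ℕ) (p : ℤ), q < Y' →
        |(q : ℝ) * ze b u t ξs - p| ≤ |(q : ℝ) * ze b u t ξ - p| + η ∧
        |(q : ℝ) * ze b u t ξ - p| ≤ |(q : ℝ) * ze b u t ξs - p| + η := by
      intro q p hq
      have h1 := hpert q hq
      constructor
      · have := abs_sub ((q : ℝ) * ze b u t ξ - p) ((q : ℝ) * ze b u t ξ - q * ze b u t ξs)
        rw [show (q : ℝ) * ze b u t ξ - p - ((q : ℝ) * ze b u t ξ - q * ze b u t ξs) =
          q * ze b u t ξs - p by ring] at this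
        linarith
      · have := abs_add_le ((q : ℝ) * ze b u t ξs - p) ((q : ℝ) * ze b u t ξ - q * ze b u t ξs)
        rw [show (q : ℝ) * ze b u t ξs - p + ((q : ℝ) * ze b u t ξ - q * ze b u t ξs) =
          q * ze b u t ξ - p by ring] at this
        linarith
    refine ⟨?_, ⟨qt, hqt, by omega, pt, ?_⟩, hav Af nf F1f ξ hξ1 hξ2⟩
    · intro q hq hqY p
      have h1 := hno q hq p
      have h2 := (tri q p hqY).1
      have h3 : η ≤ (lam / b - c) * Ψ q := (min_le_left _ _).trans
        (mul_le_mul_of_nonneg_left (hanti hqY.le) hlam'.le)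
      have h4 : Φ q / b = lam / b * Ψ q := by simp only [hΦdef]; ring
      rw [h4] at h1
      linarith
    · have hqY : qt < Y' := by omega
      have h2 := (tri qt pt hqY).2
      have h3 : η ≤ (1 - lam) * Ψ qt := (min_le_right _ _).trans
        (mul_le_mul_of_nonneg_left (hanti hqY.le) (by linarith))
      have h4 : Φ qt = lam * Ψ qt := rfl
      rw [h4] at hpt
      linarith


noncomputable def dterm (b : ℕ) (δ : ℕ → Bool) (i : ℕ) : ℝ :=
  (if δ i then 1 else 0) / (b : ℝ) ^ (i + 1)

lemma geo_hasSum {b : ℕ} (hb : 2 ≤ b) :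
    HasSum (fun i : ℕ => 1 / (b : ℝ) ^ (i + 1)) (1 / ((b : ℝ) - 1)) := by
  have hb2 : (2 : ℝ) ≤ b := by exact_mod_cast hb
  have h := (hasSum_geometric_of_lt_one (r := 1 / (b : ℝ)) (by positivity)
    (by rw [div_lt_one (by linarith)]; linarith)).mul_left (1 / (b : ℝ))
  convert h using 1
  · rfl
  · funext i
    rw [one_div_pow, pow_succ]
    field_simp
  · have : (b : ℝ) - 1 ≠ 0 := by linarith
    field_simp

lemma dterm_bd (b : ℕ) (δ : ℕ → Bool) (i : ℕ) : ‖dterm b δ i‖ ≤ 1 / (b : ℝ) ^ (i + 1) := by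
  unfold dterm
  split_ifs <;> simp

lemma dterm_summable {b : ℕ} (hb : 2 ≤ b) (δ : ℕ → Bool) : Summable (dterm b δ) :=
  Summable.of_norm_bounded (geo_hasSum hb).summable (dterm_bd b δ)

lemma dsum_cont {b : ℕ} (hb : 2 ≤ b) : Continuous (fun δ : ℕ → Bool => ∑' i, dterm b δ i) := by
  refine continuous_tsum (fun i => ?_) (geo_hasSum hb).summable (fun i δ => dterm_bd b δ i)
  have h1 : Continuous (fun x : Bool => ((if x then 1 else 0 : ℝ)) / (b : ℝ) ^ (i + 1)) :=
    continuous_of_discreteTopology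
  exact h1.comp (continuous_apply i)

lemma dsum_closed {b : ℕ} (hb : 2 ≤ b) :
    IsClosed (range (fun δ : ℕ → Bool => ∑' i, dterm b δ i)) :=
  (isCompact_range (dsum_cont hb)).isClosed

lemma St.digits {b : ℕ} (hb : 2 ≤ b) {A : ℤ} {n : ℕ} (h : St b A n) :
    ∃ δ : ℕ → Bool, (∀ i, n ≤ i → δ i = false) ∧
      ∑ i ∈ Finset.range n, dterm b δ i = (A : ℝ) / (b : ℝ) ^ n := by
  have hb0 : (b : ℝ) ≠ 0 := by
    have : b ≠ 0 := by omega
    exact_mod_cast this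
  induction h with
  | init =>
    refine ⟨fun i => decide (i = 0), fun i hi => by simp; omega, ?_⟩
    simp [dterm]
  | @app A n k hk h ih =>
    obtain ⟨δ, h0, h1⟩ := ih
    obtain ⟨m, rfl⟩ : ∃ m, k = m + 1 := ⟨k - 1, by omega⟩
    refine ⟨Function.update δ (n + m) true, fun i hi => ?_, ?_⟩
    · rw [Function.update_of_ne (by omega)]
      exact h0 i (by omega)
    · rw [← add_assoc, Finset.sum_range_succ]
      have e1 : ∑ i ∈ Finset.range (n + m), dterm b (Function.update δ (n + m) true) i =
          ∑ i ∈ Finset.range n, dterm b δ i := by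
        rw [Finset.sum_subset (Finset.range_mono (Nat.le_add_right n m)) (f := dterm b δ)]
        · apply Finset.sum_congr rfl
          intro i hi
          rw [Finset.mem_range] at hi
          unfold dterm
          rw [Function.update_of_ne (by omega)]
        · intro i _ hi
          rw [Finset.mem_range] at hi
          simp [dterm, h0 i (by omega)]
      rw [e1, h1]
      simp only [dterm, Function.update_self, if_true]
      push_cast
      rw [pow_succ, pow_add, pow_succ]
      field_simp

lemma St.mem_range {b : ℕ} (hb : 2 ≤ b) {A : ℤ} {n : ℕ} (h : St b A n) :
    (A : ℝ) / (b : ℝ) ^ n ∈ range (fun δ : ℕ → Bool => ∑' i, dterm b δ i) := by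
  obtain ⟨δ, h0, h1⟩ := h.digits hb
  refine ⟨δ, ?_⟩
  rw [← h1]
  apply tsum_eq_sum
  intro i hi
  rw [Finset.mem_range] at hi
  simp [dterm, h0 i (by omega)]

lemma ze_digits {b : ℕ} (hb : 2 ≤ b) {u v : ℕ} (huv : u < v) (hv : v < b) (δ : ℕ → Bool) :
    ∃ d : ℕ → ℕ, (∀ n, d n = u ∨ d n = v) ∧
      ze b u (v - u) (∑' i, dterm b δ i) = ∑' n : ℕ, (d n : ℝ) / (b : ℝ) ^ (n + 1) ∧
      ze b u (v - u) (∑' i, dterm b δ i) ∈ Icc (0 : ℝ) 1 := by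
  have hb2 : (2 : ℝ) ≤ b := by exact_mod_cast hb
  refine ⟨fun n => if δ n then v else u, fun n => by by_cases h : δ n <;> simp [h], ?_⟩
  have hs : HasSum (fun n : ℕ => (((if δ n then v else u : ℕ)) : ℝ) / (b : ℝ) ^ (n + 1))
      (ze b u (v - u) (∑' i, dterm b δ i)) := by
    have h := ((geo_hasSum hb).mul_left (u : ℝ)).add
      ((dterm_summable hb δ).hasSum.mul_left (((v - u : ℕ)) : ℝ))
    convert h using 1
    · rfl
    · funext i
      unfold dterm
      rw [Nat.cast_sub huv.le]
      by_cases h : δ i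
      · simp only [h, if_true]; ring
      · simp [h]; ring
    · unfold ze; ring
  refine ⟨hs.tsum_eq.symm, ?_, ?_⟩
  · exact hs.nonneg (fun n => by positivity)
  · have h1 := (geo_hasSum hb).mul_left ((b : ℝ) - 1)
    have h2 : ((b : ℝ) - 1) * (1 / ((b : ℝ) - 1)) = 1 := by
      have : (b : ℝ) - 1 ≠ 0 := by linarith
      field_simp
    rw [h2] at h1
    refine hasSum_le (fun n => ?_) hs h1
    rw [mul_one_div]
    apply div_le_div_of_nonneg_right _ (by positivity)
    have : (if δ n then v else u) + 1 ≤ b := by split_ifs <;> omega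
    have : (((if δ n then v else u : ℕ) : ℝ)) + 1 ≤ b := by exact_mod_cast this
    linarith

/-- State of the construction. -/
structure Stt (b : ℕ) (Ψ : ℕ → ℝ) where
  A : ℤ
  n : ℕ
  ε : ℝ
  Y : ℕ
  hs : St b A n
  hε : 0 < ε
  hε1 : ε * (b : ℝ) ^ 7 ≤ 1
  hG : Gd b ∅ A n ε
  hY : 1 ≤ Y
  hYΨ : ∀ q ≥ Y, 2 * (b : ℝ) ^ 3 * (q * Ψ q) < ε

lemma init_state {b : ℕ} (hb : 2 ≤ b) (Ψ : ℕ → ℝ)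
    (hsmall : Tendsto (fun q : ℕ => (q : ℝ) * Ψ q) atTop (nhds 0)) : Nonempty (Stt b Ψ) := by
  have hb2 : (2 : ℝ) ≤ b := by exact_mod_cast hb
  have hb0 : (0 : ℝ) < b := by linarith
  have hc : Gc b 1 1 (1 / (b : ℝ)) := by
    intro q c hq hc _
    have := one_le_abs_cast hq
    have := one_le_abs_cast hc
    rw [pow_one, one_div_mul_cancel hb0.ne']
    nlinarith
  have hg := hc.toGd (by positivity) (by rw [div_le_one hb0]; linarith)
  have hg' : Gd b ∅ 1 1 (1 / (b : ℝ) ^ 7) := by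
    apply hg.mono
    rw [div_div]
    apply one_div_le_one_div_of_le (by positivity)
    have : (3 : ℝ) ≤ (b : ℝ) ^ 6 := by
      have : (2 : ℝ) ^ 6 ≤ (b : ℝ) ^ 6 := by gcongr
      linarith
    rw [pow_succ, mul_comm]
    nlinarith
  obtain ⟨Z, hZ⟩ := ev_small Ψ hsmall (2 * (b : ℝ) ^ 3) (1 / (b : ℝ) ^ 7) (by positivity)
  exact ⟨⟨1, 1, 1 / (b : ℝ) ^ 7, max Z 1, St.init, by positivity,
    by rw [one_div_mul_cancel (by positivity)], hg', le_max_right _ _,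
    fun q hq => hZ q (le_trans (le_max_left _ _) hq)⟩⟩

lemma step_state {b : ℕ} (hb : 2 ≤ b) {u t : ℕ} (ht1 : 1 ≤ t) (ht : t < b)
    (Ψ : ℕ → ℝ) (hpos : ∀ q, 0 < Ψ q)
    (hsmall : Tendsto (fun q : ℕ => (q : ℝ) * Ψ q) atTop (nhds 0))
    (hanti : Antitone Ψ) (c : ℝ) (hc0 : 0 < c) (hc1 : c < 1 / (b : ℝ))
    (x : ℝ) (s : Stt b Ψ) : ∃ s' : Stt b Ψ, s.Y < s'.Y ∧ s.n < s'.n ∧ Fx b s.A s.n s'.A s'.n ∧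
      ∀ ξ : ℝ, (s'.A : ℝ) / (b : ℝ) ^ s'.n ≤ ξ →
        ξ ≤ (s'.A : ℝ) / (b : ℝ) ^ s'.n + 1 / (b : ℝ) ^ (2 * s'.n) →
        (∀ q : ℕ, s.Y ≤ q → q < s'.Y → ∀ p : ℤ, c * Ψ q < |(q : ℝ) * ze b u t ξ - p|) ∧
        (∃ q : ℕ, s.Y ≤ q ∧ q < s'.Y ∧ ∃ p : ℤ, |(q : ℝ) * ze b u t ξ - p| ≤ Ψ q) ∧
        ze b u t ξ ≠ x := by
  obtain ⟨A', n', ε', Y', h1, h2, h3, h4, h5, h6, h7, h8, h9⟩ :=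
    stage hb ht1 ht Ψ hpos hsmall hanti c hc0 hc1 s.A s.n s.ε s.Y s.hs s.hε s.hε1 s.hG s.hY s.hYΨ x
  exact ⟨⟨A', n', ε', Y', h1, h2, h3, h4, le_trans s.hY h5.le, h6⟩, h5, h7, h8, h9⟩

lemma limit_point {b : ℕ} (hb : 2 ≤ b) {u t : ℕ} (ht1 : 1 ≤ t) (ht : t < b)
    (Ψ : ℕ → ℝ) (hpos : ∀ q, 0 < Ψ q)
    (hsmall : Tendsto (fun q : ℕ => (q : ℝ) * Ψ q) atTop (nhds 0))
    (hanti : Antitone Ψ) (c : ℝ) (hc0 : 0 < c) (hc1 : c < 1 / (b : ℝ))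
    (x : ℕ → ℝ) : ∃ (ξ : ℝ) (Y : ℕ → ℕ), StrictMono Y ∧
      ξ ∈ range (fun δ : ℕ → Bool => ∑' i, dterm b δ i) ∧ 1 ≤ Y 0 ∧ ∀ k,
        (∀ q : ℕ, Y k ≤ q → q < Y (k + 1) → ∀ p : ℤ, c * Ψ q < |(q : ℝ) * ze b u t ξ - p|) ∧
        (∃ q : ℕ, Y k ≤ q ∧ q < Y (k + 1) ∧ ∃ p : ℤ, |(q : ℝ) * ze b u t ξ - p| ≤ Ψ q) ∧
        ze b u t ξ ≠ x k := by
  have hb2 : (2 : ℝ) ≤ b := by exact_mod_cast hb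
  obtain ⟨s0⟩ := init_state hb Ψ hsmall
  choose f hf using step_state hb (u := u) ht1 ht Ψ hpos hsmall hanti c hc0 hc1
  let s : ℕ → Stt b Ψ := fun k => Nat.rec s0 (fun k s => f (x k) s) k
  have hs : ∀ k, s (k + 1) = f (x k) (s k) := fun k => rfl
  have hF : ∀ k, Fx b (s k).A (s k).n (s (k + 1)).A (s (k + 1)).n := fun k => (hf (x k) (s k)).2.2.1
  have hYm : StrictMono (fun k => (s k).Y) := strictMono_nat_of_lt_succ fun k => (hf (x k) (s k)).1
  have hnm : StrictMono (fun k => (s k).n) := strictMono_nat_of_lt_succ fun k => (hf (x k) (s k)).2.1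
  set lo : ℕ → ℝ := fun k => ((s k).A : ℝ) / (b : ℝ) ^ (s k).n with hlo
  set hi : ℕ → ℝ := fun k => ((s k).A : ℝ) / (b : ℝ) ^ (s k).n + 1 / (b : ℝ) ^ (2 * (s k).n) with hhi
  have mlo : Monotone lo := monotone_nat_of_le_succ fun k => (hF k).2.1
  have mhi : Antitone hi := antitone_nat_of_succ_le fun k => (hF k).2.2
  have hle : lo ≤ hi := fun k => by
    simp only [hlo, hhi]
    have : 0 ≤ 1 / (b : ℝ) ^ (2 * (s k).n) := by positivity
    linarith
  have hmem := mlo.ciSup_mem_iInter_Icc_of_antitone mhi hle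
  rw [mem_iInter] at hmem
  set ξ := ⨆ k, lo k
  have hlim : Tendsto lo atTop (nhds ξ) := by
    apply tendsto_atTop_ciSup mlo
    exact ⟨hi 0, by rintro _ ⟨k, rfl⟩; exact (hle k).trans (mhi (Nat.zero_le k))⟩
  refine ⟨ξ, fun k => (s k).Y, hYm, ?_, (s 0).hY, fun k => ?_⟩
  · exact (dsum_closed hb).mem_of_tendsto hlim (Eventually.of_forall fun k => (s k).hs.mem_range hb)
  · exact (hf (x k) (s k)).2.2.2 ξ (hmem (k + 1)).1 (hmem (k + 1)).2

theorem main_thm (b : ℕ) (hb : 2 ≤ b) (J : Set ℕ)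
    (hJsub : ∀ j ∈ J, j < b) (hJ2 : J.Nontrivial)
    (Ψ : ℕ → ℝ) (hpos : ∀ q, 0 < Ψ q)
    (hsmall : Tendsto (fun q : ℕ => (q : ℝ) * Ψ q) atTop (nhds 0))
    (hanti : Antitone Ψ)
    (c : ℝ) (hc0 : 0 < c) (hc1 : c < 1 / (b : ℝ)) (x : ℕ → ℝ) :
    ∃ ζ : ℝ, (∀ k, ζ ≠ x k) ∧ Irrational ζ ∧
      {qp : ℕ × ℤ | 1 ≤ qp.1 ∧ |(qp.1 : ℝ) * ζ - (qp.2 : ℝ)| ≤ Ψ qp.1}.Infinite ∧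
      {qp : ℕ × ℤ | 1 ≤ qp.1 ∧ |(qp.1 : ℝ) * ζ - (qp.2 : ℝ)| ≤ c * Ψ qp.1}.Finite ∧
      ζ ∈ Icc (0 : ℝ) 1 ∧ ∃ d : ℕ → ℕ, (∀ n, d n ∈ J) ∧
        ζ = ∑' n : ℕ, (d n : ℝ) / (b : ℝ) ^ (n + 1) := by
  obtain ⟨u, hu, v, hv, huv⟩ := hJ2.exists_lt
  have hvb := hJsub v hv
  obtain ⟨ξ, Y, hY, ⟨δ, hδ⟩, hY0, hk⟩ := limit_point hb (u := u) (t := v - u) (by omega) (by omega)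
    Ψ hpos hsmall hanti c hc0 hc1 x
  obtain ⟨d, hd, hsum, hI⟩ := ze_digits hb huv hvb δ
  simp only at hδ
  rw [hδ] at hsum hI
  set ζ := ze b u (v - u) ξ
  have hall : ∀ q : ℕ, Y 0 ≤ q → ∀ p : ℤ, c * Ψ q < |(q : ℝ) * ζ - p| := by
    intro q hq p
    have hex : ∃ k, q < Y k := ⟨q + 1, lt_of_lt_of_le (Nat.lt_succ_self q) (hY.le_apply)⟩
    classical
    have h1 := Nat.find_spec hex
    have h2 : Nat.find hex ≠ 0 := by
      intro h
      rw [h] at h1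
      omega
    obtain ⟨m, hm⟩ := Nat.exists_eq_succ_of_ne_zero h2
    have h3 : ¬ q < Y m := Nat.find_min hex (by omega)
    rw [hm] at h1
    exact (hk m).1 q (by omega) h1 p
  refine ⟨ζ, fun k => (hk k).2.2, ?_, ?_, ?_, hI, d, ?_, hsum⟩
  · rintro ⟨r, hr⟩
    have hden : 1 ≤ r.den := r.den_pos
    have h := hall (Y 0 * r.den) (by nlinarith) (Y 0 * r.num)
    have e : (((Y 0 * r.den : ℕ)) : ℝ) * ζ - ((Y 0 * r.num : ℤ) : ℝ) = 0 := by
      rw [← hr]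
      have h0 : (r.den : ℝ) ≠ 0 := by positivity
      have : (r : ℝ) = r.num / r.den := Rat.cast_def r
      rw [this]
      push_cast
      field_simp
      ring
    rw [e, abs_zero] at h
    have := mul_pos hc0 (hpos (Y 0 * r.den))
    linarith
  · choose q h1 h2 p h3 using fun k => (hk k).2.1
    apply Set.infinite_of_injective_forall_mem (f := fun k => (q k, p k))
    · have : StrictMono q := strictMono_nat_of_lt_succ fun k => lt_of_lt_of_le (h2 k) (h1 (k + 1))
      intro i j hij
      exact this.injective (Prod.ext_iff.mp hij).1
    · intro k
      refine ⟨?_, h3 k⟩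
      have := hY.monotone (Nat.zero_le k)
      have := h1 k
      show 1 ≤ q k
      omega
  · have hfin : ∀ q : ℕ, {p : ℤ | |(q : ℝ) * ζ - p| ≤ c * Ψ q}.Finite := by
      intro q
      apply (Set.finite_Icc ⌊(q : ℝ) * ζ - c * Ψ q⌋ ⌈(q : ℝ) * ζ + c * Ψ q⌉).subset
      intro p hp
      rw [mem_ofPred_eq, abs_le] at hp
      constructor
      · have := Int.floor_le ((q : ℝ) * ζ - c * Ψ q)
        have : ((⌊(q : ℝ) * ζ - c * Ψ q⌋ : ℤ) : ℝ) ≤ p := by linarith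
        exact_mod_cast this
      · have := Int.le_ceil ((q : ℝ) * ζ + c * Ψ q)
        have : (p : ℝ) ≤ ((⌈(q : ℝ) * ζ + c * Ψ q⌉ : ℤ) : ℝ) := by linarith
        exact_mod_cast this
    apply ((Set.finite_Iio (Y 0)).biUnion (fun q _ => (hfin q).image (fun p => (q, p)))).subset
    rintro ⟨q, p⟩ ⟨_, h⟩
    simp only at h
    rw [mem_iUnion₂]
    refine ⟨q, ?_, p, h, rfl⟩
    by_contra hq
    rw [mem_Iio] at hq
    have := hall q (by omega) p
    linarith
  · intro n
    rcases hd n with h | h <;> rw [h] <;> assumption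

/-- Bugeaud's theorem: for a missing-digit set `K_{J(b)}` and `Ψ` positive,
non-increasing with `Ψ(x) = o(1/x)`, for every `0 < c < 1/b` the set
`(𝒦₁(Ψ) \ 𝒦₁(cΨ)) ∩ K_{J(b)}` is uncountable. -/
theorem bugeaud_missing_digit (b : ℕ) (hb : 2 ≤ b) (J : Set ℕ)
    (hJsub : ∀ j ∈ J, j < b) (hJ2 : J.Nontrivial)
    (Ψ : ℕ → ℝ) (hpos : ∀ q, 0 < Ψ q)
    (hsmall : Tendsto (fun q : ℕ => (q : ℝ) * Ψ q) atTop (nhds 0))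
    (hanti : Antitone Ψ)
    (c : ℝ) (hc0 : 0 < c) (hc1 : c < 1 / (b : ℝ)) :
    ¬ ((K1 Ψ \ K1 (fun x => c * Ψ x)) ∩ baseExpSet b J).Countable := by
  intro hcount
  obtain ⟨x, hx⟩ := Set.countable_iff_exists_subset_range.mp hcount
  obtain ⟨ζ, h1, h2, h3, h4, h5, h6⟩ :=
    main_thm b hb J hJsub hJ2 Ψ hpos hsmall hanti c hc0 hc1 x
  have hmem : ζ ∈ (K1 Ψ \ K1 (fun x => c * Ψ x)) ∩ baseExpSet b J :=
    ⟨⟨⟨h2, h3⟩, fun h => h.2 h4⟩, h5, h6⟩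
  obtain ⟨k, hk⟩ := hx hmem
  exact h1 k hk.symm
end
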